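/- Let a ∈ (0,1) and s* = 1/2 + a/2. There exist b ∈ (0,1/2) and a constant C > 0 such that for all Schwartz functions u, v on ℝ² one has ‖∂ₓ(uv)‖_{X^{−b}_{s*}} ≤ C ‖u‖_{X^{1/2}_{s*}} ( ‖v‖_{X^{1/2}_{s*}} + ‖v‖_{X^{1/2}_{s*}}^{1/2} ‖v‖_{Y^{1/2}_{−s*, s*}}^{1/2} ) + C ‖v‖_{X^{1/2}_{s*}} ( ‖u‖_{X^{1/2}_{s*}} + ‖u‖_{X^{1/2}_{s*}}^{1/2} ‖u‖_{Y^{1/2}_{−s*, s*}}^{1/2} ). -/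

import Mathlib

/-!
On the Fourier side, with `f = |û|`, `g = |v̂|` and `f' = |∂_ξ û|`, the transform of `∂ₓ(uv)` at
`p = (ξ, λ)` is at most `|ξ| ∫ f(q) g(p - q) dq`. Write `q = (ξ₁, λ₁)` and `p - q = (ξ₂, λ₂)`; by
symmetry `|ξ₁| ≤ |ξ₂|`, and there are two regions. The exponent is `b = 1 / (2 + a)`.

*Nonresonant region*: `|ξ₁| ≥ 1` and `|λ₁ - ω(ξ₁)| ≤ 3 |ξ₁|^{2+a}`. All three factors are cut into
dyadic pieces of modulation `L, L₁, L₂`. The resonance bound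
`|ω(ξ₁) + ω(ξ₂) - ω(ξ₁ + ξ₂)| ≥ |ξ₁| |ξ₁ + ξ₂| |ξ₂|^a` forces one modulation to be large. When
`|ξ₂| ≥ 8 |ξ₁|` it is that of the output or of the high-frequency factor, since the other one is
too small by the definition of the region. Cauchy–Schwarz reduces each case to the measure of an
intersection of neighbourhoods of translated dispersion curves, and yields the factor
`(L^β L₁ L₂)^{1/2}` with `β = (4 - a) / (2 (2 + a)) < 2 b`, which is summable in `L` against
`L^{-b}`.

*Low region*: `|ξ₁| ≤ max(1, (|λ₁|/2)^{1/(2+a)})`. There `|λ₁|` is bounded by a multiple of the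
modulation when it is large, so the Sobolev inequality in `ξ₁`, which costs
`‖û‖^{1/2} ‖∂_ξ û‖^{1/2}` and hence the norm of `x·u`, bounds `f` by an integrable function of `λ₁`
alone. Young's inequality in `λ`, local smoothing for the second factor, and the bound
`∫ |ξ|^{1-a} dξ ≲ L^{(2-a)/(2+a)}` over `|λ - ω(ξ)| ≤ L` for the output control each piece of
modulation `L`; the sum over `L` converges because `(2 - a) / (2 (2 + a)) < b`.
-/

open MeasureTheory Complex

noncomputable section

/-- The dispersive symbol `ω(ξ) = ξ |ξ|^(1+a)`. -/
def disp (a ξ : ℝ) : ℝ := ξ * |ξ| ^ (1 + a)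

/-- Fourier transform on `ℝ`, convention `f̂(ξ) = ∫ e^{ixξ} f(x) dx`. -/
def FT1 (f : ℝ → ℂ) (ξ : ℝ) : ℂ :=
  ∫ x : ℝ, Complex.exp (Complex.I * ((x * ξ : ℝ) : ℂ)) * f x

/-- Spacetime Fourier transform, convention `f̂(ξ,λ) = ∫ e^{i(xξ+tλ)} f(x,t) dx dt`,
for `f : ℝ × ℝ → ℂ` with first coordinate `x` (space) and second `t` (time). -/
def FT2 (f : ℝ × ℝ → ℂ) (ξ lam : ℝ) : ℂ :=
  ∫ p : ℝ × ℝ, Complex.exp (Complex.I * ((p.1 * ξ + p.2 * lam : ℝ) : ℂ)) * f p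

/-- The dyadic cutoffs `χ_j`: `χ_0 = χ₀` and `χ_j(z) = χ(2^{-j} z)` for `j ≥ 1`. -/
def chiJ (χ₀ χ : ℝ → ℝ) (j : ℕ) (z : ℝ) : ℝ :=
  if j = 0 then χ₀ z else χ ((2 : ℝ) ^ (-(j : ℝ)) * z)

/-- Hypotheses on the fixed dyadic cutoffs. -/
structure DyadicCutoffs (χ₀ χ : ℝ → ℝ) : Prop where
  smooth0 : ContDiff ℝ (⊤ : ℕ∞) χ₀
  even0 : ∀ z, χ₀ (-z) = χ₀ z
  mem0 : ∀ z, χ₀ z ∈ Set.Icc (0 : ℝ) 1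
  supp0 : ∀ z, 2 < |z| → χ₀ z = 0
  one0 : ∀ z, |z| ≤ 1 → χ₀ z = 1
  smooth1 : ContDiff ℝ (⊤ : ℕ∞) χ
  even1 : ∀ z, χ (-z) = χ z
  mem1 : ∀ z, χ z ∈ Set.Icc (0 : ℝ) 1
  supp1 : ∀ z, χ z ≠ 0 → 1 / 2 < |z| ∧ |z| < 2
  partition : ∀ z, ∑' j : ℕ, chiJ χ₀ χ j z = 1

/-- A smooth time cutoff supported in `[-1,1]`. -/
structure TimeCutoff (ψ : ℝ → ℝ) : Prop where
  smooth : ContDiff ℝ (⊤ : ℕ∞) ψ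
  supp : ∀ t, ψ t ≠ 0 → |t| ≤ 1

/-- The norm `‖f‖_{X^b_s}`. -/
def Xnorm (a : ℝ) (χ₀ χ : ℝ → ℝ) (b s : ℝ) (f : ℝ × ℝ → ℂ) : ℝ :=
  ∑' j : ℕ, (2 : ℝ) ^ ((j : ℝ) * b) *
    (∫ p : ℝ × ℝ, chiJ χ₀ χ j (p.2 - disp a p.1) * (1 + |p.1|) ^ (2 * s) *
      ‖FT2 f p.1 p.2‖ ^ 2) ^ ((1 : ℝ) / 2)

/-- The norm `‖f‖_{Y^b_{s₀,s₁}} = ‖x·f‖_{X^b_{s₀}} + ‖t·f‖_{X^b_{s₁}}`. -/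
def Ynorm (a : ℝ) (χ₀ χ : ℝ → ℝ) (b s₀ s₁ : ℝ) (f : ℝ × ℝ → ℂ) : ℝ :=
  Xnorm a χ₀ χ b s₀ (fun p => (p.1 : ℂ) * f p) +
    Xnorm a χ₀ χ b s₁ (fun p => (p.2 : ℂ) * f p)

/-- The norm `‖f‖_{Z^b_s} = ‖f‖_{X^b_s} + ‖f‖_{Y^b_{s-2s*,s}}`, where `s* = 1/2 + a/2`. -/
def Znorm (a : ℝ) (χ₀ χ : ℝ → ℝ) (b s : ℝ) (f : ℝ × ℝ → ℂ) : ℝ :=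
  Xnorm a χ₀ χ b s f + Ynorm a χ₀ χ b (s - 2 * (1 / 2 + a / 2)) s f

/-- The norm `‖f‖_{X̃^b_s}`. -/
def XtildeNorm (a b s : ℝ) (f : ℝ × ℝ → ℂ) : ℝ :=
  (∫ p : ℝ × ℝ, (1 + |p.2 - disp a p.1|) ^ (2 * b) * (1 + |p.1|) ^ (2 * s) *
    ‖FT2 f p.1 p.2‖ ^ 2) ^ ((1 : ℝ) / 2)

/-- The Sobolev norm `‖g‖_{H^s} = (∫ (1+|ξ|)^{2s} |ĝ(ξ)|² dξ)^{1/2}`. -/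
def Hnorm (s : ℝ) (g : ℝ → ℂ) : ℝ :=
  (∫ ξ : ℝ, (1 + |ξ|) ^ (2 * s) * ‖FT1 g ξ‖ ^ 2) ^ ((1 : ℝ) / 2)

/-- The weighted norm `‖g‖_{F^s} = ‖g‖_{H^s} + ‖x·g‖_{H^{s-2s*}}` (here `sstar = s*`). -/
def Fnorm (sstar s : ℝ) (g : ℝ → ℂ) : ℝ :=
  Hnorm s g + Hnorm (s - 2 * sstar) (fun x => (x : ℂ) * g x)

/-- The `L^p` norm `(∫ ‖f‖^p)^{1/p}`. -/
def Lpnorm {α : Type*} [MeasureSpace α] {E : Type*} [NormedAddCommGroup E]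
    (p : ℝ) (f : α → E) : ℝ :=
  (∫ x, ‖f x‖ ^ p) ^ (1 / p)

/-- The linear propagator `W(t)`, defined via Fourier inversion so that its Fourier
transform in `x` is `e^{itω(ξ)} û₀(ξ)`. -/
def Wgrp (a : ℝ) (u₀ : ℝ → ℂ) (t x : ℝ) : ℂ :=
  ((1 / (2 * Real.pi) : ℝ) : ℂ) *
    ∫ ξ : ℝ, Complex.exp (-(Complex.I * ((x * ξ : ℝ) : ℂ))) *
      (Complex.exp (Complex.I * ((t * disp a ξ : ℝ) : ℂ)) * FT1 u₀ ξ)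

/-- The Fourier multiplier `D^σ` with symbol `|ξ|^σ`, via Fourier inversion. -/
def Dop (σ : ℝ) (g : ℝ → ℂ) (x : ℝ) : ℂ :=
  ((1 / (2 * Real.pi) : ℝ) : ℂ) *
    ∫ ξ : ℝ, Complex.exp (-(Complex.I * ((x * ξ : ℝ) : ℂ))) *
      (((|ξ| ^ σ : ℝ) : ℂ) * FT1 g ξ)

open scoped ENNReal

/-! ### `L²` bounds for bilinear operators with nonnegative kernels -/

theorem rpow_half_sq (x : ℝ≥0∞) : (x ^ (1 / 2 : ℝ)) ^ 2 = x := by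
  rw [← ENNReal.rpow_mul_natCast, Nat.cast_ofNat, one_div, inv_mul_cancel₀ two_ne_zero,
    ENNReal.rpow_one]

section LpNorm
variable {α β : Type*} [MeasurableSpace α] [MeasurableSpace β] {μ : Measure α} {ν : Measure β}

theorem eLpNorm_two_sq (f : α → ℝ≥0∞) : eLpNorm f 2 μ ^ 2 = ∫⁻ x, f x ^ 2 ∂μ := by
  simpa using eLpNorm_nnreal_pow_eq_lintegral (p := 2) (f := f) (μ := μ) two_ne_zero

theorem eLpNorm_two_eq (h : α → ℝ≥0∞) :
    eLpNorm h 2 μ = (∫⁻ x, h x ^ 2 ∂μ) ^ (1 / 2 : ℝ) := by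
  refine (ENNReal.pow_right_strictMono two_ne_zero).injective ?_
  simp only [eLpNorm_two_sq, rpow_half_sq]

theorem eLpNorm_two_rpow_half (h : α → ℝ≥0∞) :
    eLpNorm (fun x => h x ^ (1 / 2 : ℝ)) 2 μ = (∫⁻ x, h x ∂μ) ^ (1 / 2 : ℝ) := by
  simp only [eLpNorm_two_eq, rpow_half_sq]

theorem eLpNorm_two_le_iff {f : α → ℝ≥0∞} {C : ℝ≥0∞} :
    eLpNorm f 2 μ ≤ C ↔ ∫⁻ x, f x ^ 2 ∂μ ≤ C ^ 2 := by
  rw [← eLpNorm_two_sq, ENNReal.pow_le_pow_left_iff two_ne_zero]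

theorem eLpNorm_two_const_mul {f : α → ℝ≥0∞} (hf : Measurable f) (c : ℝ≥0∞) :
    eLpNorm (fun x => c * f x) 2 μ = c * eLpNorm f 2 μ := by
  refine (ENNReal.pow_right_strictMono two_ne_zero).injective ?_
  simp only [mul_pow, eLpNorm_two_sq]
  exact lintegral_const_mul _ (hf.pow_const 2)

theorem lintegral_mul_le_eLpNorm_two {f g : α → ℝ≥0∞} (hf : Measurable f) (hg : Measurable g) :
    ∫⁻ x, f x * g x ∂μ ≤ eLpNorm f 2 μ * eLpNorm g 2 μ := by
  simpa [eLpNorm_eq_lintegral_rpow_enorm_toReal] using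
    ENNReal.lintegral_mul_le_Lp_mul_Lq μ Real.HolderConjugate.two_two hf.aemeasurable
      hg.aemeasurable

theorem eLpNorm_two_le_of_tendsto {f : ℕ → α → ℝ≥0∞} (hf : ∀ n, Measurable (f n))
    {g : α → ℝ≥0∞} (lim : ∀ x, Filter.Tendsto (f · x) Filter.atTop (nhds (g x))) {C : ℝ≥0∞}
    (bound : ∀ n, eLpNorm (f n) 2 μ ≤ C) : eLpNorm g 2 μ ≤ C := by
  rw [eLpNorm_two_le_iff]
  calc ∫⁻ x, g x ^ 2 ∂μ
      = ∫⁻ x, Filter.liminf (fun n => f n x ^ 2) Filter.atTop ∂μ :=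
        lintegral_congr fun x =>
          (((ENNReal.continuous_pow 2).tendsto _).comp (lim x)).liminf_eq.symm
    _ ≤ Filter.liminf (fun n => ∫⁻ x, f n x ^ 2 ∂μ) Filter.atTop :=
        lintegral_liminf_le fun n => (hf n).pow_const 2
    _ ≤ C ^ 2 := Filter.liminf_le_of_frequently_le'
        (.of_forall fun n => eLpNorm_two_le_iff.1 (bound n))

theorem eLpNorm_two_tsum_le {f : ℕ → α → ℝ≥0∞} (hf : ∀ n, Measurable (f n)) :
    eLpNorm (fun x => ∑' n, f n x) 2 μ ≤ ∑' n, eLpNorm (f n) 2 μ := by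
  refine eLpNorm_two_le_of_tendsto (f := fun n x => ∑ i ∈ Finset.range n, f i x)
    (fun n => Finset.measurable_fun_sum _ fun i _ => hf i)
    (fun x => ENNReal.summable.hasSum.tendsto_sum_nat) fun n => ?_
  rw [← Finset.sum_fn]
  exact (eLpNorm_sum_le (fun i _ => (hf i).aestronglyMeasurable) one_le_two).trans
    (ENNReal.sum_le_tsum _)

theorem eLpNorm_two_le_tsum_tsum {h : α → ℝ≥0∞} {f : ℕ → ℕ → α → ℝ≥0∞}
    (hf : ∀ i j, Measurable (f i j)) (hle : ∀ x, h x ≤ ∑' (i : ℕ) (j : ℕ), f i j x) :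
    eLpNorm h 2 μ ≤ ∑' (i : ℕ) (j : ℕ), eLpNorm (f i j) 2 μ :=
  (eLpNorm_mono_enorm hle).trans <|
    (eLpNorm_two_tsum_le fun i => Measurable.tsum fun j => hf i j).trans <|
      ENNReal.tsum_le_tsum fun i => eLpNorm_two_tsum_le (hf i)

/-- The bounded truncations of `H` to sets of finite measure have finite norm, so that the norm
cancels when the hypothesis is applied to them. -/
theorem eLpNorm_two_le_of_dual [SigmaFinite μ] {H : α → ℝ≥0∞} (hH : Measurable H) {C : ℝ≥0∞}
    (h : ∀ W : α → ℝ≥0∞, Measurable W → ∫⁻ x, W x * H x ∂μ ≤ C * eLpNorm W 2 μ) :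
    eLpNorm H 2 μ ≤ C := by
  let W (n : ℕ) : α → ℝ≥0∞ := (spanningSets μ n).indicator fun x => min (H x) n
  have hW n : Measurable (W n) :=
    (hH.min measurable_const).indicator (measurableSet_spanningSets μ n)
  refine eLpNorm_two_le_of_tendsto hW (fun x => ?lim) fun n => ?bound
  case bound =>
    have finite : eLpNorm (W n) 2 μ ≠ ⊤ := by
      have : Fact (μ (spanningSets μ n) < ⊤) := ⟨measure_spanningSets_lt_top μ n⟩
      rw [eLpNorm_indicator_eq_eLpNorm_restrict (measurableSet_spanningSets μ n)]
      exact ((eLpNorm_mono_enorm (g := fun _ => (n : ℝ≥0∞)) fun x => min_le_right (H x) n).trans_lt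
        (memLp_const_enorm (by simp)).eLpNorm_lt_top).ne
    have sq_le : eLpNorm (W n) 2 μ * eLpNorm (W n) 2 μ ≤ C * eLpNorm (W n) 2 μ := by
      rw [← sq, eLpNorm_two_sq]
      refine (lintegral_mono fun x => ?_).trans (h _ (hW n))
      rw [sq]
      gcongr
      exact (Set.indicator_le_self _ _ x).trans (min_le_left _ _)
    rcases eq_or_ne (eLpNorm (W n) 2 μ) 0 with zero | pos
    · simp only [zero, zero_le]
    · exact (ENNReal.mul_le_mul_iff_left pos finite).1 sq_le
  case lim =>
    have mem : ∀ᶠ n in Filter.atTop, x ∈ spanningSets μ n :=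
      Filter.eventually_atTop.2 ⟨spanningSetsIndex μ x, fun n hn =>
        monotone_spanningSets μ hn (mem_spanningSetsIndex μ x)⟩
    have lim : Filter.Tendsto (fun n : ℕ => min (H x) n) Filter.atTop (nhds (H x)) := by
      simpa using tendsto_const_nhds.min ENNReal.tendsto_nat_nhds_top
    exact lim.congr' (mem.mono fun n hn => (Set.indicator_of_mem hn _).symm)

theorem eLpNorm_two_lintegral_mul_le [SFinite ν] {K F : α → β → ℝ≥0∞}
    (hK : Measurable (Function.uncurry K)) (hF : Measurable (Function.uncurry F)) {S : ℝ≥0∞}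
    (hS : ∀ x, eLpNorm (K x) 2 ν ≤ S) :
    eLpNorm (fun x => ∫⁻ y, K x y * F x y ∂ν) 2 μ ≤
      S * eLpNorm (Function.uncurry F) 2 (μ.prod ν) := by
  rw [eLpNorm_two_le_iff, mul_pow, eLpNorm_two_sq, lintegral_prod _ (by fun_prop),
    ← lintegral_const_mul _ (by fun_prop)]
  refine lintegral_mono fun x => ?_
  change _ ≤ S ^ 2 * ∫⁻ y, F x y ^ 2 ∂ν
  rw [← eLpNorm_two_sq, ← mul_pow]
  gcongr
  exact (lintegral_mul_le_eLpNorm_two (by fun_prop) (by fun_prop)).trans (by gcongr; exact hS x)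

theorem eLpNorm_two_prod_mul_le [SFinite μ] [SFinite ν] {f : β → ℝ≥0∞} {g : α → β → ℝ≥0∞}
    (hf : Measurable f) (hg : Measurable (Function.uncurry g)) {N : ℝ≥0∞}
    (hN : ∀ y, eLpNorm (fun x => g x y) 2 μ ≤ N) :
    eLpNorm (Function.uncurry fun x y => f y * g x y) 2 (μ.prod ν) ≤ eLpNorm f 2 ν * N := by
  rw [eLpNorm_two_le_iff, lintegral_prod_symm _ (by fun_prop), mul_pow, eLpNorm_two_sq,
    ← lintegral_mul_const _ (by fun_prop)]
  refine lintegral_mono fun y => ?_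
  simp only [Function.uncurry_apply_pair, mul_pow]
  rw [lintegral_const_mul _ (by fun_prop)]
  gcongr
  exact eLpNorm_two_le_iff.1 (hN y)

theorem eLpNorm_two_prod_symm [SFinite μ] [SFinite ν] {F : α × β → ℝ≥0∞}
    (hF : Measurable F) :
    eLpNorm (fun y => eLpNorm (fun x => F (x, y)) 2 μ) 2 ν = eLpNorm F 2 (μ.prod ν) := by
  refine (ENNReal.pow_right_strictMono two_ne_zero).injective ?_
  simp only [eLpNorm_two_sq]
  rw [lintegral_prod_symm' _ (hF.pow_const 2)]

end LpNorm

theorem eLpNorm_two_lconvolution_le {G : Type*} [AddGroup G] [MeasurableSpace G]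
    [MeasurableAdd₂ G] [MeasurableNeg G] {μ : Measure G} [SFinite μ] [μ.IsAddLeftInvariant]
    {f g : G → ℝ≥0∞} (hf : Measurable f) (hg : Measurable g) :
    eLpNorm (f ⋆ₗ[μ] g) 2 μ ≤ (∫⁻ y, f y ∂μ) * eLpNorm g 2 μ := by
  rw [eLpNorm_two_le_iff, mul_pow, eLpNorm_two_sq]
  have pointwise (x : G) : (f ⋆ₗ[μ] g) x ^ 2 ≤
      (∫⁻ y, f y ∂μ) * ∫⁻ y, f y * g (-y + x) ^ 2 ∂μ := by
    have schwarz := pow_le_pow_left' (lintegral_mul_le_eLpNorm_two (μ := μ)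
      (f := fun y => f y ^ (1 / 2 : ℝ)) (g := fun y => f y ^ (1 / 2 : ℝ) * g (-y + x))
      (by fun_prop) (by fun_prop)) 2
    simpa only [lconvolution_def, mul_pow, eLpNorm_two_sq, rpow_half_sq, ← mul_assoc, ← sq]
      using schwarz
  calc ∫⁻ x, (f ⋆ₗ[μ] g) x ^ 2 ∂μ
      ≤ ∫⁻ x, (∫⁻ y, f y ∂μ) * ∫⁻ y, f y * g (-y + x) ^ 2 ∂μ ∂μ := lintegral_mono pointwise
    _ = (∫⁻ y, f y ∂μ) * ∫⁻ y, ∫⁻ x, f y * g (-y + x) ^ 2 ∂μ ∂μ := by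
        rw [lintegral_const_mul _ (by fun_prop), lintegral_lintegral_swap (by fun_prop)]
    _ = (∫⁻ y, f y ∂μ) * ∫⁻ y, f y * ∫⁻ x, g x ^ 2 ∂μ ∂μ := by
        congr 1
        refine lintegral_congr fun y => ?_
        rw [lintegral_const_mul _ (by fun_prop),
          lintegral_add_left_eq_self (fun x => g x ^ 2) (-y)]
    _ = (∫⁻ y, f y ∂μ) ^ 2 * ∫⁻ x, g x ^ 2 ∂μ := by
        rw [lintegral_mul_const _ hf, sq, mul_assoc]

theorem tsum_sq_le_sq_tsum {ι : Type*} (c : ι → ℝ≥0∞) : ∑' i, c i ^ 2 ≤ (∑' i, c i) ^ 2 := by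
  simp only [sq, ← ENNReal.tsum_mul_left]
  exact ENNReal.tsum_le_tsum fun i => mul_le_mul_left (ENNReal.le_tsum i) _

theorem tsum_rpow_half_mul_le {ι : Type*} [Countable ι] (x y : ι → ℝ≥0∞) :
    ∑' i, (x i * y i) ^ (1 / 2 : ℝ) ≤ (∑' i, x i) ^ (1 / 2 : ℝ) * (∑' i, y i) ^ (1 / 2 : ℝ) := by
  let : MeasurableSpace ι := ⊤
  have schwarz := lintegral_mul_le_eLpNorm_two (μ := Measure.count)
    (f := fun i => x i ^ (1 / 2 : ℝ)) (g := fun i => y i ^ (1 / 2 : ℝ))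
    (measurable_of_countable _) (measurable_of_countable _)
  simpa only [eLpNorm_two_rpow_half, lintegral_count,
    ← ENNReal.mul_rpow_of_nonneg _ _ one_half_pos.le] using schwarz

/-- The bilinear operator `(f, g) ↦ ∫ K(p, q) f(q) g(p - q) dq`. When `K` is a symbol, this is the
Fourier-side form of a bilinear Fourier multiplier, with inputs at `q` and `p - q`. -/
def bilinOp {G : Type*} [Sub G] [MeasurableSpace G] (K : G → G → ℝ≥0∞) (f g : G → ℝ≥0∞)
    (μ : Measure G) (p : G) : ℝ≥0∞ :=
  ∫⁻ q, K p q * (f q * g (p - q)) ∂μ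

theorem bilinOp_swap {G : Type*} [AddCommGroup G] [MeasurableSpace G] [MeasurableAdd G]
    [MeasurableNeg G] {μ : Measure G} [μ.IsAddLeftInvariant] [μ.IsNegInvariant]
    (K : G → G → ℝ≥0∞) (f g : G → ℝ≥0∞) (p : G) :
    bilinOp K f g μ p = bilinOp (fun p q => K p (p - q)) g f μ p := by
  unfold bilinOp
  rw [← lintegral_sub_left_eq_self _ p]
  simp only [sub_sub_cancel, mul_comm]

section BilinOp
variable {G : Type*} [AddCommGroup G] [MeasurableSpace G] [MeasurableSub₂ G]
  {μ : Measure G} [SigmaFinite μ] {K : G → G → ℝ≥0∞} {f g : G → ℝ≥0∞} {S : ℝ≥0∞}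

theorem measurable_bilinOp (hK : Measurable (Function.uncurry K)) (hf : Measurable f)
    (hg : Measurable g) : Measurable (bilinOp K f g μ) := by
  unfold bilinOp; fun_prop

variable [MeasurableAdd₂ G] [μ.IsAddLeftInvariant]

theorem eLpNorm_bilinOp_le_of_output (hK : Measurable (Function.uncurry K)) (hf : Measurable f)
    (hg : Measurable g) (hS : ∀ p, eLpNorm (K p) 2 μ ≤ S) :
    eLpNorm (bilinOp K f g μ) 2 μ ≤ S * (eLpNorm f 2 μ * eLpNorm g 2 μ) := by
  refine (eLpNorm_two_lintegral_mul_le hK (F := fun p q => f q * g (p - q)) (by fun_prop) hS).trans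
    ?_
  gcongr
  exact eLpNorm_two_prod_mul_le hf (by fun_prop) fun q =>
    (eLpNorm_comp_measurePreserving hg.aestronglyMeasurable (measurePreserving_sub_right μ q)).le

theorem lintegral_mul_bilinOp (hK : Measurable (Function.uncurry K)) (hf : Measurable f)
    (hg : Measurable g) {W : G → ℝ≥0∞} (hW : Measurable W) :
    ∫⁻ p, W p * bilinOp K f g μ p ∂μ =
      ∫⁻ r, g r * ∫⁻ q, K (r + q) q * (f q * W (r + q)) ∂μ ∂μ := by
  have tonelli (F : G → G → ℝ≥0∞) (hF : Measurable (Function.uncurry F)) :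
      ∫⁻ p, ∫⁻ q, F p q ∂μ ∂μ = ∫⁻ q, ∫⁻ p, F p q ∂μ ∂μ :=
    lintegral_lintegral_swap hF.aemeasurable
  calc ∫⁻ p, W p * bilinOp K f g μ p ∂μ
      = ∫⁻ p, ∫⁻ q, W p * (K p q * (f q * g (p - q))) ∂μ ∂μ :=
        lintegral_congr fun p => (lintegral_const_mul _ (by fun_prop)).symm
    _ = ∫⁻ q, ∫⁻ p, W p * (K p q * (f q * g (p - q))) ∂μ ∂μ := tonelli _ (by fun_prop)
    _ = ∫⁻ q, ∫⁻ r, g r * (K (r + q) q * (f q * W (r + q))) ∂μ ∂μ := by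
        refine lintegral_congr fun q => ?_
        rw [← lintegral_add_right_eq_self _ q]
        refine lintegral_congr fun r => ?_
        rw [add_sub_cancel_right]
        ring
    _ = ∫⁻ r, ∫⁻ q, g r * (K (r + q) q * (f q * W (r + q))) ∂μ ∂μ :=
        (tonelli (fun r q => g r * (K (r + q) q * (f q * W (r + q)))) (by fun_prop)).symm
    _ = _ := lintegral_congr fun r => lintegral_const_mul _ (by fun_prop)

theorem eLpNorm_bilinOp_le_of_snd (hK : Measurable (Function.uncurry K)) (hf : Measurable f)
    (hg : Measurable g) (hS : ∀ r, eLpNorm (fun q => K (r + q) q) 2 μ ≤ S) :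
    eLpNorm (bilinOp K f g μ) 2 μ ≤ S * (eLpNorm f 2 μ * eLpNorm g 2 μ) := by
  refine eLpNorm_two_le_of_dual (measurable_bilinOp hK hf hg) fun W hW => ?_
  rw [lintegral_mul_bilinOp hK hf hg hW]
  refine (lintegral_mul_le_eLpNorm_two hg (by fun_prop)).trans ?_
  calc eLpNorm g 2 μ * eLpNorm (fun r => ∫⁻ q, K (r + q) q * (f q * W (r + q)) ∂μ) 2 μ
      ≤ eLpNorm g 2 μ * (S * (eLpNorm f 2 μ * eLpNorm W 2 μ)) := by
        gcongr
        refine (eLpNorm_two_lintegral_mul_le (F := fun r q => f q * W (r + q)) (by fun_prop)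
          (by fun_prop) hS).trans ?_
        gcongr
        exact eLpNorm_two_prod_mul_le hf (by fun_prop) fun q =>
          (eLpNorm_comp_measurePreserving hW.aestronglyMeasurable
            (measurePreserving_add_right μ q)).le
    _ = S * (eLpNorm f 2 μ * eLpNorm g 2 μ) * eLpNorm W 2 μ := by ring

variable [MeasurableNeg G] [μ.IsNegInvariant]

theorem eLpNorm_bilinOp_le_of_fst (hK : Measurable (Function.uncurry K)) (hf : Measurable f)
    (hg : Measurable g) (hS : ∀ q, eLpNorm (fun r => K (q + r) q) 2 μ ≤ S) :
    eLpNorm (bilinOp K f g μ) 2 μ ≤ S * (eLpNorm f 2 μ * eLpNorm g 2 μ) := by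
  rw [funext (bilinOp_swap K f g), mul_comm (eLpNorm f 2 μ)]
  exact eLpNorm_bilinOp_le_of_snd (by fun_prop) hg hf fun q => by
    simpa only [add_sub_cancel_right] using hS q

end BilinOp

/-! ### The dispersion relation and the resonance function -/

section Disp
variable {a x y η : ℝ}

theorem rpow_two_add (ha : 0 < a) (hx : 0 ≤ x) : x ^ (2 + a) = x ^ 2 * x ^ a := by
  rw [Real.rpow_add_of_nonneg hx zero_le_two ha.le, Real.rpow_two]

theorem disp_neg (a x : ℝ) : disp a (-x) = -disp a x := by simp [disp]

theorem disp_of_nonneg (ha : 0 < a) (hx : 0 ≤ x) : disp a x = x ^ (2 + a) := by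
  rw [disp, abs_of_nonneg hx, Real.rpow_one_add' hx (by positivity), rpow_two_add ha hx]
  ring

theorem abs_disp (ha : 0 < a) (x : ℝ) : |disp a x| = |x| ^ (2 + a) := by
  rw [← disp_of_nonneg ha (abs_nonneg x), disp, disp, abs_abs, abs_mul,
    abs_of_nonneg (Real.rpow_nonneg (abs_nonneg x) _)]

theorem hasDerivAt_disp (ha : 0 < a) (x : ℝ) :
    HasDerivAt (disp a) ((2 + a) * |x| ^ (1 + a)) x := by
  refine ((hasDerivAt_id x).mul (hasDerivAt_abs_rpow x (lt_add_of_pos_right 1 ha))).congr_deriv ?_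
  rcases eq_or_ne x 0 with rfl | hx
  · simp [Real.zero_rpow (by positivity : 1 + a ≠ 0)]
  have : |x| ^ (1 + a) = |x| ^ (1 + a - 2) * x ^ 2 := by
    rw [← sq_abs, ← Real.rpow_two, ← Real.rpow_add (abs_pos.2 hx), sub_add_cancel]
  rw [this, id]
  ring

theorem continuous_disp (ha : 0 < a) : Continuous (disp a) :=
  continuous_iff_continuousAt.2 fun x => (hasDerivAt_disp ha x).continuousAt

theorem rpow_add_rpow_add_le_add_rpow (ha : 0 < a) (hx : 0 ≤ x) (hy : 0 ≤ y) :
    x ^ (2 + a) + y ^ (2 + a) + 2 * (x * y * (x + y) ^ a) ≤ (x + y) ^ (2 + a) := by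
  rw [rpow_two_add ha hx, rpow_two_add ha hy, rpow_two_add ha (add_nonneg hx hy)]
  have hxa : x ^ a ≤ (x + y) ^ a := Real.rpow_le_rpow hx (by linarith) ha.le
  have hya : y ^ a ≤ (x + y) ^ a := Real.rpow_le_rpow hy (by linarith) ha.le
  nlinarith [mul_le_mul_of_nonneg_left hxa (sq_nonneg x),
    mul_le_mul_of_nonneg_left hya (sq_nonneg y)]

theorem le_abs_resonance (ha : 0 < a) (hxy : |x| ≤ |y|) :
    |x| * |x + y| * |y| ^ a ≤ |disp a x + disp a y - disp a (x + y)| := by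
  wlog hy : 0 ≤ y generalizing x y
  · have := this (x := -x) (y := -y) (by simpa using hxy) (by linarith)
    rwa [← neg_add, disp_neg, disp_neg, disp_neg, abs_neg, abs_neg, abs_neg, ← neg_add,
      neg_sub_neg, abs_sub_comm] at this
  rw [abs_of_nonneg hy] at hxy ⊢
  rcases le_total 0 x with hx | hx
  · rw [abs_of_nonneg hx, abs_of_nonneg (add_nonneg hx hy), disp_of_nonneg ha hx,
      disp_of_nonneg ha hy, disp_of_nonneg ha (add_nonneg hx hy), abs_sub_comm]
    have superadditive := rpow_add_rpow_add_le_add_rpow ha hx hy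
    have : x * (x + y) * y ^ a ≤ x * (2 * y) * (x + y) ^ a := by
      rw [abs_of_nonneg hx] at hxy
      gcongr <;> linarith
    refine this.trans (le_abs.2 (.inl ?_))
    linarith
  · obtain ⟨z, rfl⟩ : ∃ z, x = -z := ⟨-x, by ring⟩
    have hz : 0 ≤ z := by linarith
    rw [abs_neg, abs_of_nonneg hz] at hxy ⊢
    have hw : 0 ≤ -z + y := by linarith
    rw [abs_of_nonneg hw, disp_neg, disp_of_nonneg ha hz, disp_of_nonneg ha hy,
      disp_of_nonneg ha hw]
    have superadditive := rpow_add_rpow_add_le_add_rpow ha hz hw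
    rw [add_neg_cancel_left] at superadditive
    have : 0 ≤ z * (-z + y) * y ^ a := by positivity
    refine le_abs.2 (.inl ?_)
    linarith

theorem rpow_mul_abs_sub_le_abs_disp_sub (ha : 0 < a) (hyx : |y| ≤ |x|) :
    |x| ^ (1 + a) * |x - y| ≤ 2 * |disp a x - disp a y| := by
  wlog hx : 0 ≤ x generalizing x y
  · have := this (x := -x) (y := -y) (by simpa using hyx) (by linarith)
    rwa [disp_neg, disp_neg, abs_neg, neg_sub_neg, neg_sub_neg, abs_sub_comm y,
      abs_sub_comm (disp a y)] at this
  rw [abs_of_nonneg hx] at hyx ⊢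
  have hpow : |y| ^ (1 + a) ≤ x ^ (1 + a) :=
    Real.rpow_le_rpow (abs_nonneg y) hyx (by positivity)
  have hE : 0 ≤ |y| ^ (1 + a) := by positivity
  have midpoint : 2 * disp a y ≤ (x + y) * x ^ (1 + a) := by
    rw [disp]
    rcases le_total 0 y with hy | hy
    · rw [abs_of_nonneg hy] at hyx
      nlinarith
    · rw [abs_of_nonpos hy] at hyx
      nlinarith
  rw [abs_of_nonneg (by linarith [le_abs_self y] : 0 ≤ x - y)]
  have := le_abs_self (disp a x - disp a y)
  rw [disp, abs_of_nonneg hx] at this ⊢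
  linarith

theorem rpow_le_deriv_disp_phase (ha : 0 < a) (ha1 : a < 1) (hx : 7 * |x| ≤ |η|) :
    |η| ^ (1 + a) ≤ (2 + a) * |x + η| ^ (1 + a) - (2 + a) * |x| ^ (1 + a) := by
  have hxη : 6 / 7 * |η| ≤ |x + η| := by
    have := abs_sub_abs_le_abs_sub η (-x)
    rw [abs_neg, sub_neg_eq_add, add_comm η] at this
    linarith
  have large : 36 / 49 * |η| ^ (1 + a) ≤ |x + η| ^ (1 + a) := by
    calc 36 / 49 * |η| ^ (1 + a) = (6 / 7) ^ (2 : ℝ) * |η| ^ (1 + a) := by norm_num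
      _ ≤ (6 / 7) ^ (1 + a) * |η| ^ (1 + a) := by
          gcongr ?_ * _
          exact Real.rpow_le_rpow_of_exponent_ge (by norm_num) (by norm_num) (by linarith)
      _ = (6 / 7 * |η|) ^ (1 + a) := (Real.mul_rpow (by norm_num) (abs_nonneg η)).symm
      _ ≤ |x + η| ^ (1 + a) := by gcongr
  have small : |x| ^ (1 + a) ≤ 1 / 7 * |η| ^ (1 + a) := by
    calc |x| ^ (1 + a) ≤ (1 / 7 * |η|) ^ (1 + a) := by gcongr; linarith
      _ = (1 / 7) ^ (1 + a) * |η| ^ (1 + a) := Real.mul_rpow (by norm_num) (abs_nonneg η)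
      _ ≤ (1 / 7) ^ (1 : ℝ) * |η| ^ (1 + a) := by
          gcongr ?_ * _
          exact Real.rpow_le_rpow_of_exponent_ge (by norm_num) (by norm_num) (by linarith)
      _ = 1 / 7 * |η| ^ (1 + a) := by rw [Real.rpow_one]
  have hE : 0 ≤ |η| ^ (1 + a) := by positivity
  nlinarith

theorem rpow_mul_abs_sub_le_abs_disp_phase_sub (ha : 0 < a) (ha1 : a < 1) (hx : 7 * |x| ≤ |η|)
    (hy : 7 * |y| ≤ |η|) :
    |η| ^ (1 + a) * |x - y| ≤
      |(disp a (x + η) - disp a x) - (disp a (y + η) - disp a y)| := by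
  wlog hxy : y ≤ x generalizing x y
  · rw [abs_sub_comm x, abs_sub_comm (disp a (x + η) - _)]
    exact this hy hx (le_of_not_ge hxy)
  have mem {z : ℝ} (hz : 7 * |z| ≤ |η|) : z ∈ Set.Icc (-(|η| / 7)) (|η| / 7) :=
    abs_le.1 (by linarith)
  have deriv_phase (z : ℝ) :=
    ((hasDerivAt_disp ha (z + η)).comp_add_const z η).sub (hasDerivAt_disp ha z)
  rw [abs_of_nonneg (sub_nonneg.2 hxy)]
  refine (Convex.mul_sub_le_image_sub_of_le_deriv (convex_Icc _ _)
    (fun z _ => (deriv_phase z).continuousAt.continuousWithinAt)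
    (fun z _ => (deriv_phase z).differentiableAt.differentiableWithinAt) (fun z hz => ?_)
    y (mem hy) x (mem hx) hxy).trans (le_abs_self _)
  rw [(deriv_phase z).deriv]
  have hz' : |z| ≤ |η| / 7 := abs_le.2 (Set.mem_Icc.1 (interior_subset hz))
  exact rpow_le_deriv_disp_phase ha ha1 (by linarith)

end Disp

/-! ### Neighbourhoods of the dispersion curve and local smoothing -/

open Classical in
/-- The Iverson bracket of a proposition, with values in `ℝ≥0∞`. -/
def iverson (P : Prop) : ℝ≥0∞ := if P then 1 else 0

theorem iverson_true {P : Prop} (h : P) : iverson P = 1 := if_pos h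

theorem iverson_false {P : Prop} (h : ¬P) : iverson P = 0 := if_neg h

theorem iverson_le_one (P : Prop) : iverson P ≤ 1 := by unfold iverson; split_ifs <;> simp

theorem iverson_sq (P : Prop) : iverson P ^ 2 = iverson P := by unfold iverson; split_ifs <;> simp

theorem iverson_rpow {c : ℝ} (hc : 0 < c) (P : Prop) : iverson P ^ c = iverson P := by
  by_cases hP : P
  · rw [iverson_true hP, ENNReal.one_rpow]
  · rw [iverson_false hP, ENNReal.zero_rpow_of_pos hc]

theorem iverson_mul (P Q : Prop) : iverson P * iverson Q = iverson (P ∧ Q) := by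
  unfold iverson; split_ifs <;> simp_all

theorem iverson_mono {P Q : Prop} (h : P → Q) : iverson P ≤ iverson Q := by
  unfold iverson; split_ifs <;> simp_all

theorem iverson_or_le (P Q : Prop) : iverson (P ∨ Q) ≤ iverson P + iverson Q := by
  unfold iverson; split_ifs <;> simp_all

section Iverson
variable {α : Type*} [MeasurableSpace α] {P : α → Prop}

theorem measurable_iverson (hP : MeasurableSet {x | P x}) : Measurable fun x => iverson (P x) := by
  classical
  exact Measurable.ite hP measurable_const measurable_const

theorem lintegral_iverson {μ : Measure α} (hP : MeasurableSet {x | P x}) :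
    ∫⁻ x, iverson (P x) ∂μ = μ {x | P x} := by
  rw [← lintegral_indicator_one hP]
  rfl

end Iverson

theorem volume_le_of_mul_abs_sub_le {E : Set ℝ} {D T : ℝ} (hD : 0 < D)
    (h : ∀ x ∈ E, ∀ y ∈ E, D * |x - y| ≤ T) : volume E ≤ ENNReal.ofReal (T / D) := by
  refine (Real.volume_le_diam E).trans (Metric.ediam_le fun x hx y hy => ?_)
  rw [edist_dist, Real.dist_eq]
  exact ENNReal.ofReal_le_ofReal ((le_div_iff₀' hD).2 (h x hx y hy))

theorem lintegral_mul_iverson_strip {α : ℝ → ℝ} (hα : Measurable α) {φ : ℝ → ℝ≥0∞}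
    (hφ : Measurable φ) (L : ℝ) :
    ∫⁻ q : ℝ × ℝ, φ q.1 * iverson (|q.2 - α q.1| ≤ L) = ENNReal.ofReal (2 * L) * ∫⁻ x, φ x := by
  have : Measurable fun q : ℝ × ℝ => iverson (|q.2 - α q.1| ≤ L) :=
    measurable_iverson (measurableSet_le (by fun_prop) measurable_const)
  rw [Measure.volume_eq_prod, lintegral_prod _ (by fun_prop), ← lintegral_const_mul _ hφ]
  refine lintegral_congr fun x => ?_
  have ball : {y : ℝ | |y - α x| ≤ L} = Metric.closedBall (α x) L := by
    ext y
    rw [Metric.mem_closedBall, Real.dist_eq, Set.mem_ofPred_eq]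
  change ∫⁻ y, φ x * iverson (|y - α x| ≤ L) = _
  rw [lintegral_const_mul _ (by fun_prop), lintegral_iverson
    (measurableSet_le (by fun_prop) measurable_const), ball, Real.volume_closedBall, mul_comm]

/-- On the intersection, `|α - β| ≤ L₁ + L₂`, so that transversality confines the abscissa to a set
of measure `O((L₁ + L₂) / D)`; the narrower strip bounds the measure of each fibre. -/
theorem lintegral_iverson_inter_strips_le {α β : ℝ → ℝ} (hα : Measurable α) (hβ : Measurable β)
    {E : Set ℝ} (hE : MeasurableSet E) {D L₁ L₂ : ℝ} (hD : 0 < D) (hL₁ : 0 < L₁) (hL₂ : 0 < L₂)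
    (transversal : ∀ x ∈ E, ∀ y ∈ E, D * |x - y| ≤ |(α x - β x) - (α y - β y)|) :
    ∫⁻ q : ℝ × ℝ, iverson (q.1 ∈ E ∧ |q.2 - α q.1| ≤ L₁ ∧ |q.2 - β q.1| ≤ L₂) ≤
      ENNReal.ofReal (8 * L₁ * L₂ / D) := by
  wlog hL : L₁ ≤ L₂ generalizing α β L₁ L₂
  · refine le_of_eq_of_le (lintegral_congr fun q => ?_) ((this hβ hα hL₂ hL₁ (fun x hx y hy => ?_)
      (le_of_not_ge hL)).trans_eq ?_)
    · simp only [and_comm]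
    · refine (transversal x hx y hy).trans_eq ?_
      rw [← abs_neg]
      ring_nf
    · rw [mul_right_comm]
  let F : Set ℝ := {x | x ∈ E ∧ |α x - β x| ≤ L₁ + L₂}
  have hF : MeasurableSet F :=
    hE.inter (measurableSet_le (f := fun x => |α x - β x|) (by fun_prop) measurable_const)
  have volume_F : volume F ≤ ENNReal.ofReal (2 * (L₁ + L₂) / D) :=
    volume_le_of_mul_abs_sub_le hD fun x hx y hy => (transversal x hx.1 y hy.1).trans <| by
      linarith [abs_sub (α x - β x) (α y - β y), hx.2, hy.2]
  calc ∫⁻ q : ℝ × ℝ, iverson (q.1 ∈ E ∧ |q.2 - α q.1| ≤ L₁ ∧ |q.2 - β q.1| ≤ L₂)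
      ≤ ∫⁻ q : ℝ × ℝ, iverson (q.1 ∈ F) * iverson (|q.2 - α q.1| ≤ L₁) := by
        refine lintegral_mono fun q => ?_
        rw [iverson_mul]
        refine iverson_mono fun ⟨hqE, hqα, _⟩ => ⟨⟨hqE, ?_⟩, hqα⟩
        have := abs_sub_le (α q.1) q.2 (β q.1)
        rw [abs_sub_comm (α q.1) q.2] at this
        linarith
    _ = ENNReal.ofReal (2 * L₁) * volume F := by
        rw [lintegral_mul_iverson_strip hα (measurable_iverson (P := (· ∈ F)) hF),
          lintegral_iverson (P := (· ∈ F)) hF, Set.ofPred_mem_eq]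
    _ ≤ ENNReal.ofReal (2 * L₁) * ENNReal.ofReal (2 * (L₁ + L₂) / D) := by gcongr
    _ ≤ ENNReal.ofReal (8 * L₁ * L₂ / D) := by
        rw [← ENNReal.ofReal_mul (by positivity), ← mul_div_assoc]
        gcongr ENNReal.ofReal (?_ / _)
        nlinarith

section LocalSmoothing
variable {a lam L : ℝ}

/-- The set of frequencies at which the time frequency `lam` has modulation at most `L`. -/
def dispSlice (a lam L : ℝ) : Set ℝ := {x | |lam - disp a x| ≤ L}

theorem abs_le_one_add_abs_disp (ha : 0 < a) (x : ℝ) : |x| ≤ 1 + |disp a x| := by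
  rcases le_total |x| 1 with hx | hx
  · linarith [abs_nonneg (disp a x)]
  · rw [abs_disp ha]
    linarith [Real.self_le_rpow_of_one_le hx (by linarith : 1 ≤ 2 + a)]

theorem isCompact_dispSlice (ha : 0 < a) : IsCompact (dispSlice a lam L) := by
  refine Metric.isCompact_of_isClosed_isBounded
    (isClosed_le (by have := continuous_disp ha; fun_prop) continuous_const)
    ((Metric.isBounded_iff_subset_closedBall 0).2 ⟨1 + |lam| + L, fun x hx => ?_⟩)
  rw [mem_closedBall_zero_iff, Real.norm_eq_abs]
  have hx : |lam - disp a x| ≤ L := hx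
  have := abs_sub_abs_le_abs_sub (disp a x) lam
  rw [abs_sub_comm] at this
  linarith [abs_le_one_add_abs_disp ha x]

theorem rpow_mul_abs_sub_le_of_mem_dispSlice (ha : 0 < a) {x y : ℝ} (hx : x ∈ dispSlice a lam L)
    (hy : y ∈ dispSlice a lam L) (hyx : |y| ≤ |x|) : |x| ^ (1 + a) * |x - y| ≤ 4 * L := by
  have hx : |lam - disp a x| ≤ L := hx
  have hy : |lam - disp a y| ≤ L := hy
  have := abs_sub_le (disp a x) lam (disp a y)
  rw [abs_sub_comm (disp a x) lam] at this
  linarith [rpow_mul_abs_sub_le_abs_disp_sub ha hyx]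

theorem exists_dispSlice_bounds (ha : 0 < a) (hL : 0 ≤ L) :
    ∃ X : ℝ, 0 ≤ X ∧ (∀ x ∈ dispSlice a lam L, |x| ≤ X) ∧
      volume.real (dispSlice a lam L) ≤ 2 * X ∧
      X ^ (1 + a) * volume.real (dispSlice a lam L) ≤ 8 * L := by
  rcases (dispSlice a lam L).eq_empty_or_nonempty with empty | nonempty
  · exact ⟨0, le_rfl, by simp [empty], by simp [empty], by simpa [empty]⟩
  obtain ⟨x₀, hx₀, max⟩ :=
    (isCompact_dispSlice ha).exists_isMaxOn nonempty continuous_abs.continuousOn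
  refine ⟨|x₀|, abs_nonneg x₀, fun x hx => max hx, ?_, ?_⟩
  · refine ENNReal.toReal_le_of_le_ofReal (by positivity) ?_
    refine (measure_mono (t := Metric.closedBall 0 |x₀|) fun x hx => ?_).trans_eq
      (Real.volume_closedBall 0 _)
    rw [mem_closedBall_zero_iff]
    exact max hx
  · rcases eq_or_ne x₀ 0 with rfl | hx₀0
    · rw [abs_zero, Real.zero_rpow (by positivity)]
      linarith
    have hX : 0 < |x₀| ^ (1 + a) := Real.rpow_pos_of_pos (abs_pos.2 hx₀0) _
    rw [← le_div_iff₀' hX]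
    refine ENNReal.toReal_le_of_le_ofReal (by positivity)
      (volume_le_of_mul_abs_sub_le hX fun x hx y hy => ?_)
    have hx₀x := rpow_mul_abs_sub_le_of_mem_dispSlice ha hx₀ hx (max hx)
    have hx₀y := rpow_mul_abs_sub_le_of_mem_dispSlice ha hx₀ hy (max hy)
    have := abs_sub_le x x₀ y
    rw [abs_sub_comm x x₀] at this
    nlinarith

theorem lintegral_rpow_mul_iverson_dispSlice_le (ha : 0 < a) {X σ : ℝ} (hσ : 0 ≤ σ)
    (hX : ∀ x ∈ dispSlice a lam L, |x| ≤ X) :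
    ∫⁻ x, ENNReal.ofReal (|x| ^ σ) * iverson (|lam - disp a x| ≤ L) ≤
      ENNReal.ofReal (X ^ σ * volume.real (dispSlice a lam L)) := by
  have compact := isCompact_dispSlice (lam := lam) (L := L) ha
  calc ∫⁻ x, ENNReal.ofReal (|x| ^ σ) * iverson (|lam - disp a x| ≤ L)
      ≤ ∫⁻ x, ENNReal.ofReal (X ^ σ) * iverson (|lam - disp a x| ≤ L) := by
        refine lintegral_mono fun x => ?_
        by_cases hx : |lam - disp a x| ≤ L
        · dsimp only
          gcongr
          exact hX x hx
        · simp only [iverson_false hx, mul_zero, le_refl]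
    _ = ENNReal.ofReal (X ^ σ) * volume (dispSlice a lam L) := by
        rw [lintegral_const_mul' _ _ ENNReal.ofReal_ne_top,
          lintegral_iverson compact.measurableSet]
        rfl
    _ = ENNReal.ofReal (X ^ σ * volume.real (dispSlice a lam L)) := by
        rw [ENNReal.ofReal_mul' measureReal_nonneg,
          ofReal_measureReal compact.measure_lt_top.ne]

theorem lintegral_rpow_one_add_dispSlice_le (ha : 0 < a) (hL : 0 ≤ L) :
    ∫⁻ x, ENNReal.ofReal (|x| ^ (1 + a)) * iverson (|lam - disp a x| ≤ L) ≤
      ENNReal.ofReal (8 * L) := by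
  obtain ⟨X, -, hX, -, smoothing⟩ := exists_dispSlice_bounds (lam := lam) ha hL
  exact (lintegral_rpow_mul_iverson_dispSlice_le ha (by positivity) hX).trans
    (ENNReal.ofReal_le_ofReal smoothing)

/-- Interpolates between the two bounds for the measure of the slice, `X` and `L X ^ (-(1 + a))`. -/
theorem lintegral_rpow_one_sub_dispSlice_le (ha : 0 < a) (ha1 : a < 1) (hL : 0 ≤ L) :
    ∫⁻ x, ENNReal.ofReal (|x| ^ (1 - a)) * iverson (|lam - disp a x| ≤ L) ≤
      ENNReal.ofReal (16 * L ^ ((2 - a) / (2 + a))) := by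
  obtain ⟨X, hX0, hX, trivial_bound, smoothing⟩ := exists_dispSlice_bounds (lam := lam) ha hL
  refine (lintegral_rpow_mul_iverson_dispSlice_le ha (by linarith) hX).trans
    (ENNReal.ofReal_le_ofReal ?_)
  set m := volume.real (dispSlice a lam L)
  have hm : 0 ≤ m := measureReal_nonneg
  set θ := (2 - a) / (2 + a) with hθ
  have hθ0 : 0 < θ := div_pos (by linarith) (by linarith)
  have hθ1 : θ < 1 := by rw [hθ, div_lt_one (by linarith)]; linarith
  have hθe : (1 - a) + (1 - θ) = (1 + a) * θ := by rw [hθ]; field_simp; ring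
  calc X ^ (1 - a) * m = X ^ (1 - a) * (m ^ (1 - θ) * m ^ θ) := by
        rw [← Real.rpow_add_of_nonneg hm (by linarith) hθ0.le, sub_add_cancel, Real.rpow_one]
    _ ≤ X ^ (1 - a) * ((2 * X) ^ (1 - θ) * m ^ θ) := by gcongr
    _ = 2 ^ (1 - θ) * (X ^ (1 + a) * m) ^ θ := by
        rw [Real.mul_rpow zero_le_two hX0, Real.mul_rpow (by positivity) hm, ← Real.rpow_mul hX0,
          ← hθe, Real.rpow_add_of_nonneg hX0 (by linarith) (by linarith)]
        ring
    _ ≤ 2 ^ (1 : ℝ) * (8 * L) ^ θ := by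
        gcongr
        · exact one_le_two
        · linarith
    _ = 2 * (8 ^ θ * L ^ θ) := by rw [Real.mul_rpow (by norm_num) hL, Real.rpow_one]
    _ ≤ 2 * (8 ^ (1 : ℝ) * L ^ θ) := by
        gcongr
        norm_num
    _ = 16 * L ^ θ := by rw [Real.rpow_one]; ring

end LocalSmoothing

/-! ### The dyadic bilinear estimate -/

section RestrictedSymbol
variable {a : ℝ} {P : ℝ × ℝ → ℝ × ℝ → Prop}

/-- The symbol `2 |ξ| |ξ₁| ^ (-s*)`, where `s* = (1 + a) / 2`, restricted to a set of pairs
`(p, q) = ((ξ, λ), (ξ₁, λ₁))`. -/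
def restrictedSymbol (a : ℝ) (P : ℝ × ℝ → ℝ × ℝ → Prop) (p q : ℝ × ℝ) : ℝ≥0∞ :=
  ENNReal.ofReal (2 * |p.1| * |q.1| ^ (-((1 + a) / 2))) * iverson (P p q)

theorem restrictedSymbol_sq (a : ℝ) (P : ℝ × ℝ → ℝ × ℝ → Prop) (p q : ℝ × ℝ) :
    restrictedSymbol a P p q ^ 2 =
      ENNReal.ofReal (4 * |p.1| ^ 2 * |q.1| ^ (-(1 + a))) * iverson (P p q) := by
  have : (|q.1| ^ (-((1 + a) / 2))) ^ 2 = |q.1| ^ (-(1 + a)) := by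
    rw [← Real.rpow_mul_natCast (abs_nonneg _)]
    ring_nf
  rw [restrictedSymbol, mul_pow, iverson_sq, ← ENNReal.ofReal_pow (by positivity), mul_pow,
    mul_pow, this]
  norm_num

theorem measurable_restrictedSymbol
    (hP : MeasurableSet {z : (ℝ × ℝ) × (ℝ × ℝ) | P z.1 z.2}) :
    Measurable (Function.uncurry (restrictedSymbol a P)) := by
  have := measurable_iverson hP
  unfold restrictedSymbol Function.uncurry
  fun_prop

theorem restrictedSymbol_sq_le {p q : ℝ × ℝ} {c : ℝ} {Q : Prop}
    (h : P p q → 4 * |p.1| ^ 2 * |q.1| ^ (-(1 + a)) ≤ c ∧ Q) :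
    restrictedSymbol a P p q ^ 2 ≤ ENNReal.ofReal c * iverson Q := by
  rw [restrictedSymbol_sq]
  by_cases hP : P p q
  · rw [iverson_true hP, iverson_true (h hP).2]
    gcongr
    exact (h hP).1
  · simp only [iverson_false hP, mul_zero, zero_le]

end RestrictedSymbol

section Regions
variable {a L L₁ L₂ : ℝ} {p q : ℝ × ℝ}

/-- The pairs of output `p` and first input `q` where the resonance identity is used: the first
input has frequency at least one, lower than the other one, and is not far from the dispersion
curve. -/
def Nonresonant (a : ℝ) (p q : ℝ × ℝ) : Prop :=
  1 ≤ |q.1| ∧ |q.1| ≤ |(p - q).1| ∧ |q.2 - disp a q.1| ≤ 3 * |q.1| ^ (2 + a)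

/-- The nonresonant pairs for which the output, the first and the second input have modulations at
most `2 L`, `2 L₁`, `2 L₂`. -/
def NonresonantBlock (a L L₁ L₂ : ℝ) (p q : ℝ × ℝ) : Prop :=
  Nonresonant a p q ∧ |p.2 - disp a p.1| ≤ 2 * L ∧ |q.2 - disp a q.1| ≤ 2 * L₁ ∧
    |(p - q).2 - disp a (p - q).1| ≤ 2 * L₂

/-- High-low interaction in which the output has the largest modulation. -/
def HighLowOutput (a L L₁ L₂ : ℝ) (p q : ℝ × ℝ) : Prop :=
  7 * |q.1| ≤ |p.1| ∧ 1 ≤ |q.1| ∧ |p.1| ^ (1 + a) ≤ 16 * L ∧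
    |q.2 - disp a q.1| ≤ 2 * L₁ ∧ |(p - q).2 - disp a (p - q).1| ≤ 2 * L₂

/-- High-low interaction in which the high-frequency input has the largest modulation. -/
def HighLowInput (a L L₁ L₂ : ℝ) (p q : ℝ × ℝ) : Prop :=
  7 * |q.1| ≤ |(p - q).1| ∧ 1 ≤ |q.1| ∧ |(p - q).1| ^ (1 + a) ≤ 16 * L₂ ∧ L ≤ L₂ ∧
    |q.2 - disp a q.1| ≤ 2 * L₁ ∧ |p.2 - disp a p.1| ≤ 2 * L

/-- Interaction of comparable input frequencies in which the output has the largest modulation. -/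
def ComparableOutput (a L L₁ : ℝ) (p q : ℝ × ℝ) : Prop :=
  1 ≤ |q.1| ∧ |p.1| ≤ 16 * |q.1| ∧ |p.1| * |q.1| ^ (1 + a) ≤ 48 * L ∧
    |q.2 - disp a q.1| ≤ 2 * L₁

/-- Interaction of comparable input frequencies in which the second input has the largest
modulation. -/
def ComparableSnd (a L₁ L₂ : ℝ) (p q : ℝ × ℝ) : Prop :=
  1 ≤ |q.1| ∧ |q.1| ≤ |(p - q).1| ∧ |(p - q).1| ≤ 8 * |q.1| ∧
    |p.1| * |(p - q).1| ^ (1 + a) ≤ 48 * L₂ ∧ |q.2 - disp a q.1| ≤ 2 * L₁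

/-- Interaction of comparable input frequencies in which the first input has the largest
modulation. -/
def ComparableFst (a L₁ L₂ : ℝ) (p q : ℝ × ℝ) : Prop :=
  1 ≤ |q.1| ∧ |q.1| ≤ |(p - q).1| ∧ |(p - q).1| ≤ 8 * |q.1| ∧
    |p.1| * |(p - q).1| ^ (1 + a) ≤ 48 * L₁ ∧ |(p - q).2 - disp a (p - q).1| ≤ 2 * L₂

theorem measurableSet_highLowOutput (ha : 0 < a) :
    MeasurableSet {z : (ℝ × ℝ) × (ℝ × ℝ) | HighLowOutput a L L₁ L₂ z.1 z.2} := by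
  have := continuous_disp ha
  simp only [HighLowOutput, Set.ofPred_and]
  repeat' first | apply MeasurableSet.inter | apply measurableSet_le
  all_goals fun_prop

theorem measurableSet_highLowInput (ha : 0 < a) :
    MeasurableSet {z : (ℝ × ℝ) × (ℝ × ℝ) | HighLowInput a L L₁ L₂ z.1 z.2} := by
  have := continuous_disp ha
  simp only [HighLowInput, Set.ofPred_and]
  repeat' first | apply MeasurableSet.inter | apply measurableSet_le
  all_goals fun_prop

theorem measurableSet_comparableOutput (ha : 0 < a) :
    MeasurableSet {z : (ℝ × ℝ) × (ℝ × ℝ) | ComparableOutput a L L₁ z.1 z.2} := by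
  have := continuous_disp ha
  simp only [ComparableOutput, Set.ofPred_and]
  repeat' first | apply MeasurableSet.inter | apply measurableSet_le
  all_goals fun_prop

theorem measurableSet_comparableSnd (ha : 0 < a) :
    MeasurableSet {z : (ℝ × ℝ) × (ℝ × ℝ) | ComparableSnd a L₁ L₂ z.1 z.2} := by
  have := continuous_disp ha
  simp only [ComparableSnd, Set.ofPred_and]
  repeat' first | apply MeasurableSet.inter | apply measurableSet_le
  all_goals fun_prop

theorem measurableSet_comparableFst (ha : 0 < a) :
    MeasurableSet {z : (ℝ × ℝ) × (ℝ × ℝ) | ComparableFst a L₁ L₂ z.1 z.2} := by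
  have := continuous_disp ha
  simp only [ComparableFst, Set.ofPred_and]
  repeat' first | apply MeasurableSet.inter | apply measurableSet_le
  all_goals fun_prop

namespace NonresonantBlock

theorem resonance_le (ha : 0 < a) (h : NonresonantBlock a L L₁ L₂ p q) :
    |q.1| * |p.1| * |(p - q).1| ^ a ≤
      2 * L + |q.2 - disp a q.1| + |(p - q).2 - disp a (p - q).1| := by
  obtain ⟨⟨-, hle, -⟩, hp, -, -⟩ := h
  have resonance := le_abs_resonance ha hle
  rw [← Prod.fst_add, add_sub_cancel] at resonance
  refine resonance.trans (le_trans (le_of_eq ?_)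
    ((abs_sub _ _).trans (add_le_add ((abs_sub _ _).trans (add_le_add_left hp _)) le_rfl)))
  rw [Prod.snd_sub]
  ring_nf

/-- The first input has modulation at most `3 |ξ₁| ^ (2 + a)`, a fraction of the resonance, so one
of the other two modulations is large. -/
theorem rpow_le_of_highLow (ha : 0 < a) (h : NonresonantBlock a L L₁ L₂ p q)
    (hlow : 8 * |q.1| ≤ |(p - q).1|) : |(p - q).1| ^ (1 + a) ≤ 4 * (L + L₂) := by
  have resonance := h.resonance_le ha
  obtain ⟨⟨hq, hle, hmod⟩, -, -, hL₂⟩ := h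
  set x := |q.1|
  set y := |(p - q).1|
  have hx0 : 0 < x := by linarith
  have hy0 : 0 < y := by linarith
  have hp : 7 / 8 * y ≤ |p.1| := by
    have := abs_add_le p.1 (-q.1)
    rw [abs_neg, ← sub_eq_add_neg, ← Prod.fst_sub] at this
    linarith
  have output : 7 / 8 * (x * y ^ (1 + a)) ≤ x * |p.1| * y ^ a := by
    rw [Real.rpow_one_add' hy0.le (by positivity)]
    calc 7 / 8 * (x * (y * y ^ a)) = x * (7 / 8 * y) * y ^ a := by ring
      _ ≤ x * |p.1| * y ^ a := by gcongr
  have input : 3 * x ^ (2 + a) ≤ 3 / 8 * (x * y ^ (1 + a)) := by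
    rw [rpow_two_add ha hx0.le, Real.rpow_one_add' hy0.le (by positivity)]
    calc 3 * (x ^ 2 * x ^ a) = 3 / 8 * (x * (8 * x * x ^ a)) := by ring
      _ ≤ 3 / 8 * (x * (y * y ^ a)) := by gcongr
  have : y ^ (1 + a) ≤ x * y ^ (1 + a) := le_mul_of_one_le_left (by positivity) hq
  linarith

theorem mul_rpow_le_of_comparable (ha : 0 < a) (h : NonresonantBlock a L L₁ L₂ p q)
    (hcomp : |(p - q).1| ≤ 8 * |q.1|) :
    |p.1| * |(p - q).1| ^ (1 + a) ≤ 16 * (L + L₁ + L₂) := by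
  have resonance := h.resonance_le ha
  obtain ⟨-, -, hL₁, hL₂⟩ := h
  rw [Real.rpow_one_add' (abs_nonneg _) (by positivity)]
  calc |p.1| * (|(p - q).1| * |(p - q).1| ^ a)
      ≤ |p.1| * (8 * |q.1| * |(p - q).1| ^ a) := by gcongr
    _ = 8 * (|q.1| * |p.1| * |(p - q).1| ^ a) := by ring
    _ ≤ 16 * (L + L₁ + L₂) := by linarith

theorem highLow_cases (ha : 0 < a) (ha1 : a < 1) (h : NonresonantBlock a L L₁ L₂ p q)
    (hlow : 8 * |q.1| ≤ |(p - q).1|) :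
    HighLowOutput a L L₁ L₂ p q ∨ HighLowInput a L L₁ L₂ p q := by
  have hbig := h.rpow_le_of_highLow ha hlow
  obtain ⟨⟨hq, -, -⟩, hL, hL₁, hL₂⟩ := h
  have htri : |p.1| ≤ |q.1| + |(p - q).1| := by
    simpa [Prod.fst_sub] using abs_add_le q.1 (p - q).1
  have htri' : |(p - q).1| ≤ |p.1| + |q.1| := abs_sub p.1 q.1
  have hL0 : 0 ≤ L := by linarith [abs_nonneg (p.2 - disp a p.1)]
  have hL₂0 : 0 ≤ L₂ := by linarith [abs_nonneg ((p - q).2 - disp a (p - q).1)]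
  rcases le_total L L₂ with hLL | hLL
  · exact .inr ⟨by linarith, hq, by linarith, hLL, hL₁, hL⟩
  · refine .inl ⟨by linarith, hq, ?_, hL₁, hL₂⟩
    calc |p.1| ^ (1 + a) ≤ (9 / 8 * |(p - q).1|) ^ (1 + a) := by gcongr; linarith
      _ = (9 / 8) ^ (1 + a) * |(p - q).1| ^ (1 + a) := Real.mul_rpow (by norm_num) (abs_nonneg _)
      _ ≤ (9 / 8) ^ (2 : ℝ) * (4 * (L + L₂)) := by
          gcongr
          · norm_num
          · linarith
      _ ≤ 16 * L := by norm_num; linarith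

theorem comparable_cases (ha : 0 < a) (h : NonresonantBlock a L L₁ L₂ p q)
    (hcomp : |(p - q).1| ≤ 8 * |q.1|) :
    ComparableOutput a L L₁ p q ∨ ComparableSnd a L₁ L₂ p q ∨ ComparableFst a L₁ L₂ p q := by
  have hbig := h.mul_rpow_le_of_comparable ha hcomp
  obtain ⟨⟨hq, hle, -⟩, -, hL₁, hL₂⟩ := h
  have htri : |p.1| ≤ |q.1| + |(p - q).1| := by
    simpa [Prod.fst_sub] using abs_add_le q.1 (p - q).1
  have hmono : |p.1| * |q.1| ^ (1 + a) ≤ |p.1| * |(p - q).1| ^ (1 + a) := by gcongr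
  by_cases hL : L₁ + L₂ ≤ 2 * L
  · exact .inl ⟨hq, by linarith, by linarith, hL₁⟩
  by_cases hL' : L + L₁ ≤ 2 * L₂
  · exact .inr (.inl ⟨hq, hle, hcomp, by linarith, hL₁⟩)
  · exact .inr (.inr ⟨hq, hle, hcomp, by linarith, hL₂⟩)

theorem cases (ha : 0 < a) (ha1 : a < 1) (h : NonresonantBlock a L L₁ L₂ p q) :
    (HighLowOutput a L L₁ L₂ p q ∨ HighLowInput a L L₁ L₂ p q) ∨
      ComparableOutput a L L₁ p q ∨ ComparableSnd a L₁ L₂ p q ∨ ComparableFst a L₁ L₂ p q :=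
  (le_total (8 * |q.1|) |(p - q).1|).imp (h.highLow_cases ha ha1) (h.comparable_cases ha)

end NonresonantBlock
end Regions

/-- The exponent of the largest modulation in the dyadic bilinear estimate. It is less than `1` and
solves `1 - a - β (2 + a) = -(1 + a / 2)`, which makes the comparable interactions summable. -/
def smoothingExponent (a : ℝ) : ℝ := (4 - a) / (2 * (2 + a))

section SmoothingExponent
variable {a : ℝ}

theorem smoothingExponent_mul (ha : 0 < a) : smoothingExponent a * (2 + a) = 2 - a / 2 := by
  rw [smoothingExponent]
  field_simp
  ring

theorem smoothingExponent_pos (ha : 0 < a) (ha1 : a < 1) : 0 < smoothingExponent a :=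
  div_pos (by linarith) (by linarith)

theorem smoothingExponent_lt_one (ha : 0 < a) : smoothingExponent a < 1 := by
  rw [smoothingExponent, div_lt_one (by linarith)]
  linarith

theorem one_sub_le_smoothingExponent_mul (ha : 0 < a) :
    1 - a ≤ (1 + a) * smoothingExponent a := by
  linarith [smoothingExponent_mul ha, smoothingExponent_lt_one ha]

theorem rpow_one_sub_le_of_rpow_one_add_le (ha : 0 < a) (ha1 : a < 1) {x c M : ℝ} (hx : 0 ≤ x)
    (hc : 1 ≤ c) (hM : 1 ≤ M) (h : x ^ (1 + a) ≤ c * M) :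
    x ^ (1 - a) ≤ c * M ^ smoothingExponent a := by
  have hβ := smoothingExponent_pos ha ha1
  rcases le_total x 1 with hx1 | hx1
  · exact (Real.rpow_le_one hx hx1 (by linarith)).trans
      (one_le_mul_of_one_le_of_one_le hc (Real.one_le_rpow hM hβ.le))
  · calc x ^ (1 - a) ≤ x ^ ((1 + a) * smoothingExponent a) :=
          Real.rpow_le_rpow_of_exponent_le hx1 (one_sub_le_smoothingExponent_mul ha)
      _ = (x ^ (1 + a)) ^ smoothingExponent a := Real.rpow_mul hx _ _
      _ ≤ (c * M) ^ smoothingExponent a := by gcongr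
      _ = c ^ smoothingExponent a * M ^ smoothingExponent a :=
          Real.mul_rpow (by linarith) (by linarith)
      _ ≤ c * M ^ smoothingExponent a := by
          gcongr
          exact Real.rpow_le_self_of_one_le hc (smoothingExponent_lt_one ha).le

theorem rpow_mul_le_rpow_mul_of_le {β x y : ℝ} (hβ : β ≤ 1) (hx : 0 < x) (hxy : x ≤ y) :
    y ^ β * x ≤ x ^ β * y := by
  have hy : 0 < y := hx.trans_le hxy
  have := Real.rpow_le_self_of_one_le ((one_le_div hx).2 hxy) hβ
  rwa [Real.div_rpow hy.le hx.le, div_le_div_iff₀ (by positivity) hx, mul_comm y] at this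

end SmoothingExponent

section HighLow
variable {a η L L₁ L₂ : ℝ}

theorem lintegral_iverson_shifted_strips_le (ha : 0 < a) (ha1 : a < 1) (hη : 0 < |η|)
    (hL₁ : 0 < L₁) (hL₂ : 0 < L₂) (c : ℝ) :
    ∫⁻ q : ℝ × ℝ, iverson (7 * |q.1| ≤ |η| ∧ |q.2 - disp a q.1| ≤ L₁ ∧
      |q.2 - (disp a (q.1 + η) + c)| ≤ L₂) ≤ ENNReal.ofReal (8 * L₁ * L₂ / |η| ^ (1 + a)) := by
  have hdisp := (continuous_disp ha).measurable
  refine lintegral_iverson_inter_strips_le (α := disp a) (β := fun x => disp a (x + η) + c)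
    (E := {x | 7 * |x| ≤ |η|}) hdisp (by fun_prop) (measurableSet_le (by fun_prop) (by fun_prop))
    (Real.rpow_pos_of_pos hη _) hL₁ hL₂ fun x hx y hy =>
      (rpow_mul_abs_sub_le_abs_disp_phase_sub ha ha1 hx hy).trans_eq ?_
  rw [abs_sub_comm]
  ring_nf

theorem lintegral_le_of_le_iverson_shifted_strips (ha : 0 < a) (ha1 : a < 1)
    {F : ℝ × ℝ → ℝ≥0∞} {c C M : ℝ} (hC : 0 ≤ C) (hM : 1 ≤ M) (hL₁ : 0 < L₁) (hL₂ : 0 < L₂)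
    (hF : ∀ q, F q ≤ ENNReal.ofReal (C * |η| ^ 2) * iverson ((0 < |η| ∧ |η| ^ (1 + a) ≤ 16 * M) ∧
      7 * |q.1| ≤ |η| ∧ |q.2 - disp a q.1| ≤ 2 * L₁ ∧
        |q.2 - (disp a (q.1 + η) + c)| ≤ 2 * L₂)) :
    ∫⁻ q, F q ≤ ENNReal.ofReal (512 * C * (M ^ smoothingExponent a * L₁ * L₂)) := by
  refine (lintegral_mono hF).trans ?_
  by_cases hη : 0 < |η| ∧ |η| ^ (1 + a) ≤ 16 * M
  swap
  · simp only [hη, false_and, iverson_false not_false, mul_zero, lintegral_zero, zero_le]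
  simp only [hη, true_and]
  rw [lintegral_const_mul' _ _ ENNReal.ofReal_ne_top]
  refine (mul_le_mul_right (lintegral_iverson_shifted_strips_le ha ha1 hη.1 (by positivity)
    (by positivity) c) _).trans ?_
  rw [← ENNReal.ofReal_mul (by positivity)]
  refine ENNReal.ofReal_le_ofReal ?_
  have hpow := rpow_one_sub_le_of_rpow_one_add_le ha ha1 hη.1.le (by norm_num) hM hη.2
  have hdiv : |η| ^ 2 / |η| ^ (1 + a) = |η| ^ (1 - a) := by
    rw [← Real.rpow_natCast, ← Real.rpow_sub hη.1]
    congr 1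
    push_cast
    ring
  calc C * |η| ^ 2 * (8 * (2 * L₁) * (2 * L₂) / |η| ^ (1 + a))
      = 32 * C * L₁ * L₂ * (|η| ^ 2 / |η| ^ (1 + a)) := by ring
    _ ≤ 32 * C * L₁ * L₂ * (16 * M ^ smoothingExponent a) := by rw [hdiv]; gcongr
    _ = 512 * C * (M ^ smoothingExponent a * L₁ * L₂) := by ring

theorem abs_rpow_neg_le_one (ha : 0 < a) {x : ℝ} (hx : 1 ≤ |x|) : |x| ^ (-(1 + a)) ≤ 1 :=
  Real.rpow_le_one_of_one_le_of_nonpos hx (by linarith)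

theorem lintegral_restrictedSymbol_highLowOutput_sq_le (ha : 0 < a) (ha1 : a < 1) (hL : 1 ≤ L)
    (hL₁ : 0 < L₁) (hL₂ : 0 < L₂) (p : ℝ × ℝ) :
    ∫⁻ q, restrictedSymbol a (HighLowOutput a L L₁ L₂) p q ^ 2 ≤
      ENNReal.ofReal (2048 * (L ^ smoothingExponent a * L₁ * L₂)) := by
  refine (lintegral_le_of_le_iverson_shifted_strips ha ha1 (C := 4) (η := -p.1) (c := p.2)
    (by norm_num) hL hL₁ hL₂ fun q => restrictedSymbol_sq_le ?_).trans_eq (by norm_num)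
  rintro ⟨hpq, hq, hp, hmod₁, hmod₂⟩
  rw [abs_neg]
  refine ⟨mul_le_of_le_one_right (by positivity) (abs_rpow_neg_le_one ha hq),
    ⟨by linarith, hp⟩, hpq, hmod₁, ?_⟩
  rwa [← sub_eq_add_neg, ← neg_sub p.1, disp_neg, ← abs_neg,
    show -(q.2 - (-disp a (p.1 - q.1) + p.2)) = p.2 - q.2 - disp a (p.1 - q.1) by ring]

theorem lintegral_restrictedSymbol_highLowInput_sq_le (ha : 0 < a) (ha1 : a < 1) (hL : 1 ≤ L)
    (hL₁ : 0 < L₁) (r : ℝ × ℝ) :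
    ∫⁻ q, restrictedSymbol a (HighLowInput a L L₁ L₂) (r + q) q ^ 2 ≤
      ENNReal.ofReal (8192 * (L ^ smoothingExponent a * L₁ * L₂)) := by
  by_cases hLL : L ≤ L₂
  swap
  · simp only [restrictedSymbol_sq, HighLowInput, hLL, false_and, and_false,
      iverson_false not_false, mul_zero, lintegral_zero, zero_le]
  refine (lintegral_le_of_le_iverson_shifted_strips ha ha1 (C := 16) (η := r.1) (c := -r.2)
    (by norm_num) (hL.trans hLL) hL₁ (by linarith : 0 < L) fun q => restrictedSymbol_sq_le ?_).trans
      (ENNReal.ofReal_le_ofReal ?_)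
  · rintro ⟨hrq, hq, hr, -, hmod₁, hmod⟩
    rw [add_sub_cancel_right] at hrq hr
    have hrq' : |(r + q).1| ≤ 2 * |r.1| := (abs_add_le r.1 q.1).trans (by linarith)
    refine ⟨?_, ⟨by linarith, hr⟩, hrq, hmod₁, ?_⟩
    · calc 4 * |(r + q).1| ^ 2 * |q.1| ^ (-(1 + a)) ≤ 4 * (2 * |r.1|) ^ 2 * 1 := by
            gcongr
            exact abs_rpow_neg_le_one ha hq
        _ = 16 * |r.1| ^ 2 := by ring
    · rwa [show q.2 - (disp a (q.1 + r.1) + -r.2) = r.2 + q.2 - disp a (r.1 + q.1) by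
        rw [add_comm q.1]; ring]
  · have := rpow_mul_le_rpow_mul_of_le (smoothingExponent_lt_one ha).le (by positivity) hLL
    calc 512 * 16 * (L₂ ^ smoothingExponent a * L₁ * L)
        = 8192 * (L₂ ^ smoothingExponent a * L) * L₁ := by ring
      _ ≤ 8192 * (L ^ smoothingExponent a * L₂) * L₁ := by gcongr
      _ = 8192 * (L ^ smoothingExponent a * L₁ * L₂) := by ring

end HighLow

section Comparable
variable {a x y M L L₁ L₂ : ℝ}

theorem sq_mul_rpow_neg_le_div (ha : 0 < a) (hx : 0 ≤ x) (hy : 1 ≤ y) (hxy : x ≤ 16 * y)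
    (h : x * y ^ (1 + a) ≤ 48 * M) : 4 * x ^ 2 * y ^ (-(1 + a)) ≤ 3072 * M / y := by
  have hy0 : 0 < y := by linarith
  have hM : 0 ≤ M := by linarith [mul_nonneg hx (Real.rpow_nonneg hy0.le (1 + a))]
  have hyy : y ≤ y ^ (1 + a) := Real.self_le_rpow_of_one_le hy (by linarith)
  have hxM : x ≤ 48 * M / y := by
    rw [le_div_iff₀ hy0]
    exact le_trans (by gcongr) h
  calc 4 * x ^ 2 * y ^ (-(1 + a)) = 4 * (x * x) * (y ^ (1 + a))⁻¹ := by
        rw [Real.rpow_neg hy0.le, sq]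
    _ ≤ 4 * (16 * y * (48 * M / y)) * y⁻¹ := by gcongr
    _ = 3072 * M / y := by field_simp; ring

theorem sq_mul_rpow_neg_le_rpow (ha : 0 < a) (ha1 : a < 1) (hx : 0 < x) (hy : 0 < y)
    (hM : 0 ≤ M) (hxy : x ≤ 16 * y) (h : x * y ^ (1 + a) ≤ 48 * M) :
    4 * x ^ 2 * y ^ (-(1 + a)) ≤ 49152 * M ^ smoothingExponent a * y ^ (-(1 + a / 2)) := by
  have hβ := smoothingExponent_pos ha ha1
  have hβ1 := smoothingExponent_lt_one ha
  have hβmul := smoothingExponent_mul ha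
  set β := smoothingExponent a
  have by_frequency : x ^ (2 - β) ≤ 256 * y ^ (2 - β) := by
    calc x ^ (2 - β) ≤ (16 * y) ^ (2 - β) := by gcongr; linarith
      _ = 16 ^ (2 - β) * y ^ (2 - β) := Real.mul_rpow (by norm_num) hy.le
      _ ≤ 16 ^ (2 : ℝ) * y ^ (2 - β) := by
          gcongr
          · norm_num
          · linarith
      _ = 256 * y ^ (2 - β) := by norm_num
  have by_modulation : x ^ β ≤ 48 * M ^ β * y ^ (-((1 + a) * β)) := by
    have hxM : x ≤ 48 * M * y ^ (-(1 + a)) := by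
      rwa [Real.rpow_neg hy.le, ← div_eq_mul_inv, le_div_iff₀ (by positivity)]
    calc x ^ β ≤ (48 * M * y ^ (-(1 + a))) ^ β := by gcongr
      _ = 48 ^ β * M ^ β * y ^ (-((1 + a) * β)) := by
          rw [Real.mul_rpow (by positivity) (by positivity), Real.mul_rpow (by norm_num) hM,
            ← Real.rpow_mul hy.le, neg_mul]
      _ ≤ 48 * M ^ β * y ^ (-((1 + a) * β)) := by
          gcongr
          exact Real.rpow_le_self_of_one_le (by norm_num) hβ1.le
  calc 4 * x ^ 2 * y ^ (-(1 + a)) = 4 * (x ^ (2 - β) * x ^ β) * y ^ (-(1 + a)) := by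
        rw [← Real.rpow_add hx, sub_add_cancel, Real.rpow_two]
    _ ≤ 4 * (256 * y ^ (2 - β) * (48 * M ^ β * y ^ (-((1 + a) * β)))) * y ^ (-(1 + a)) := by gcongr
    _ = 49152 * M ^ β * (y ^ (2 - β) * y ^ (-((1 + a) * β)) * y ^ (-(1 + a))) := by ring
    _ = 49152 * M ^ β * y ^ (-(1 + a / 2)) := by
        rw [← Real.rpow_add hy, ← Real.rpow_add hy]
        congr 2
        linarith

theorem rpow_neg_le_one_add_rpow_neg (ha : 0 < a) (ha1 : a < 1) (hy : 1 ≤ y) :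
    y ^ (-(1 + a / 2)) ≤ 4 * (1 + y) ^ (-(1 + a / 2)) := by
  calc y ^ (-(1 + a / 2)) ≤ (1 / 2 * (1 + y)) ^ (-(1 + a / 2)) :=
        Real.rpow_le_rpow_of_nonpos (by positivity) (by linarith) (by linarith)
    _ = 2 ^ (1 + a / 2) * (1 + y) ^ (-(1 + a / 2)) := by
        rw [Real.mul_rpow (by norm_num) (by linarith), one_div,
          Real.inv_rpow (by norm_num), Real.rpow_neg (by norm_num), inv_inv]
    _ ≤ 2 ^ (2 : ℝ) * (1 + y) ^ (-(1 + a / 2)) := by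
        gcongr
        · norm_num
        · linarith
    _ = 4 * (1 + y) ^ (-(1 + a / 2)) := by norm_num

/-- The mass of the integrable majorant of the symbol in the comparable interactions. -/
def tailConst (a : ℝ) : ℝ≥0∞ := ∫⁻ x : ℝ, ENNReal.ofReal ((1 + |x|) ^ (-(1 + a / 2)))

theorem tailConst_lt_top (ha : 0 < a) : tailConst a < ⊤ :=
  finite_integral_one_add_norm (E := ℝ) (by simpa)

theorem lintegral_restrictedSymbol_comparableOutput_sq_le (ha : 0 < a) (ha1 : a < 1) (hL : 0 ≤ L)
    (p : ℝ × ℝ) :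
    ∫⁻ q, restrictedSymbol a (ComparableOutput a L L₁) p q ^ 2 ≤
      tailConst a * ENNReal.ofReal (786432 * (L ^ smoothingExponent a * L₁)) := by
  set β := smoothingExponent a
  calc ∫⁻ q, restrictedSymbol a (ComparableOutput a L L₁) p q ^ 2
      ≤ ∫⁻ q : ℝ × ℝ, ENNReal.ofReal (196608 * L ^ β) *
          (ENNReal.ofReal ((1 + |q.1|) ^ (-(1 + a / 2))) *
            iverson (|q.2 - disp a q.1| ≤ 2 * L₁)) := by
        refine lintegral_mono fun q => ?_
        rw [← mul_assoc, ← ENNReal.ofReal_mul (by positivity)]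
        refine restrictedSymbol_sq_le fun ⟨hq, hpq, hmod, hmod₁⟩ => ⟨?_, hmod₁⟩
        rcases (abs_nonneg p.1).eq_or_lt with hp | hp
        · rw [← hp, zero_pow two_ne_zero, mul_zero, zero_mul]
          positivity
        calc 4 * |p.1| ^ 2 * |q.1| ^ (-(1 + a)) ≤ 49152 * L ^ β * |q.1| ^ (-(1 + a / 2)) :=
              sq_mul_rpow_neg_le_rpow ha ha1 hp (by linarith) hL hpq hmod
          _ ≤ 49152 * L ^ β * (4 * (1 + |q.1|) ^ (-(1 + a / 2))) := by
              gcongr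
              exact rpow_neg_le_one_add_rpow_neg ha ha1 hq
          _ = 196608 * L ^ β * (1 + |q.1|) ^ (-(1 + a / 2)) := by ring
    _ = ENNReal.ofReal (196608 * L ^ β) * (ENNReal.ofReal (2 * (2 * L₁)) * tailConst a) := by
        rw [lintegral_const_mul' _ _ ENNReal.ofReal_ne_top, lintegral_mul_iverson_strip
          (φ := fun x => ENNReal.ofReal ((1 + |x|) ^ (-(1 + a / 2))))
          (continuous_disp ha).measurable (by fun_prop), tailConst]
    _ = tailConst a * ENNReal.ofReal (786432 * (L ^ β * L₁)) := by
        rw [← mul_assoc, ← ENNReal.ofReal_mul (by positivity), mul_comm]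
        ring_nf

theorem lintegral_le_of_le_iverson_strip (ha : 0 < a) {F : ℝ × ℝ → ℝ≥0∞} {N : ℝ} (hL : 0 ≤ L)
    (hM : 0 ≤ M) (hN : 0 ≤ N) (hF : ∀ q, F q ≤ ENNReal.ofReal (24576 * M / N) *
      iverson (|q.1| ≤ N ∧ |q.2 - disp a q.1| ≤ 2 * L)) :
    ∫⁻ q, F q ≤ ENNReal.ofReal (196608 * (L * M)) := by
  have volume_ball : ∫⁻ x : ℝ, iverson (|x| ≤ N) = ENNReal.ofReal (2 * N) := by
    rw [lintegral_iverson (measurableSet_le (by fun_prop) (by fun_prop)),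
      ← Real.volume_closedBall 0]
    simp only [Metric.closedBall, dist_zero_right, Real.norm_eq_abs]
  refine (lintegral_mono hF).trans ?_
  simp only [← iverson_mul]
  rw [lintegral_const_mul' _ _ ENNReal.ofReal_ne_top, lintegral_mul_iverson_strip
    (φ := fun x => iverson (|x| ≤ N)) (continuous_disp ha).measurable
    (measurable_iverson (measurableSet_le (by fun_prop) (by fun_prop))), volume_ball,
    ← ENNReal.ofReal_mul (by positivity), ← ENNReal.ofReal_mul (by positivity)]
  refine ENNReal.ofReal_le_ofReal ?_
  calc 24576 * M / N * (2 * (2 * L) * (2 * N)) = 196608 * (L * M) * (N / N) := by ring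
    _ ≤ 196608 * (L * M) := mul_le_of_le_one_right (by positivity) (div_self_le_one N)

theorem lintegral_restrictedSymbol_comparableSnd_sq_le (ha : 0 < a) (hL₁ : 0 ≤ L₁)
    (hL₂ : 0 ≤ L₂) (r : ℝ × ℝ) :
    ∫⁻ q, restrictedSymbol a (ComparableSnd a L₁ L₂) (r + q) q ^ 2 ≤
      ENNReal.ofReal (196608 * (L₁ * L₂)) := by
  refine lintegral_le_of_le_iverson_strip ha hL₁ hL₂ (abs_nonneg r.1) fun q =>
    restrictedSymbol_sq_le ?_
  rintro ⟨hq, hqr, hrq, hmod, hmod₁⟩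
  rw [add_sub_cancel_right] at hqr hrq hmod
  have htri : |(r + q).1| ≤ |r.1| + |q.1| := abs_add_le r.1 q.1
  refine ⟨?_, hqr, hmod₁⟩
  calc 4 * |(r + q).1| ^ 2 * |q.1| ^ (-(1 + a)) ≤ 3072 * L₂ / |q.1| :=
        sq_mul_rpow_neg_le_div ha (abs_nonneg _) hq (by linarith)
          (le_trans (by gcongr) hmod)
    _ ≤ 3072 * L₂ / (|r.1| / 8) := by
        gcongr <;> linarith
    _ = 24576 * L₂ / |r.1| := by ring

theorem lintegral_restrictedSymbol_comparableFst_sq_le (ha : 0 < a) (hL₁ : 0 ≤ L₁)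
    (hL₂ : 0 ≤ L₂) (q : ℝ × ℝ) :
    ∫⁻ r, restrictedSymbol a (ComparableFst a L₁ L₂) (q + r) q ^ 2 ≤
      ENNReal.ofReal (196608 * (L₁ * L₂)) := by
  rw [mul_comm L₁]
  refine lintegral_le_of_le_iverson_strip ha hL₂ hL₁ (N := 8 * |q.1|) (by positivity) fun r =>
    restrictedSymbol_sq_le ?_
  rintro ⟨hq, hqr, hrq, hmod, hmod₂⟩
  rw [add_sub_cancel_left] at hqr hrq hmod hmod₂
  have htri : |(q + r).1| ≤ |q.1| + |r.1| := abs_add_le q.1 r.1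
  refine ⟨?_, hrq, hmod₂⟩
  calc 4 * |(q + r).1| ^ 2 * |q.1| ^ (-(1 + a)) ≤ 3072 * L₁ / |q.1| :=
        sq_mul_rpow_neg_le_div ha (abs_nonneg _) hq (by linarith)
          (le_trans (by gcongr) hmod)
    _ = 24576 * L₁ / (8 * |q.1|) := by ring

end Comparable

section DyadicEstimate
variable {a L L₁ L₂ : ℝ} {f g : ℝ × ℝ → ℝ≥0∞}

theorem eLpNorm_bilinOp_le_add {K K₁ K₂ : ℝ × ℝ → ℝ × ℝ → ℝ≥0∞}
    (hK₁ : Measurable (Function.uncurry K₁)) (hK₂ : Measurable (Function.uncurry K₂))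
    (hf : Measurable f) (hg : Measurable g) (hK : ∀ p q, K p q ≤ K₁ p q + K₂ p q) :
    eLpNorm (bilinOp K f g volume) 2 ≤
      eLpNorm (bilinOp K₁ f g volume) 2 + eLpNorm (bilinOp K₂ f g volume) 2 := by
  refine (eLpNorm_mono_enorm fun p => ?_).trans (eLpNorm_add_le
    (measurable_bilinOp hK₁ hf hg).aestronglyMeasurable
    (measurable_bilinOp hK₂ hf hg).aestronglyMeasurable one_le_two)
  simp only [enorm_eq_self, Pi.add_apply, bilinOp]
  rw [← lintegral_add_left (by fun_prop)]
  refine lintegral_mono fun q => ?_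
  rw [← add_mul]
  gcongr
  exact hK p q

theorem eLpNorm_bilinOp_restrictedSymbol_le_add {P Q R : ℝ × ℝ → ℝ × ℝ → Prop}
    (hQ : MeasurableSet {z : (ℝ × ℝ) × (ℝ × ℝ) | Q z.1 z.2})
    (hR : MeasurableSet {z : (ℝ × ℝ) × (ℝ × ℝ) | R z.1 z.2})
    (hf : Measurable f) (hg : Measurable g) (hP : ∀ p q, P p q → Q p q ∨ R p q) :
    eLpNorm (bilinOp (restrictedSymbol a P) f g volume) 2 ≤
      eLpNorm (bilinOp (restrictedSymbol a Q) f g volume) 2 +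
        eLpNorm (bilinOp (restrictedSymbol a R) f g volume) 2 := by
  refine eLpNorm_bilinOp_le_add (measurable_restrictedSymbol hQ) (measurable_restrictedSymbol hR)
    hf hg fun p q => ?_
  unfold restrictedSymbol
  rw [← mul_add]
  gcongr
  exact (iverson_mono (hP p q)).trans (iverson_or_le _ _)

/-- The square of the constant in the five pieces of the dyadic bilinear estimate. -/
def dyadicConst (a : ℝ) : ℝ≥0∞ := ENNReal.ofReal 786432 * (1 + tailConst a)

theorem dyadicConst_lt_top (ha : 0 < a) : dyadicConst a < ⊤ := by
  have := tailConst_lt_top ha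
  unfold dyadicConst
  finiteness

/-- The `L²` bound for one of the five pieces of the dyadic bilinear estimate. -/
def dyadicBound (a L L₁ L₂ : ℝ) : ℝ≥0∞ :=
  (dyadicConst a * ENNReal.ofReal (L ^ smoothingExponent a * L₁ * L₂)) ^ (1 / 2 : ℝ)

theorem dyadicBound_sq : dyadicBound a L L₁ L₂ ^ 2 =
    dyadicConst a * ENNReal.ofReal (L ^ smoothingExponent a * L₁ * L₂) := by
  rw [dyadicBound, rpow_half_sq]

theorem ofReal_le_dyadicBound_sq {x : ℝ}
    (h : x ≤ 786432 * (L ^ smoothingExponent a * L₁ * L₂)) :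
    ENNReal.ofReal x ≤ dyadicBound a L L₁ L₂ ^ 2 := by
  refine (ENNReal.ofReal_le_ofReal h).trans ?_
  rw [dyadicBound_sq, dyadicConst, ENNReal.ofReal_mul (by norm_num)]
  gcongr
  exact le_mul_of_one_le_right' le_self_add

theorem tailConst_mul_le_dyadicBound_sq (hL : 0 ≤ L) (hL₁ : 0 ≤ L₁) (hL₂ : 1 ≤ L₂) :
    tailConst a * ENNReal.ofReal (786432 * (L ^ smoothingExponent a * L₁)) ≤
      dyadicBound a L L₁ L₂ ^ 2 := by
  rw [dyadicBound_sq, dyadicConst, ENNReal.ofReal_mul (by norm_num), mul_left_comm, ← mul_assoc]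
  refine mul_le_mul' (mul_le_mul_right le_add_self _) (ENNReal.ofReal_le_ofReal ?_)
  exact le_mul_of_one_le_right (by positivity) hL₂

theorem eLpNorm_bilinOp_highLow_le (ha : 0 < a) (ha1 : a < 1) (hL : 1 ≤ L) (hL₁ : 0 < L₁)
    (hL₂ : 0 < L₂) (hf : Measurable f) (hg : Measurable g) :
    eLpNorm (bilinOp (restrictedSymbol a fun p q =>
        HighLowOutput a L L₁ L₂ p q ∨ HighLowInput a L L₁ L₂ p q) f g volume) 2 ≤
      2 * dyadicBound a L L₁ L₂ * (eLpNorm f 2 * eLpNorm g 2) := by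
  have mOutput := measurableSet_highLowOutput (L := L) (L₁ := L₁) (L₂ := L₂) ha
  have mInput := measurableSet_highLowInput (L := L) (L₁ := L₁) (L₂ := L₂) ha
  refine (eLpNorm_bilinOp_restrictedSymbol_le_add mOutput mInput hf hg fun _ _ => id).trans ?_
  rw [two_mul, add_mul]
  refine add_le_add (eLpNorm_bilinOp_le_of_output (measurable_restrictedSymbol mOutput) hf hg
    fun p => eLpNorm_two_le_iff.2 ?_) (eLpNorm_bilinOp_le_of_snd
      (measurable_restrictedSymbol mInput) hf hg fun r => eLpNorm_two_le_iff.2 ?_)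
  · exact (lintegral_restrictedSymbol_highLowOutput_sq_le ha ha1 hL hL₁ hL₂ p).trans
      (ofReal_le_dyadicBound_sq (by gcongr; norm_num))
  · exact (lintegral_restrictedSymbol_highLowInput_sq_le ha ha1 hL hL₁ r).trans
      (ofReal_le_dyadicBound_sq (by gcongr; norm_num))

theorem eLpNorm_bilinOp_comparable_le (ha : 0 < a) (ha1 : a < 1) (hL : 1 ≤ L) (hL₁ : 0 < L₁)
    (hL₂ : 1 ≤ L₂) (hf : Measurable f) (hg : Measurable g) :
    eLpNorm (bilinOp (restrictedSymbol a fun p q =>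
        ComparableOutput a L L₁ p q ∨ ComparableSnd a L₁ L₂ p q ∨ ComparableFst a L₁ L₂ p q)
        f g volume) 2 ≤ 3 * dyadicBound a L L₁ L₂ * (eLpNorm f 2 * eLpNorm g 2) := by
  have hL₁L₂ : 196608 * (L₁ * L₂) ≤ 786432 * (L ^ smoothingExponent a * L₁ * L₂) := by
    have hLβ := Real.one_le_rpow hL (smoothingExponent_pos ha ha1).le
    calc 196608 * (L₁ * L₂) ≤ 786432 * (L₁ * L₂) := by gcongr; norm_num
      _ ≤ 786432 * (L ^ smoothingExponent a * (L₁ * L₂)) :=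
          mul_le_mul_of_nonneg_left (le_mul_of_one_le_left (by positivity) hLβ) (by norm_num)
      _ = 786432 * (L ^ smoothingExponent a * L₁ * L₂) := by ring
  have mOutput := measurableSet_comparableOutput (L := L) (L₁ := L₁) ha
  have mSnd := measurableSet_comparableSnd (L₁ := L₁) (L₂ := L₂) ha
  have mFst := measurableSet_comparableFst (L₁ := L₁) (L₂ := L₂) ha
  refine ((eLpNorm_bilinOp_restrictedSymbol_le_add mOutput
    (R := fun p q => ComparableSnd a L₁ L₂ p q ∨ ComparableFst a L₁ L₂ p q) (mSnd.union mFst) hf hg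
    fun _ _ => id).trans (add_le_add_right
      (eLpNorm_bilinOp_restrictedSymbol_le_add mSnd mFst hf hg fun _ _ => id) _)).trans ?_
  rw [show (3 : ℝ≥0∞) = 1 + (1 + 1) by norm_num, add_mul, add_mul, add_mul, add_mul, one_mul]
  refine add_le_add (eLpNorm_bilinOp_le_of_output (measurable_restrictedSymbol mOutput) hf hg
    fun p => eLpNorm_two_le_iff.2 ?_) (add_le_add (eLpNorm_bilinOp_le_of_snd
      (measurable_restrictedSymbol mSnd) hf hg fun r => eLpNorm_two_le_iff.2 ?_)
      (eLpNorm_bilinOp_le_of_fst (measurable_restrictedSymbol mFst) hf hg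
        fun q => eLpNorm_two_le_iff.2 ?_))
  · exact (lintegral_restrictedSymbol_comparableOutput_sq_le ha ha1 (by positivity) p).trans
      (tailConst_mul_le_dyadicBound_sq (by positivity) hL₁.le hL₂)
  · exact (lintegral_restrictedSymbol_comparableSnd_sq_le ha hL₁.le (by positivity) r).trans
      (ofReal_le_dyadicBound_sq hL₁L₂)
  · exact (lintegral_restrictedSymbol_comparableFst_sq_le ha hL₁.le (by positivity) q).trans
      (ofReal_le_dyadicBound_sq hL₁L₂)

theorem eLpNorm_bilinOp_nonresonantBlock_le (ha : 0 < a) (ha1 : a < 1) (hL : 1 ≤ L)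
    (hL₁ : 0 < L₁) (hL₂ : 1 ≤ L₂) (hf : Measurable f) (hg : Measurable g) :
    eLpNorm (bilinOp (restrictedSymbol a (NonresonantBlock a L L₁ L₂)) f g volume) 2 ≤
      5 * dyadicBound a L L₁ L₂ * (eLpNorm f 2 * eLpNorm g 2) := by
  have split := eLpNorm_bilinOp_restrictedSymbol_le_add (a := a)
    (Q := fun p q => HighLowOutput a L L₁ L₂ p q ∨ HighLowInput a L L₁ L₂ p q)
    (R := fun p q =>
      ComparableOutput a L L₁ p q ∨ ComparableSnd a L₁ L₂ p q ∨ ComparableFst a L₁ L₂ p q)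
    ((measurableSet_highLowOutput ha).union (measurableSet_highLowInput ha))
    ((measurableSet_comparableOutput ha).union
      ((measurableSet_comparableSnd ha).union (measurableSet_comparableFst ha)))
    hf hg fun _ _ h => NonresonantBlock.cases ha ha1 h
  refine (split.trans (add_le_add
    (eLpNorm_bilinOp_highLow_le ha ha1 hL hL₁ (by positivity) hf hg)
    (eLpNorm_bilinOp_comparable_le ha ha1 hL hL₁ hL₂ hf hg))).trans_eq ?_
  ring

end DyadicEstimate

/-! ### Weights and Fourier-side norms -/

/-- The weight `(1 + |ξ|) ^ s`, as an extended nonnegative real. -/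
def bracket (s ξ : ℝ) : ℝ≥0∞ := ENNReal.ofReal ((1 + |ξ|) ^ s)

theorem bracket_mul_bracket_neg (s ξ : ℝ) : bracket s ξ * bracket (-s) ξ = 1 := by
  rw [bracket, bracket, ← ENNReal.ofReal_mul (by positivity), ← Real.rpow_add (by positivity),
    add_neg_cancel, Real.rpow_zero, ENNReal.ofReal_one]

theorem one_le_bracket {s : ℝ} (hs : 0 ≤ s) (ξ : ℝ) : 1 ≤ bracket s ξ :=
  ENNReal.one_le_ofReal.2 (Real.one_le_rpow (le_add_of_nonneg_right (abs_nonneg ξ)) hs)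

theorem measurable_bracket (s : ℝ) : Measurable (bracket s) := by unfold bracket; fun_prop

/-- The dyadic weight `2 ^ (j c)`. -/
def dyadicWeight (c : ℝ) (j : ℕ) : ℝ≥0∞ := ENNReal.ofReal (2 ^ ((j : ℝ) * c))

theorem dyadicWeight_mul (c d : ℝ) (j : ℕ) :
    dyadicWeight c j * dyadicWeight d j = dyadicWeight (c + d) j := by
  unfold dyadicWeight
  rw [← ENNReal.ofReal_mul (by positivity), ← Real.rpow_add (by positivity), mul_add]

theorem dyadicWeight_half_sq (c : ℝ) (j : ℕ) : dyadicWeight (c / 2) j ^ 2 = dyadicWeight c j := by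
  rw [sq, dyadicWeight_mul, add_halves]

theorem ofReal_rpow_two_rpow (c : ℝ) (j : ℕ) :
    ENNReal.ofReal ((2 ^ (j : ℝ)) ^ c) = dyadicWeight c j := by
  rw [← Real.rpow_mul zero_le_two, dyadicWeight]

theorem ofReal_two_rpow (j : ℕ) : ENNReal.ofReal (2 ^ (j : ℝ)) = dyadicWeight 1 j := by
  rw [← ofReal_rpow_two_rpow, Real.rpow_one]

/-- The geometric series `∑ 2 ^ (-j ε)`. -/
def geomSum (ε : ℝ) : ℝ≥0∞ := ∑' j, dyadicWeight (-ε) j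

theorem geomSum_lt_top {ε : ℝ} (hε : 0 < ε) : geomSum ε < ⊤ := by
  have geometric (j : ℕ) : dyadicWeight (-ε) j = ENNReal.ofReal (2 ^ (-ε)) ^ j := by
    rw [dyadicWeight, ← ENNReal.ofReal_pow (by positivity), ← Real.rpow_natCast,
      ← Real.rpow_mul zero_le_two, mul_comm]
  have ratio : ENNReal.ofReal (2 ^ (-ε)) < 1 := ENNReal.ofReal_lt_one.2
    (Real.rpow_lt_one_of_one_lt_of_neg one_lt_two (neg_neg_of_pos hε))
  simp only [geomSum, geometric, ENNReal.tsum_geometric]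
  exact ENNReal.inv_lt_top.2 (tsub_pos_of_lt ratio)

/-- Square roots of a dyadic partition of unity in the modulation `λ - ω(ξ)`. -/
structure ModulationCutoff (a : ℝ) (w : ℕ → ℝ × ℝ → ℝ≥0∞) : Prop where
  measurable (j : ℕ) : Measurable (w j)
  le_iverson (j : ℕ) (p : ℝ × ℝ) : w j p ≤ iverson (|p.2 - disp a p.1| ≤ 2 * 2 ^ (j : ℝ))
  tsum_sq (p : ℝ × ℝ) : ∑' j, w j p ^ 2 = 1

namespace ModulationCutoff
variable {a : ℝ} {w : ℕ → ℝ × ℝ → ℝ≥0∞}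

theorem le_one (hw : ModulationCutoff a w) (j : ℕ) (p : ℝ × ℝ) : w j p ≤ 1 :=
  (hw.le_iverson j p).trans (iverson_le_one _)

theorem iverson_mul_self (hw : ModulationCutoff a w) (j : ℕ) (p : ℝ × ℝ) :
    iverson (|p.2 - disp a p.1| ≤ 2 * 2 ^ (j : ℝ)) * w j p = w j p := by
  by_cases h : |p.2 - disp a p.1| ≤ 2 * 2 ^ (j : ℝ)
  · rw [iverson_true h, one_mul]
  · have := hw.le_iverson j p
    rw [iverson_false h, nonpos_iff_eq_zero] at this
    rw [this, mul_zero]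

theorem le_tsum_mul (hw : ModulationCutoff a w) (f : ℝ × ℝ → ℝ≥0∞) (p : ℝ × ℝ) :
    f p ≤ ∑' j, w j p * f p := by
  rw [ENNReal.tsum_mul_right]
  refine le_mul_of_one_le_left' ?_
  rw [← hw.tsum_sq p]
  refine ENNReal.tsum_le_tsum fun j => ?_
  rw [sq]
  exact mul_le_of_le_one_right' (hw.le_one j p)

end ModulationCutoff

/-- The part of `f` of modulation about `2 ^ j`, weighted by `(1 + |ξ|) ^ s`. -/
def modulationPiece (w : ℕ → ℝ × ℝ → ℝ≥0∞) (s : ℝ) (f : ℝ × ℝ → ℝ≥0∞) (j : ℕ) (p : ℝ × ℝ) :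
    ℝ≥0∞ :=
  w j p * (bracket s p.1 * f p)

/-- The `X^c_s` norm of a function `u` in terms of `f = |û|`. The cutoffs `w` are square roots of
the `χ_j`, since these occur linearly inside the `L²` integrals. -/
def eXnorm (w : ℕ → ℝ × ℝ → ℝ≥0∞) (c s : ℝ) (f : ℝ × ℝ → ℝ≥0∞) : ℝ≥0∞ :=
  ∑' j, dyadicWeight c j * eLpNorm (modulationPiece w s f j) 2

/-- The output `|ξ| ∫ f(q) g(p - q) dq` of the product with a derivative, at `p = (ξ, λ)`, with the
integral restricted to the `q` such that `Q p q`. -/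
def derivProduct (Q : ℝ × ℝ → ℝ × ℝ → Prop) (f g : ℝ × ℝ → ℝ≥0∞) (p : ℝ × ℝ) : ℝ≥0∞ :=
  ENNReal.ofReal |p.1| * bilinOp (fun p q => iverson (Q p q)) f g volume p

section FourierSideNorm
variable {a b γ s : ℝ} {w : ℕ → ℝ × ℝ → ℝ≥0∞} {f g : ℝ × ℝ → ℝ≥0∞}

theorem measurable_modulationPiece (hw : ModulationCutoff a w) (hf : Measurable f) (j : ℕ) :
    Measurable (modulationPiece w s f j) := by
  have := hw.measurable j
  have := measurable_bracket s
  unfold modulationPiece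
  fun_prop

theorem eXnorm_neg_le_geomSum {C : ℝ≥0∞}
    (h : ∀ j, eLpNorm (modulationPiece w s f j) 2 ≤ C * dyadicWeight γ j) :
    eXnorm w (-b) s f ≤ C * geomSum (b - γ) := by
  have block (j : ℕ) : dyadicWeight (-b) j * eLpNorm (modulationPiece w s f j) 2 ≤
      C * dyadicWeight (-(b - γ)) j := by
    rw [neg_sub, sub_eq_neg_add, ← dyadicWeight_mul, mul_left_comm]
    gcongr
    exact h j
  rw [geomSum, ← ENNReal.tsum_mul_left]
  exact ENNReal.tsum_le_tsum block

theorem eXnorm_mono (hle : ∀ p, f p ≤ g p) (c : ℝ) : eXnorm w c s f ≤ eXnorm w c s g := by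
  refine ENNReal.tsum_le_tsum fun j => mul_le_mul_right (eLpNorm_mono_enorm fun p => ?_) _
  simp only [enorm_eq_self, modulationPiece]
  gcongr
  exact hle p

theorem eXnorm_le_add (hw : ModulationCutoff a w) (hf : Measurable f) (hg : Measurable g)
    {h : ℝ × ℝ → ℝ≥0∞} (hle : ∀ p, h p ≤ f p + g p) (c : ℝ) :
    eXnorm w c s h ≤ eXnorm w c s f + eXnorm w c s g := by
  unfold eXnorm
  rw [← ENNReal.tsum_add]
  refine ENNReal.tsum_le_tsum fun j => ?_
  rw [← mul_add]
  gcongr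
  refine (eLpNorm_mono_enorm fun p => ?_).trans (eLpNorm_add_le
    (measurable_modulationPiece hw hf j).aestronglyMeasurable
    (measurable_modulationPiece hw hg j).aestronglyMeasurable one_le_two)
  simp only [enorm_eq_self, Pi.add_apply, modulationPiece]
  rw [← mul_add, ← mul_add]
  gcongr
  exact hle p

theorem measurable_derivProduct {Q : ℝ × ℝ → ℝ × ℝ → Prop}
    (hQ : MeasurableSet {z : (ℝ × ℝ) × (ℝ × ℝ) | Q z.1 z.2}) (hf : Measurable f)
    (hg : Measurable g) : Measurable (derivProduct Q f g) := by
  have := measurable_bilinOp (μ := volume) (K := fun p q => iverson (Q p q))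
    (measurable_iverson hQ) hf hg
  unfold derivProduct
  fun_prop

theorem derivProduct_le_add {P Q R : ℝ × ℝ → ℝ × ℝ → Prop}
    (hQ : MeasurableSet {z : (ℝ × ℝ) × (ℝ × ℝ) | Q z.1 z.2}) (hf : Measurable f)
    (hg : Measurable g) {p : ℝ × ℝ} (h : ∀ q, P p q → Q p q ∨ R p q) :
    derivProduct P f g p ≤ derivProduct Q f g p + derivProduct R f g p := by
  have : Measurable fun q => iverson (Q p q) :=
    (measurable_iverson hQ).comp (measurable_prodMk_left (x := p))
  unfold derivProduct bilinOp
  rw [← mul_add, ← lintegral_add_left (by fun_prop)]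
  gcongr with q
  rw [← add_mul]
  gcongr
  exact (iverson_mono (h q)).trans (iverson_or_le _ _)

end FourierSideNorm

/-! ### The nonresonant interactions -/

section Nonresonant
variable {a b : ℝ} {w : ℕ → ℝ × ℝ → ℝ≥0∞} {f g : ℝ × ℝ → ℝ≥0∞}

theorem rpow_two_mul_le {s x : ℝ} (hs : s ≤ 1) (hx : 0 ≤ x) : (2 * x) ^ s ≤ 2 * x ^ s := by
  rw [Real.mul_rpow zero_le_two hx]
  gcongr
  exact (Real.rpow_le_rpow_of_exponent_le one_le_two hs).trans_eq (Real.rpow_one 2)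

theorem bracket_le_of_abs_le {s x y : ℝ} (hs : 0 ≤ s) (hs1 : s ≤ 1) (h : |x| ≤ 2 * |y|) :
    bracket s x ≤ 2 * bracket s y := by
  rw [bracket, bracket, ← ENNReal.ofReal_ofNat 2, ← ENNReal.ofReal_mul zero_le_two]
  refine ENNReal.ofReal_le_ofReal (le_trans ?_ (rpow_two_mul_le hs1 (by positivity)))
  exact Real.rpow_le_rpow (by positivity) (by linarith) hs

theorem abs_fst_le_two_mul {p q : ℝ × ℝ} (h : |q.1| ≤ |(p - q).1|) :
    |p.1| ≤ 2 * |(p - q).1| := by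
  have triangle := abs_add_le q.1 (p.1 - q.1)
  rw [add_sub_cancel] at triangle
  rw [Prod.fst_sub] at h ⊢
  linarith

theorem one_le_ofReal_rpow_neg_mul_bracket {s x : ℝ} (hs : 0 ≤ s) (hx : x ≠ 0) :
    1 ≤ ENNReal.ofReal (|x| ^ (-s)) * bracket s x := by
  have := abs_pos.2 hx
  rw [bracket, ← ENNReal.ofReal_mul (by positivity), ENNReal.one_le_ofReal, Real.rpow_neg this.le,
    inv_mul_eq_div, one_le_div (by positivity)]
  gcongr
  linarith

theorem bracket_mul_iverson_nonresonant_le (ha : 0 < a) (ha1 : a < 1) (p q : ℝ × ℝ) :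
    bracket ((1 + a) / 2) p.1 * (ENNReal.ofReal |p.1| * iverson (Nonresonant a p q)) ≤
      restrictedSymbol a (Nonresonant a) p q *
        (bracket ((1 + a) / 2) q.1 * bracket ((1 + a) / 2) (p - q).1) := by
  by_cases h : Nonresonant a p q
  swap
  · simp only [iverson_false h, mul_zero, zero_le]
  have low : q.1 ≠ 0 := abs_pos.1 (one_pos.trans_le h.1)
  rw [restrictedSymbol, iverson_true h, mul_one, mul_one, ENNReal.ofReal_mul (by positivity),
    ENNReal.ofReal_mul zero_le_two, ENNReal.ofReal_ofNat]
  calc bracket ((1 + a) / 2) p.1 * ENNReal.ofReal |p.1|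
      ≤ (2 * bracket ((1 + a) / 2) (p - q).1) * ENNReal.ofReal |p.1| * 1 := by
        rw [mul_one]
        gcongr
        exact bracket_le_of_abs_le (by linarith) (by linarith) (abs_fst_le_two_mul h.2.1)
    _ ≤ (2 * bracket ((1 + a) / 2) (p - q).1) * ENNReal.ofReal |p.1| *
          (ENNReal.ofReal (|q.1| ^ (-((1 + a) / 2))) * bracket ((1 + a) / 2) q.1) := by
        gcongr
        exact one_le_ofReal_rpow_neg_mul_bracket (by linarith) low
    _ = _ := by ring

theorem mul_restrictedSymbol_nonresonant_le (hw : ModulationCutoff a w) (j j₁ j₂ : ℕ)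
    (p q : ℝ × ℝ) :
    w j p * (restrictedSymbol a (Nonresonant a) p q * (w j₁ q * w j₂ (p - q))) ≤
      restrictedSymbol a (NonresonantBlock a (2 ^ (j : ℝ)) (2 ^ (j₁ : ℝ)) (2 ^ (j₂ : ℝ))) p q *
        (w j₁ q * w j₂ (p - q)) := by
  unfold restrictedSymbol NonresonantBlock
  conv_lhs => rw [← hw.iverson_mul_self j₁ q, ← hw.iverson_mul_self j₂ (p - q)]
  refine (mul_le_mul_left (hw.le_iverson j p) _).trans_eq ?_
  simp only [← iverson_mul]
  ring

theorem mul_iverson_nonresonant_le_tsum (ha : 0 < a) (ha1 : a < 1) (hw : ModulationCutoff a w)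
    (f g : ℝ × ℝ → ℝ≥0∞) (j : ℕ) (p q : ℝ × ℝ) :
    w j p * bracket ((1 + a) / 2) p.1 * ENNReal.ofReal |p.1| *
        (iverson (Nonresonant a p q) * (f q * g (p - q))) ≤
      ∑' (j₁ : ℕ) (j₂ : ℕ),
        restrictedSymbol a (NonresonantBlock a (2 ^ (j : ℝ)) (2 ^ (j₁ : ℝ)) (2 ^ (j₂ : ℝ))) p q *
          (modulationPiece w ((1 + a) / 2) f j₁ q *
            modulationPiece w ((1 + a) / 2) g j₂ (p - q)) := by
  set s := (1 + a) / 2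
  set σ := restrictedSymbol a (Nonresonant a) p q
  calc w j p * bracket s p.1 * ENNReal.ofReal |p.1| *
        (iverson (Nonresonant a p q) * (f q * g (p - q)))
      = w j p * (bracket s p.1 * (ENNReal.ofReal |p.1| * iverson (Nonresonant a p q))) *
          (f q * g (p - q)) := by ring
    _ ≤ w j p * (σ * (bracket s q.1 * bracket s (p - q).1)) * (f q * g (p - q)) := by
        gcongr w j p * ?_ * _
        exact bracket_mul_iverson_nonresonant_le ha ha1 p q
    _ = w j p * σ * ((bracket s q.1 * f q) * (bracket s (p - q).1 * g (p - q))) := by ring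
    _ ≤ w j p * σ * ((∑' j₁, modulationPiece w s f j₁ q) *
          ∑' j₂, modulationPiece w s g j₂ (p - q)) := by
        gcongr
        · exact hw.le_tsum_mul (fun q => bracket s q.1 * f q) q
        · exact hw.le_tsum_mul (fun q => bracket s q.1 * g q) (p - q)
    _ = ∑' (j₁ : ℕ) (j₂ : ℕ), w j p * σ *
          (modulationPiece w s f j₁ q * modulationPiece w s g j₂ (p - q)) := by
        simp only [ENNReal.tsum_mul_left, ENNReal.tsum_mul_right]
    _ = ∑' (j₁ : ℕ) (j₂ : ℕ), w j p * (σ * (w j₁ q * w j₂ (p - q))) *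
          ((bracket s q.1 * f q) * (bracket s (p - q).1 * g (p - q))) := by
        refine tsum_congr fun j₁ => tsum_congr fun j₂ => ?_
        unfold modulationPiece
        ring
    _ ≤ ∑' (j₁ : ℕ) (j₂ : ℕ),
          restrictedSymbol a (NonresonantBlock a (2 ^ (j : ℝ)) (2 ^ (j₁ : ℝ)) (2 ^ (j₂ : ℝ))) p q *
            (w j₁ q * w j₂ (p - q)) *
              ((bracket s q.1 * f q) * (bracket s (p - q).1 * g (p - q))) :=
        ENNReal.tsum_le_tsum fun j₁ => ENNReal.tsum_le_tsum fun j₂ =>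
          mul_le_mul_left (mul_restrictedSymbol_nonresonant_le hw j j₁ j₂ p q) _
    _ = _ := by
        refine tsum_congr fun j₁ => tsum_congr fun j₂ => ?_
        unfold modulationPiece
        ring

theorem measurableSet_nonresonant (ha : 0 < a) :
    MeasurableSet {z : (ℝ × ℝ) × (ℝ × ℝ) | Nonresonant a z.1 z.2} := by
  have := continuous_disp ha
  simp only [Nonresonant, Set.ofPred_and]
  repeat' first | apply MeasurableSet.inter | apply measurableSet_le
  all_goals fun_prop

theorem measurableSet_nonresonantBlock (ha : 0 < a) (L L₁ L₂ : ℝ) :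
    MeasurableSet {z : (ℝ × ℝ) × (ℝ × ℝ) | NonresonantBlock a L L₁ L₂ z.1 z.2} := by
  have := continuous_disp ha
  simp only [NonresonantBlock, Set.ofPred_and]
  refine (measurableSet_nonresonant ha).inter ?_
  repeat' first | apply MeasurableSet.inter | apply measurableSet_le
  all_goals fun_prop

theorem modulationPiece_derivProduct_nonresonant_le (ha : 0 < a) (ha1 : a < 1)
    (hw : ModulationCutoff a w) (hf : Measurable f) (hg : Measurable g) (j : ℕ) (p : ℝ × ℝ) :
    modulationPiece w ((1 + a) / 2) (derivProduct (Nonresonant a) f g) j p ≤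
      ∑' (j₁ : ℕ) (j₂ : ℕ), bilinOp
        (restrictedSymbol a (NonresonantBlock a (2 ^ (j : ℝ)) (2 ^ (j₁ : ℝ)) (2 ^ (j₂ : ℝ))))
        (modulationPiece w ((1 + a) / 2) f j₁) (modulationPiece w ((1 + a) / 2) g j₂) volume p := by
  rw [modulationPiece, derivProduct, ← mul_assoc, ← mul_assoc]
  refine (lintegral_const_mul_le _ _).trans ((lintegral_mono fun q =>
    mul_iverson_nonresonant_le_tsum ha ha1 hw f g j p q).trans_eq ?_)
  have term (j₁ j₂ : ℕ) : Measurable fun q =>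
      restrictedSymbol a (NonresonantBlock a (2 ^ (j : ℝ)) (2 ^ (j₁ : ℝ)) (2 ^ (j₂ : ℝ))) p q *
        (modulationPiece w ((1 + a) / 2) f j₁ q *
          modulationPiece w ((1 + a) / 2) g j₂ (p - q)) := by
    have := (measurable_restrictedSymbol (a := a) (measurableSet_nonresonantBlock ha (2 ^ (j : ℝ))
      (2 ^ (j₁ : ℝ)) (2 ^ (j₂ : ℝ)))).of_uncurry_left (x := p)
    have := measurable_modulationPiece (s := (1 + a) / 2) hw hf j₁
    have := measurable_modulationPiece (s := (1 + a) / 2) hw hg j₂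
    fun_prop
  rw [lintegral_tsum fun j₁ => (Measurable.tsum fun j₂ => term j₁ j₂).aemeasurable]
  exact tsum_congr fun j₁ => lintegral_tsum fun j₂ => (term j₁ j₂).aemeasurable

theorem dyadicBound_two_rpow (a : ℝ) (j j₁ j₂ : ℕ) :
    dyadicBound a (2 ^ (j : ℝ)) (2 ^ (j₁ : ℝ)) (2 ^ (j₂ : ℝ)) =
      dyadicConst a ^ (1 / 2 : ℝ) * dyadicWeight (smoothingExponent a / 2) j *
        (dyadicWeight (1 / 2) j₁ * dyadicWeight (1 / 2) j₂) := by
  refine (ENNReal.pow_right_strictMono two_ne_zero).injective ?_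
  simp only [mul_pow, rpow_half_sq, dyadicBound_sq, dyadicWeight_half_sq]
  rw [ENNReal.ofReal_mul (by positivity), ENNReal.ofReal_mul (by positivity),
    ofReal_rpow_two_rpow, ofReal_two_rpow, ofReal_two_rpow, mul_assoc, mul_assoc]

theorem eLpNorm_bilinOp_modulationPiece_le (ha : 0 < a) (ha1 : a < 1)
    (hw : ModulationCutoff a w) (hf : Measurable f) (hg : Measurable g) (s : ℝ) (j j₁ j₂ : ℕ) :
    eLpNorm (bilinOp
      (restrictedSymbol a (NonresonantBlock a (2 ^ (j : ℝ)) (2 ^ (j₁ : ℝ)) (2 ^ (j₂ : ℝ))))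
      (modulationPiece w s f j₁) (modulationPiece w s g j₂) volume) 2 ≤
      5 * dyadicConst a ^ (1 / 2 : ℝ) * dyadicWeight (smoothingExponent a / 2) j *
        ((dyadicWeight (1 / 2) j₁ * eLpNorm (modulationPiece w s f j₁) 2) *
          (dyadicWeight (1 / 2) j₂ * eLpNorm (modulationPiece w s g j₂) 2)) := by
  have one_le (k : ℕ) : (1 : ℝ) ≤ 2 ^ (k : ℝ) := Real.one_le_rpow one_le_two k.cast_nonneg
  refine (eLpNorm_bilinOp_nonresonantBlock_le ha ha1 (one_le j) (by positivity) (one_le j₂)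
    (measurable_modulationPiece hw hf j₁) (measurable_modulationPiece hw hg j₂)).trans_eq ?_
  rw [dyadicBound_two_rpow]
  ring

theorem eLpNorm_modulationPiece_derivProduct_nonresonant_le (ha : 0 < a) (ha1 : a < 1)
    (hw : ModulationCutoff a w) (hf : Measurable f) (hg : Measurable g) (j : ℕ) :
    eLpNorm (modulationPiece w ((1 + a) / 2) (derivProduct (Nonresonant a) f g) j) 2 ≤
      5 * dyadicConst a ^ (1 / 2 : ℝ) *
        (eXnorm w (1 / 2) ((1 + a) / 2) f * eXnorm w (1 / 2) ((1 + a) / 2) g) *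
        dyadicWeight (smoothingExponent a / 2) j := by
  have meas (j₁ j₂ : ℕ) := measurable_bilinOp (μ := volume)
    (measurable_restrictedSymbol (a := a) (measurableSet_nonresonantBlock ha
      (2 ^ (j : ℝ)) (2 ^ (j₁ : ℝ)) (2 ^ (j₂ : ℝ))))
    (measurable_modulationPiece (s := (1 + a) / 2) hw hf j₁)
    (measurable_modulationPiece (s := (1 + a) / 2) hw hg j₂)
  refine (eLpNorm_two_le_tsum_tsum meas
    (modulationPiece_derivProduct_nonresonant_le ha ha1 hw hf hg j)).trans ?_
  refine (ENNReal.tsum_le_tsum fun j₁ => ENNReal.tsum_le_tsum fun j₂ =>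
    eLpNorm_bilinOp_modulationPiece_le ha ha1 hw hf hg _ j j₁ j₂).trans_eq ?_
  simp only [ENNReal.tsum_mul_left, ENNReal.tsum_mul_right]
  rw [eXnorm, eXnorm]
  ring

theorem eXnorm_derivProduct_nonresonant_le (ha : 0 < a) (ha1 : a < 1) (hw : ModulationCutoff a w)
    (hf : Measurable f) (hg : Measurable g) :
    eXnorm w (-b) ((1 + a) / 2) (derivProduct (Nonresonant a) f g) ≤
      5 * dyadicConst a ^ (1 / 2 : ℝ) *
        (eXnorm w (1 / 2) ((1 + a) / 2) f * eXnorm w (1 / 2) ((1 + a) / 2) g) *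
        geomSum (b - smoothingExponent a / 2) :=
  eXnorm_neg_le_geomSum fun j =>
    eLpNorm_modulationPiece_derivProduct_nonresonant_le ha ha1 hw hf hg j

end Nonresonant

/-! ### The low region -/

section LowRadius
variable {a l x : ℝ}

/-- A radius such that, for `|l|` large, the points `(ξ, l)` with `|ξ| ≤ lowRadius a l` are at
distance at least `|l| / 2` from the dispersion curve. -/
def lowRadius (a l : ℝ) : ℝ := max 1 ((|l| / 2) ^ (1 / (2 + a)))

theorem one_le_lowRadius (a l : ℝ) : 1 ≤ lowRadius a l := le_max_left _ _

theorem measurable_lowRadius (a : ℝ) : Measurable (lowRadius a) := by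
  unfold lowRadius
  fun_prop

theorem rpow_two_add_le_of_le_lowRadius (ha : 0 < a) (hx : |x| ≤ lowRadius a l) :
    |x| ^ (2 + a) ≤ max 1 (|l| / 2) := by
  rcases le_max_iff.1 hx with h | h
  · exact (Real.rpow_le_one (abs_nonneg _) h (by linarith)).trans (le_max_left _ _)
  · refine le_max_of_le_right ?_
    rwa [one_div, Real.le_rpow_inv_iff_of_pos (abs_nonneg _) (by positivity)
      (by linarith)] at h

theorem le_lowRadius_of_not_nonresonant (ha : 0 < a) {p q : ℝ × ℝ} (low : |q.1| ≤ |(p - q).1|)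
    (far : ¬Nonresonant a p q) : |q.1| ≤ lowRadius a q.2 := by
  rcases le_or_gt |q.1| 1 with h | h
  · exact h.trans (one_le_lowRadius a q.2)
  have modulation : 3 * |q.1| ^ (2 + a) < |q.2 - disp a q.1| :=
    not_le.1 fun near => far ⟨h.le, low, near⟩
  have triangle := abs_sub q.2 (disp a q.1)
  rw [abs_disp ha] at triangle
  refine le_max_of_le_right ?_
  rw [one_div, Real.le_rpow_inv_iff_of_pos (abs_nonneg _) (by positivity) (by linarith)]
  linarith

theorem abs_le_of_le_lowRadius (ha : 0 < a) (hx : |x| ≤ lowRadius a l) {M : ℝ} (hM : 1 ≤ M)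
    (h : |l - disp a x| ≤ 2 * M) : |l| ≤ 4 * M := by
  have triangle := abs_sub_abs_le_abs_sub l (disp a x)
  rw [abs_disp ha] at triangle
  rcases le_max_iff.1 (rpow_two_add_le_of_le_lowRadius ha hx) with h' | h' <;> linarith

end LowRadius

section LowMajorant
variable {a s : ℝ} {w : ℕ → ℝ × ℝ → ℝ≥0∞} {f f' : ℝ × ℝ → ℝ≥0∞}

/-- The one-dimensional Sobolev inequality in `ξ`, uniformly over the intervals `[-ρ, ρ]` with
`ρ ≥ 1`; here `f` stands for `|û|` and `f'` for `|∂_ξ û|`. -/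
def SobolevPair (f f' : ℝ × ℝ → ℝ≥0∞) : Prop :=
  ∀ l ρ x : ℝ, 1 ≤ ρ → |x| ≤ ρ →
    f (x, l) ^ 2 ≤ ∫⁻ y, iverson (|y| ≤ ρ) * (f (y, l) ^ 2 + 2 * (f (y, l) * f' (y, l)))

/-- The part of modulation about `2 ^ j` of the right-hand side of the Sobolev inequality on the
slice `λ = l`, over `|ξ| ≤ lowRadius a l`. -/
def lowEnergy (a : ℝ) (w : ℕ → ℝ × ℝ → ℝ≥0∞) (f f' : ℝ × ℝ → ℝ≥0∞) (j : ℕ) (l : ℝ) : ℝ≥0∞ :=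
  ∫⁻ y, iverson (|y| ≤ lowRadius a l) *
    (w j (y, l) ^ 2 * (f (y, l) ^ 2 + 2 * (f (y, l) * f' (y, l))))

/-- A majorant of `f (·, l)` on `|ξ| ≤ lowRadius a l`. -/
def lowMajorant (a : ℝ) (w : ℕ → ℝ × ℝ → ℝ≥0∞) (f f' : ℝ × ℝ → ℝ≥0∞) (l : ℝ) : ℝ≥0∞ :=
  ∑' j, lowEnergy a w f f' j l ^ (1 / 2 : ℝ)

/-- The quantity `‖u‖_{X^{1/2}_s} + (‖u‖_{X^{1/2}_s} ‖x u‖_{X^{1/2}_{-s}})^{1/2}` for `f = |û|` and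
`f' = |∂_ξ û|`. -/
def eMixedNorm (w : ℕ → ℝ × ℝ → ℝ≥0∞) (s : ℝ) (f f' : ℝ × ℝ → ℝ≥0∞) : ℝ≥0∞ :=
  eXnorm w (1 / 2) s f +
    eXnorm w (1 / 2) s f ^ (1 / 2 : ℝ) * eXnorm w (1 / 2) (-s) f' ^ (1 / 2 : ℝ)

theorem measurable_iverson_lowRadius (a : ℝ) :
    Measurable fun z : ℝ × ℝ => iverson (|z.1| ≤ lowRadius a z.2) := by
  have := measurable_lowRadius a
  exact measurable_iverson (measurableSet_le (by fun_prop) (by fun_prop))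

theorem measurable_lowEnergy (hw : ModulationCutoff a w) (hf : Measurable f)
    (hf' : Measurable f') (j : ℕ) : Measurable (lowEnergy a w f f' j) := by
  have := hw.measurable j
  have := measurable_iverson_lowRadius a
  exact Measurable.lintegral_prod_left' (f := fun z : ℝ × ℝ => iverson (|z.1| ≤ lowRadius a z.2) *
    (w j z ^ 2 * (f z ^ 2 + 2 * (f z * f' z)))) (by fun_prop)

theorem measurable_lowMajorant (hw : ModulationCutoff a w) (hf : Measurable f)
    (hf' : Measurable f') : Measurable (lowMajorant a w f f') :=
  Measurable.tsum fun j => (measurable_lowEnergy hw hf hf' j).pow_const _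

theorem le_lowMajorant (hw : ModulationCutoff a w) (hf : Measurable f) (hf' : Measurable f')
    (hS : SobolevPair f f') {q : ℝ × ℝ} (hq : |q.1| ≤ lowRadius a q.2) :
    f q ≤ lowMajorant a w f f' q.2 := by
  have : Measurable fun y : ℝ => iverson (|y| ≤ lowRadius a q.2) :=
    (measurable_iverson_lowRadius a).comp measurable_prodMk_right
  have := hw.measurable
  rw [← ENNReal.pow_le_pow_left_iff two_ne_zero]
  refine le_trans ?_ (tsum_sq_le_sq_tsum _)
  simp only [rpow_half_sq, lowEnergy]
  rw [← lintegral_tsum fun j => by fun_prop]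
  simp only [ENNReal.tsum_mul_left, ENNReal.tsum_mul_right, hw.tsum_sq, one_mul]
  exact hS q.2 (lowRadius a q.2) q.1 (one_le_lowRadius a q.2) hq

theorem lowEnergy_le (ha : 0 < a) (hw : ModulationCutoff a w) (j : ℕ) (l : ℝ) :
    lowEnergy a w f f' j l ≤ iverson (|l| ≤ 4 * 2 ^ (j : ℝ)) *
      ∫⁻ y, w j (y, l) ^ 2 * (f (y, l) ^ 2 + 2 * (f (y, l) * f' (y, l))) := by
  have one_le : (1 : ℝ) ≤ 2 ^ (j : ℝ) := Real.one_le_rpow one_le_two j.cast_nonneg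
  by_cases hl : |l| ≤ 4 * 2 ^ (j : ℝ)
  · rw [iverson_true hl, one_mul]
    exact lintegral_mono fun y => mul_le_of_le_one_left' (iverson_le_one _)
  · refine (lintegral_eq_zero_of_ae_eq_zero (.of_forall fun y => ?_)).trans_le zero_le
    by_cases hy : |y| ≤ lowRadius a l
    · have cutoff := hw.le_iverson j (y, l)
      rw [iverson_false fun h => hl (abs_le_of_le_lowRadius ha hy one_le h),
        nonpos_iff_eq_zero] at cutoff
      simp only [cutoff, ne_eq, two_ne_zero, not_false_eq_true, zero_pow, zero_mul, mul_zero,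
        Pi.zero_apply]
    · simp only [iverson_false hy, zero_mul, Pi.zero_apply]

theorem eLpNorm_two_iverson_abs_le (j : ℕ) :
    eLpNorm (fun l : ℝ => iverson (|l| ≤ 4 * 2 ^ (j : ℝ))) 2 ≤ 3 * dyadicWeight (1 / 2) j := by
  have interval : {l : ℝ | |l| ≤ 4 * 2 ^ (j : ℝ)} =
      Set.Icc (-(4 * 2 ^ (j : ℝ))) (4 * 2 ^ (j : ℝ)) :=
    Set.ext fun l => by rw [Set.mem_ofPred_eq, Set.mem_Icc, abs_le]
  rw [eLpNorm_two_le_iff, mul_pow, dyadicWeight_half_sq, ← ofReal_two_rpow]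
  simp only [iverson_sq]
  rw [lintegral_iverson (measurableSet_le (by fun_prop) (by fun_prop)), interval, Real.volume_Icc,
    ← ENNReal.ofReal_ofNat 3, ← ENNReal.ofReal_pow (by norm_num),
    ← ENNReal.ofReal_mul (by positivity)]
  have : (0 : ℝ) < 2 ^ (j : ℝ) := by positivity
  exact ENNReal.ofReal_le_ofReal (by linarith)

theorem lintegral_sq_mul_le (hw : ModulationCutoff a w) (hf : Measurable f)
    (hf' : Measurable f') (hs : 0 ≤ s) (j : ℕ) :
    ∫⁻ p, w j p ^ 2 * (f p ^ 2 + 2 * (f p * f' p)) ≤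
      eLpNorm (modulationPiece w s f j) 2 ^ 2 +
        2 * (eLpNorm (modulationPiece w s f j) 2 * eLpNorm (modulationPiece w (-s) f' j) 2) := by
  have hF := measurable_modulationPiece (s := s) hw hf j
  have hF' := measurable_modulationPiece (s := -s) hw hf' j
  calc ∫⁻ p, w j p ^ 2 * (f p ^ 2 + 2 * (f p * f' p))
      ≤ ∫⁻ p, (modulationPiece w s f j p ^ 2 +
          2 * (modulationPiece w s f j p * modulationPiece w (-s) f' j p)) := by
        refine lintegral_mono fun p => ?_
        have cancel : modulationPiece w s f j p * modulationPiece w (-s) f' j p =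
            w j p ^ 2 * (f p * f' p) := by
          rw [← mul_one (w j p ^ 2 * _), ← bracket_mul_bracket_neg s p.1]
          unfold modulationPiece
          ring
        rw [cancel, mul_add, mul_left_comm, modulationPiece, mul_pow]
        gcongr
        exact le_mul_of_one_le_left' (one_le_bracket hs p.1)
    _ = eLpNorm (modulationPiece w s f j) 2 ^ 2 +
          2 * ∫⁻ p, modulationPiece w s f j p * modulationPiece w (-s) f' j p := by
        rw [lintegral_add_left (by fun_prop), lintegral_const_mul _ (by fun_prop), eLpNorm_two_sq]
    _ ≤ _ := by
        gcongr
        exact lintegral_mul_le_eLpNorm_two hF hF'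

theorem rpow_half_sq_add_le (x y : ℝ≥0∞) :
    (x ^ 2 + 2 * (x * y)) ^ (1 / 2 : ℝ) ≤ 2 * (x + (x * y) ^ (1 / 2 : ℝ)) := by
  rw [← ENNReal.pow_le_pow_left_iff two_ne_zero, rpow_half_sq]
  calc x ^ 2 + 2 * (x * y)
      ≤ 4 * x ^ 2 + 8 * (x * (x * y) ^ (1 / 2 : ℝ)) + 4 * (x * y) := by
        rw [add_right_comm]
        refine le_add_right (add_le_add ?_ ?_)
        · exact le_mul_of_one_le_left' (by norm_num)
        · gcongr
          norm_num
    _ = 4 * x ^ 2 + 8 * (x * (x * y) ^ (1 / 2 : ℝ)) + 4 * ((x * y) ^ (1 / 2 : ℝ)) ^ 2 := by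
        rw [rpow_half_sq]
    _ = _ := by ring

theorem lintegral_lowEnergy_rpow_half_le_lintegral (ha : 0 < a) (hw : ModulationCutoff a w)
    (hf : Measurable f) (hf' : Measurable f') (j : ℕ) :
    ∫⁻ l, lowEnergy a w f f' j l ^ (1 / 2 : ℝ) ≤ 3 * dyadicWeight (1 / 2) j *
      (∫⁻ p, w j p ^ 2 * (f p ^ 2 + 2 * (f p * f' p))) ^ (1 / 2 : ℝ) := by
  have := hw.measurable j
  have hH : Measurable fun p => w j p ^ 2 * (f p ^ 2 + 2 * (f p * f' p)) := by fun_prop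
  have hI : Measurable fun l : ℝ => iverson (|l| ≤ 4 * 2 ^ (j : ℝ)) :=
    measurable_iverson (measurableSet_le (by fun_prop) (by fun_prop))
  have slice (l : ℝ) : lowEnergy a w f f' j l ^ (1 / 2 : ℝ) ≤ iverson (|l| ≤ 4 * 2 ^ (j : ℝ)) *
      (∫⁻ y, w j (y, l) ^ 2 * (f (y, l) ^ 2 + 2 * (f (y, l) * f' (y, l)))) ^ (1 / 2 : ℝ) := by
    refine (ENNReal.rpow_le_rpow (lowEnergy_le ha hw j l) one_half_pos.le).trans_eq ?_
    rw [ENNReal.mul_rpow_of_nonneg _ _ one_half_pos.le, iverson_rpow one_half_pos]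
  refine (lintegral_mono slice).trans
    ((lintegral_mul_le_eLpNorm_two hI (hH.lintegral_prod_left'.pow_const _)).trans ?_)
  rw [eLpNorm_two_rpow_half, ← lintegral_prod_symm' _ hH, ← Measure.volume_eq_prod]
  gcongr
  exact eLpNorm_two_iverson_abs_le j

theorem lintegral_lowEnergy_rpow_half_le (ha : 0 < a) (hw : ModulationCutoff a w)
    (hf : Measurable f) (hf' : Measurable f') (hs : 0 ≤ s) (j : ℕ) :
    ∫⁻ l, lowEnergy a w f f' j l ^ (1 / 2 : ℝ) ≤ 6 * dyadicWeight (1 / 2) j *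
      (eLpNorm (modulationPiece w s f j) 2 + (eLpNorm (modulationPiece w s f j) 2 *
        eLpNorm (modulationPiece w (-s) f' j) 2) ^ (1 / 2 : ℝ)) := by
  have energy := (ENNReal.rpow_le_rpow (lintegral_sq_mul_le hw hf hf' hs j) one_half_pos.le).trans
    (rpow_half_sq_add_le _ _)
  refine (lintegral_lowEnergy_rpow_half_le_lintegral ha hw hf hf' j).trans
    ((mul_le_mul_right energy _).trans_eq ?_)
  ring

theorem lintegral_lowMajorant_le (ha : 0 < a) (hw : ModulationCutoff a w) (hf : Measurable f)
    (hf' : Measurable f') (hs : 0 ≤ s) :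
    ∫⁻ l, lowMajorant a w f f' l ≤ 6 * eMixedNorm w s f f' := by
  set A := fun j => dyadicWeight (1 / 2) j * eLpNorm (modulationPiece w s f j) 2
  set A' := fun j => dyadicWeight (1 / 2) j * eLpNorm (modulationPiece w (-s) f' j) 2
  have pull (j : ℕ) : (A j * A' j) ^ (1 / 2 : ℝ) = dyadicWeight (1 / 2) j *
      (eLpNorm (modulationPiece w s f j) 2 *
        eLpNorm (modulationPiece w (-s) f' j) 2) ^ (1 / 2 : ℝ) := by
    refine (ENNReal.pow_right_strictMono two_ne_zero).injective ?_
    simp only [mul_pow, rpow_half_sq, A, A']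
    ring
  calc ∫⁻ l, lowMajorant a w f f' l = ∑' j, ∫⁻ l, lowEnergy a w f f' j l ^ (1 / 2 : ℝ) :=
        lintegral_tsum fun j => ((measurable_lowEnergy hw hf hf' j).pow_const _).aemeasurable
    _ ≤ ∑' j, 6 * (A j + (A j * A' j) ^ (1 / 2 : ℝ)) := by
        refine ENNReal.tsum_le_tsum fun j =>
          (lintegral_lowEnergy_rpow_half_le ha hw hf hf' hs j).trans_eq ?_
        rw [pull, ← mul_add, mul_assoc]
    _ = 6 * (∑' j, A j + ∑' j, (A j * A' j) ^ (1 / 2 : ℝ)) := by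
        rw [ENNReal.tsum_mul_left, ENNReal.tsum_add]
    _ ≤ 6 * eMixedNorm w s f f' := by
        unfold eMixedNorm
        gcongr
        · exact le_rfl
        · exact tsum_rpow_half_mul_le A A'

end LowMajorant

section LocalSmoothingSum
variable {a : ℝ} {w : ℕ → ℝ × ℝ → ℝ≥0∞} {g : ℝ × ℝ → ℝ≥0∞}

theorem lintegral_rpow_mul_iverson_mul_le (ha : 0 < a) {G : ℝ → ℝ≥0∞} (hG : Measurable G) (j : ℕ)
    (l : ℝ) :
    ∫⁻ x, ENNReal.ofReal (|x| ^ ((1 + a) / 2)) * iverson (|l - disp a x| ≤ 2 * 2 ^ (j : ℝ)) * G x ≤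
      4 * dyadicWeight (1 / 2) j * eLpNorm G 2 := by
  have := continuous_disp ha
  have hI : Measurable fun x : ℝ => iverson (|l - disp a x| ≤ 2 * 2 ^ (j : ℝ)) :=
    measurable_iverson (measurableSet_le (by fun_prop) (by fun_prop))
  refine (lintegral_mul_le_eLpNorm_two (by fun_prop) hG).trans ?_
  gcongr
  rw [eLpNorm_two_le_iff, mul_pow, dyadicWeight_half_sq, ← ofReal_two_rpow]
  have square (x : ℝ) : ENNReal.ofReal (|x| ^ ((1 + a) / 2)) ^ 2 =
      ENNReal.ofReal (|x| ^ (1 + a)) := by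
    rw [← ENNReal.ofReal_pow (by positivity), ← Real.rpow_mul_natCast (abs_nonneg x)]
    congr 2
    push_cast
    ring
  simp only [mul_pow, iverson_sq, square]
  refine (lintegral_rpow_one_add_dispSlice_le ha (by positivity)).trans_eq ?_
  rw [← mul_assoc, ENNReal.ofReal_mul (by norm_num)]
  norm_num

/-- The integral of `|ξ| ^ s (1 + |ξ|) ^ s g(ξ, l)` over `ξ`, for `s = (1 + a) / 2`. The power
`|ξ| ^ s` is the gain of local smoothing. -/
def smoothedSlice (a : ℝ) (g : ℝ × ℝ → ℝ≥0∞) (l : ℝ) : ℝ≥0∞ :=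
  ∫⁻ x, ENNReal.ofReal (|x| ^ ((1 + a) / 2)) * (bracket ((1 + a) / 2) x * g (x, l))

theorem measurable_smoothedSlice (a : ℝ) (hg : Measurable g) : Measurable (smoothedSlice a g) := by
  have := measurable_bracket ((1 + a) / 2)
  exact Measurable.lintegral_prod_left' (f := fun z : ℝ × ℝ =>
    ENNReal.ofReal (|z.1| ^ ((1 + a) / 2)) * (bracket ((1 + a) / 2) z.1 * g z)) (by fun_prop)

theorem smoothedSlice_le_tsum (ha : 0 < a) (hw : ModulationCutoff a w) (hg : Measurable g)
    (l : ℝ) :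
    smoothedSlice a g l ≤
      ∑' j, 4 * dyadicWeight (1 / 2) j *
        eLpNorm (fun x => modulationPiece w ((1 + a) / 2) g j (x, l)) 2 := by
  unfold smoothedSlice
  set s := (1 + a) / 2
  have := continuous_disp ha
  have hG (j : ℕ) := measurable_modulationPiece (s := s) hw hg j
  calc ∫⁻ x, ENNReal.ofReal (|x| ^ s) * (bracket s x * g (x, l))
      ≤ ∫⁻ x, ∑' j : ℕ, ENNReal.ofReal (|x| ^ s) * iverson (|l - disp a x| ≤ 2 * 2 ^ (j : ℝ)) *
          modulationPiece w s g j (x, l) := by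
        refine lintegral_mono fun x => ?_
        refine (mul_le_mul_right
          (hw.le_tsum_mul (fun p => bracket s p.1 * g p) (x, l)) _).trans_eq ?_
        rw [← ENNReal.tsum_mul_left]
        refine tsum_congr fun j => ?_
        rw [modulationPiece, mul_assoc, ← mul_assoc (iverson _), hw.iverson_mul_self j (x, l)]
    _ = ∑' j : ℕ, ∫⁻ x, ENNReal.ofReal (|x| ^ s) * iverson (|l - disp a x| ≤ 2 * 2 ^ (j : ℝ)) *
          modulationPiece w s g j (x, l) := by
        refine lintegral_tsum fun j => Measurable.aemeasurable ?_
        have : Measurable fun x : ℝ => iverson (|l - disp a x| ≤ 2 * 2 ^ (j : ℝ)) :=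
          measurable_iverson (measurableSet_le (by fun_prop) (by fun_prop))
        have := hG j
        fun_prop
    _ ≤ _ := ENNReal.tsum_le_tsum fun j =>
        lintegral_rpow_mul_iverson_mul_le ha ((hG j).comp measurable_prodMk_right) j l

theorem eLpNorm_smoothedSlice_le (ha : 0 < a) (hw : ModulationCutoff a w) (hg : Measurable g) :
    eLpNorm (smoothedSlice a g) 2 ≤ 4 * eXnorm w (1 / 2) ((1 + a) / 2) g := by
  set s := (1 + a) / 2
  have hG (j : ℕ) := measurable_modulationPiece (s := s) hw hg j
  have hslice (j : ℕ) :
      Measurable fun l => eLpNorm (fun x => modulationPiece w s g j (x, l)) 2 := by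
    simp only [eLpNorm_two_eq]
    exact ((hG j).pow_const 2).lintegral_prod_left'.pow_const _
  refine (eLpNorm_mono_enorm (smoothedSlice_le_tsum ha hw hg)).trans
    ((eLpNorm_two_tsum_le fun j => (hslice j).const_mul _).trans_eq ?_)
  rw [eXnorm, ← ENNReal.tsum_mul_left]
  refine tsum_congr fun j => ?_
  rw [eLpNorm_two_const_mul (hslice j), eLpNorm_two_prod_symm (hG j), mul_assoc]
  rfl

end LocalSmoothingSum

/-! ### The bilinear estimate -/

section LowRegion
variable {a b : ℝ} {w : ℕ → ℝ × ℝ → ℝ≥0∞} {f f' g : ℝ × ℝ → ℝ≥0∞}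

theorem ofReal_abs_mul_bracket_le (ha : 0 < a) (ha1 : a < 1) {x y : ℝ} (h : |x| ≤ 2 * |y|) :
    ENNReal.ofReal |x| * bracket ((1 + a) / 2) x ≤
      4 * ENNReal.ofReal (|x| ^ ((1 - a) / 2)) *
        (ENNReal.ofReal (|y| ^ ((1 + a) / 2)) * bracket ((1 + a) / 2) y) := by
  have split : |x| = |x| ^ ((1 - a) / 2) * |x| ^ ((1 + a) / 2) := by
    rw [← Real.rpow_add_of_nonneg (abs_nonneg x) (by linarith) (by linarith), ← add_div,
      sub_add_add_cancel, one_add_one_eq_two, div_self two_ne_zero, Real.rpow_one]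
  have power : |x| ^ ((1 + a) / 2) ≤ 2 * |y| ^ ((1 + a) / 2) :=
    (Real.rpow_le_rpow (abs_nonneg x) h (by linarith)).trans
      (rpow_two_mul_le (by linarith) (abs_nonneg y))
  calc ENNReal.ofReal |x| * bracket ((1 + a) / 2) x
      ≤ ENNReal.ofReal (|x| ^ ((1 - a) / 2) * (2 * |y| ^ ((1 + a) / 2))) *
          (2 * bracket ((1 + a) / 2) y) := by
        gcongr
        · exact split.trans_le (by gcongr)
        · exact bracket_le_of_abs_le (by linarith) (by linarith) h
    _ = _ := by
        rw [ENNReal.ofReal_mul (by positivity), ENNReal.ofReal_mul zero_le_two,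
          ENNReal.ofReal_ofNat]
        ring

/-- The first input has the lower frequency, and lies below the low radius. -/
def LowRegion (a : ℝ) (p q : ℝ × ℝ) : Prop := |q.1| ≤ lowRadius a q.2 ∧ |q.1| ≤ |(p - q).1|

theorem lintegral_mul_sub_eq_lconvolution {B : ℝ → ℝ≥0∞} {H : ℝ × ℝ → ℝ≥0∞} (hB : Measurable B)
    (hH : Measurable H) (p : ℝ × ℝ) :
    ∫⁻ q : ℝ × ℝ, B q.2 * H (p - q) = (B ⋆ₗ[volume] fun l => ∫⁻ x, H (x, l)) p.2 := by
  rw [Measure.volume_eq_prod, lintegral_prod_symm' _ (by fun_prop), lconvolution_def]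
  refine lintegral_congr fun m => ?_
  have : Measurable fun x => H (x, p.2 - m) := hH.comp measurable_prodMk_right
  rw [neg_add_eq_sub, ← lintegral_sub_left_eq_self _ p.1, ← lintegral_const_mul _ (by fun_prop)]
  refine lintegral_congr fun x => ?_
  rw [Prod.sub_def, sub_sub_cancel]

theorem mul_iverson_lowRegion_le (ha : 0 < a) (ha1 : a < 1) (hw : ModulationCutoff a w)
    (hf : Measurable f) (hf' : Measurable f') (hS : SobolevPair f f') (p q : ℝ × ℝ) :
    ENNReal.ofReal |p.1| * bracket ((1 + a) / 2) p.1 *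
        (iverson (LowRegion a p q) * (f q * g (p - q))) ≤
      4 * ENNReal.ofReal (|p.1| ^ ((1 - a) / 2)) * (lowMajorant a w f f' q.2 *
        (ENNReal.ofReal (|(p - q).1| ^ ((1 + a) / 2)) *
          (bracket ((1 + a) / 2) (p - q).1 * g (p - q)))) := by
  by_cases h : LowRegion a p q
  swap
  · simp only [iverson_false h, zero_mul, mul_zero, zero_le]
  rw [iverson_true h, one_mul]
  refine (mul_le_mul' (ofReal_abs_mul_bracket_le ha ha1 (abs_fst_le_two_mul h.2))
    (mul_le_mul_left (le_lowMajorant hw hf hf' hS h.1) (g (p - q)))).trans_eq ?_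
  ring

theorem modulationPiece_derivProduct_lowRegion_le (ha : 0 < a) (ha1 : a < 1)
    (hw : ModulationCutoff a w) (hf : Measurable f) (hf' : Measurable f') (hg : Measurable g)
    (hS : SobolevPair f f') (j : ℕ) (p : ℝ × ℝ) :
    modulationPiece w ((1 + a) / 2) (derivProduct (LowRegion a) f g) j p ≤
      iverson (|p.2 - disp a p.1| ≤ 2 * 2 ^ (j : ℝ)) *
        (4 * ENNReal.ofReal (|p.1| ^ ((1 - a) / 2)) *
          (lowMajorant a w f f' ⋆ₗ[volume] smoothedSlice a g) p.2) := by
  have := measurable_bracket ((1 + a) / 2)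
  have := measurable_lowMajorant hw hf hf'
  rw [modulationPiece, derivProduct]
  refine mul_le_mul' (hw.le_iverson j p) ?_
  rw [← mul_assoc, mul_comm (bracket _ _)]
  refine (lintegral_const_mul_le _ _).trans
    ((lintegral_mono (mul_iverson_lowRegion_le ha ha1 hw hf hf' hS p)).trans_eq ?_)
  rw [lintegral_const_mul _ (by fun_prop)]
  congr 1
  exact lintegral_mul_sub_eq_lconvolution this (H := fun z => ENNReal.ofReal
    (|z.1| ^ ((1 + a) / 2)) * (bracket ((1 + a) / 2) z.1 * g z)) (by fun_prop) p

theorem lintegral_iverson_mul_rpow_sq_le (ha : 0 < a) (ha1 : a < 1) (j : ℕ) (l : ℝ) :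
    ∫⁻ x, (iverson (|l - disp a x| ≤ 2 * 2 ^ (j : ℝ)) *
        ENNReal.ofReal (|x| ^ ((1 - a) / 2))) ^ 2 ≤
      32 * dyadicWeight ((2 - a) / (2 + a)) j := by
  have square (x : ℝ) : ENNReal.ofReal (|x| ^ ((1 - a) / 2)) ^ 2 =
      ENNReal.ofReal (|x| ^ (1 - a)) := by
    rw [← ENNReal.ofReal_pow (by positivity), ← Real.rpow_mul_natCast (abs_nonneg x)]
    congr 2
    push_cast
    ring
  simp only [mul_pow, iverson_sq, square, mul_comm (iverson _)]
  refine (lintegral_rpow_one_sub_dispSlice_le ha ha1 (by positivity)).trans ?_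
  rw [← ofReal_rpow_two_rpow, ← ENNReal.ofReal_ofNat 32, ← ENNReal.ofReal_mul (by norm_num)]
  refine ENNReal.ofReal_le_ofReal ?_
  have exponent : (2 - a) / (2 + a) ≤ 1 := (div_le_one (by linarith)).2 (by linarith)
  linarith [rpow_two_mul_le exponent (x := 2 ^ (j : ℝ)) (by positivity)]

theorem eLpNorm_two_iverson_mul_rpow_mul_le (ha : 0 < a) (ha1 : a < 1) {G : ℝ → ℝ≥0∞}
    (hG : Measurable G) (j : ℕ) :
    eLpNorm (fun p : ℝ × ℝ => iverson (|p.2 - disp a p.1| ≤ 2 * 2 ^ (j : ℝ)) *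
        (4 * ENNReal.ofReal (|p.1| ^ ((1 - a) / 2)) * G p.2)) 2 ≤
      32 * dyadicWeight ((2 - a) / (2 + a) / 2) j * eLpNorm G 2 := by
  have := continuous_disp ha
  have hI : Measurable fun p : ℝ × ℝ => iverson (|p.2 - disp a p.1| ≤ 2 * 2 ^ (j : ℝ)) :=
    measurable_iverson (measurableSet_le (by fun_prop) (by fun_prop))
  rw [eLpNorm_two_le_iff, Measure.volume_eq_prod, lintegral_prod_symm' _ (by fun_prop), mul_pow,
    eLpNorm_two_sq, ← lintegral_const_mul _ (by fun_prop)]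
  refine lintegral_mono fun l => ?_
  have hIl : Measurable fun x : ℝ => iverson (|l - disp a x| ≤ 2 * 2 ^ (j : ℝ)) :=
    hI.comp measurable_prodMk_right
  have factor (x : ℝ) : (iverson (|l - disp a x| ≤ 2 * 2 ^ (j : ℝ)) *
      (4 * ENNReal.ofReal (|x| ^ ((1 - a) / 2)) * G l)) ^ 2 =
      16 * G l ^ 2 * (iverson (|l - disp a x| ≤ 2 * 2 ^ (j : ℝ)) *
        ENNReal.ofReal (|x| ^ ((1 - a) / 2))) ^ 2 := by ring
  simp only [factor]
  rw [lintegral_const_mul _ (by fun_prop), mul_pow, dyadicWeight_half_sq]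
  calc 16 * G l ^ 2 * ∫⁻ x, (iverson (|l - disp a x| ≤ 2 * 2 ^ (j : ℝ)) *
        ENNReal.ofReal (|x| ^ ((1 - a) / 2))) ^ 2
      ≤ 16 * G l ^ 2 * (32 * dyadicWeight ((2 - a) / (2 + a)) j) := by
        gcongr
        exact lintegral_iverson_mul_rpow_sq_le ha ha1 j l
    _ = 512 * (dyadicWeight ((2 - a) / (2 + a)) j * G l ^ 2) := by ring
    _ ≤ 32 ^ 2 * (dyadicWeight ((2 - a) / (2 + a)) j * G l ^ 2) := by gcongr; norm_num
    _ = _ := by ring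

theorem eLpNorm_modulationPiece_derivProduct_lowRegion_le (ha : 0 < a) (ha1 : a < 1)
    (hw : ModulationCutoff a w) (hf : Measurable f) (hf' : Measurable f') (hg : Measurable g)
    (hS : SobolevPair f f') (j : ℕ) :
    eLpNorm (modulationPiece w ((1 + a) / 2) (derivProduct (LowRegion a) f g) j) 2 ≤
      768 * (eMixedNorm w ((1 + a) / 2) f f' * eXnorm w (1 / 2) ((1 + a) / 2) g) *
        dyadicWeight ((2 - a) / (2 + a) / 2) j := by
  have hB := measurable_lowMajorant hw hf hf'
  have hT := measurable_smoothedSlice a hg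
  have young := (eLpNorm_two_lconvolution_le (μ := volume) hB hT).trans (mul_le_mul'
    (lintegral_lowMajorant_le ha hw hf hf' (s := (1 + a) / 2) (by linarith))
    (eLpNorm_smoothedSlice_le ha hw hg))
  have pointwise := modulationPiece_derivProduct_lowRegion_le ha ha1 hw hf hf' hg hS j
  refine (eLpNorm_mono_enorm pointwise).trans ((eLpNorm_two_iverson_mul_rpow_mul_le ha ha1
    (measurable_lconvolution _ hB hT) j).trans ((mul_le_mul_right young _).trans_eq ?_))
  ring

theorem eXnorm_derivProduct_lowRegion_le (ha : 0 < a) (ha1 : a < 1) (hw : ModulationCutoff a w)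
    (hf : Measurable f) (hf' : Measurable f') (hg : Measurable g) (hS : SobolevPair f f') :
    eXnorm w (-b) ((1 + a) / 2) (derivProduct (LowRegion a) f g) ≤
      768 * (eMixedNorm w ((1 + a) / 2) f f' * eXnorm w (1 / 2) ((1 + a) / 2) g) *
        geomSum (b - (2 - a) / (2 + a) / 2) :=
  eXnorm_neg_le_geomSum
    (eLpNorm_modulationPiece_derivProduct_lowRegion_le ha ha1 hw hf hf' hg hS)

end LowRegion

section BilinearEstimate
variable {a b : ℝ} {w : ℕ → ℝ × ℝ → ℝ≥0∞} {f f' g g' : ℝ × ℝ → ℝ≥0∞}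

/-- The constant of the bilinear estimate. -/
def bilinConst (a b : ℝ) : ℝ≥0∞ :=
  5 * dyadicConst a ^ (1 / 2 : ℝ) * geomSum (b - smoothingExponent a / 2) +
    768 * geomSum (b - (2 - a) / (2 + a) / 2)

theorem bilinConst_lt_top (ha : 0 < a) (hb : smoothingExponent a / 2 < b)
    (hb' : (2 - a) / (2 + a) / 2 < b) : bilinConst a b < ⊤ :=
  ENNReal.add_lt_top.2
    ⟨ENNReal.mul_lt_top (ENNReal.mul_lt_top ENNReal.ofNat_lt_top
      (ENNReal.rpow_lt_top_of_nonneg one_half_pos.le (dyadicConst_lt_top ha).ne))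
        (geomSum_lt_top (sub_pos.2 hb)),
      ENNReal.mul_lt_top ENNReal.ofNat_lt_top (geomSum_lt_top (sub_pos.2 hb'))⟩

theorem measurableSet_lowRegion (a : ℝ) :
    MeasurableSet {z : (ℝ × ℝ) × (ℝ × ℝ) | LowRegion a z.1 z.2} := by
  have := measurable_lowRadius a
  simp only [LowRegion, Set.ofPred_and]
  exact (measurableSet_le (by fun_prop) (by fun_prop)).inter
    (measurableSet_le (by fun_prop) (by fun_prop))

theorem measurableSet_abs_fst_le :
    MeasurableSet {z : (ℝ × ℝ) × (ℝ × ℝ) | |z.2.1| ≤ |(z.1 - z.2).1|} :=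
  measurableSet_le (by fun_prop) (by fun_prop)

theorem eXnorm_derivProduct_low_high_le (ha : 0 < a) (ha1 : a < 1) (hw : ModulationCutoff a w)
    (hf : Measurable f) (hf' : Measurable f') (hg : Measurable g) (hS : SobolevPair f f') :
    eXnorm w (-b) ((1 + a) / 2) (derivProduct (fun p q => |q.1| ≤ |(p - q).1|) f g) ≤
      bilinConst a b * (eMixedNorm w ((1 + a) / 2) f f' * eXnorm w (1 / 2) ((1 + a) / 2) g) := by
  have split (p : ℝ × ℝ) : derivProduct (fun p q => |q.1| ≤ |(p - q).1|) f g p ≤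
      derivProduct (Nonresonant a) f g p + derivProduct (LowRegion a) f g p := by
    refine derivProduct_le_add (measurableSet_nonresonant ha) hf hg fun q low => ?_
    exact or_iff_not_imp_left.2 fun far => ⟨le_lowRadius_of_not_nonresonant ha low far, low⟩
  refine (eXnorm_le_add hw (measurable_derivProduct (measurableSet_nonresonant ha) hf hg)
    (measurable_derivProduct (measurableSet_lowRegion a) hf hg) split _).trans
      ((add_le_add (eXnorm_derivProduct_nonresonant_le ha ha1 hw hf hg)
        (eXnorm_derivProduct_lowRegion_le ha ha1 hw hf hf' hg hS)).trans ?_)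
  rw [bilinConst, add_mul, mul_right_comm _ (eXnorm _ _ _ f * _), mul_right_comm _ (_ * _)]
  gcongr
  exact le_self_add

theorem eXnorm_derivProduct_le (ha : 0 < a) (ha1 : a < 1) (hw : ModulationCutoff a w)
    (hf : Measurable f) (hf' : Measurable f') (hg : Measurable g) (hg' : Measurable g')
    (hS : SobolevPair f f') (hS' : SobolevPair g g') :
    eXnorm w (-b) ((1 + a) / 2) (derivProduct (fun _ _ => True) f g) ≤
      bilinConst a b * (eMixedNorm w ((1 + a) / 2) f f' * eXnorm w (1 / 2) ((1 + a) / 2) g) +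
      bilinConst a b * (eMixedNorm w ((1 + a) / 2) g g' * eXnorm w (1 / 2) ((1 + a) / 2) f) := by
  have swap (p : ℝ × ℝ) : derivProduct (fun p q => |(p - q).1| ≤ |q.1|) f g p =
      derivProduct (fun p q => |q.1| ≤ |(p - q).1|) g f p := by
    simp only [derivProduct, bilinOp_swap _ f g, sub_sub_cancel]
  have split (p : ℝ × ℝ) : derivProduct (fun _ _ => True) f g p ≤
      derivProduct (fun p q => |q.1| ≤ |(p - q).1|) f g p +
        derivProduct (fun p q => |q.1| ≤ |(p - q).1|) g f p := by
    rw [← swap]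
    exact derivProduct_le_add measurableSet_abs_fst_le hf hg fun q _ => le_total _ _
  exact (eXnorm_le_add hw (measurable_derivProduct measurableSet_abs_fst_le hf hg)
    (measurable_derivProduct measurableSet_abs_fst_le hg hf) split _).trans
      (add_le_add (eXnorm_derivProduct_low_high_le ha ha1 hw hf hf' hg hS)
        (eXnorm_derivProduct_low_high_le ha ha1 hw hg hg' hf hS'))

end BilinearEstimate

/-! ### The Fourier transform of Schwartz functions on space-time -/

section SchwartzFourier
open scoped FourierTransform LineDeriv SchwartzMap

/-- The plane with its Euclidean norm, on which the Fourier transform of Schwartz functions is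
available. -/
abbrev EuclideanPlane : Type := WithLp 2 (ℝ × ℝ)

/-- The identification of `ℝ × ℝ` (sup norm) with the Euclidean plane. -/
def toEuclideanPlane : (ℝ × ℝ) ≃L[ℝ] EuclideanPlane :=
  (WithLp.prodContinuousLinearEquiv 2 ℝ ℝ ℝ).symm

/-- The dilation `p ↦ p / (2π)`, which turns the phases `2π⟨x, p⟩` of Mathlib's Fourier transform
into `⟨x, p⟩`. -/
def dilateToPlane : (ℝ × ℝ) ≃L[ℝ] EuclideanPlane :=
  (ContinuousLinearEquiv.smulLeft (Units.mk0 ((2 * Real.pi)⁻¹ : ℝ)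
    (inv_ne_zero Real.two_pi_pos.ne'))).trans toEuclideanPlane

theorem dilateToPlane_apply (p : ℝ × ℝ) :
    dilateToPlane p = WithLp.toLp 2 ((2 * Real.pi)⁻¹ • p) := rfl

theorem integral_toLp {E : Type*} [NormedAddCommGroup E] [NormedSpace ℝ E]
    (F : EuclideanPlane → E) : ∫ q : ℝ × ℝ, F (WithLp.toLp 2 q) = ∫ x, F x :=
  (WithLp.volume_preserving_toLp ℝ ℝ).integral_comp
    toEuclideanPlane.toHomeomorph.measurableEmbedding F

theorem inner_dilateToPlane (y : EuclideanPlane) (p : ℝ × ℝ) :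
    inner ℝ y (dilateToPlane p) =
      (2 * Real.pi)⁻¹ * ((WithLp.ofLp y).1 * p.1 + (WithLp.ofLp y).2 * p.2) := by
  rw [dilateToPlane_apply, WithLp.prod_inner_apply]
  simp only [Prod.smul_fst, Prod.smul_snd, smul_eq_mul, RCLike.inner_apply, conj_trivial]
  ring

theorem hasTemperateGrowth_inner (y : EuclideanPlane) :
    (fun x : EuclideanPlane => inner ℝ x y).HasTemperateGrowth :=
  ((innerSL ℝ).flip y).hasTemperateGrowth

/-- A Schwartz function on `ℝ × ℝ`, transported to the Euclidean plane. -/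
def schwartzOnPlane (u : 𝓢(ℝ × ℝ, ℂ)) : 𝓢(EuclideanPlane, ℂ) :=
  SchwartzMap.compCLMOfContinuousLinearEquiv ℝ toEuclideanPlane.symm u

theorem schwartzOnPlane_apply (u : 𝓢(ℝ × ℝ, ℂ)) (x : EuclideanPlane) :
    schwartzOnPlane u x = u (WithLp.ofLp x) := rfl

/-- The Fourier transform `FT2 u` of a Schwartz function, as a Schwartz function. -/
def schwartzFT2 (u : 𝓢(ℝ × ℝ, ℂ)) : 𝓢(ℝ × ℝ, ℂ) :=
  SchwartzMap.compCLMOfContinuousLinearEquiv ℝ dilateToPlane (𝓕⁻ (schwartzOnPlane u))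

theorem schwartzFT2_eq_fourierInv (u : 𝓢(ℝ × ℝ, ℂ)) (p : ℝ × ℝ) :
    schwartzFT2 u p = 𝓕⁻ (schwartzOnPlane u) (dilateToPlane p) := rfl

theorem schwartzFT2_apply (u : 𝓢(ℝ × ℝ, ℂ)) (p : ℝ × ℝ) : schwartzFT2 u p = FT2 u p.1 p.2 := by
  rw [schwartzFT2_eq_fourierInv, SchwartzMap.fourierInv_coe, Real.fourierInv_eq', ← integral_toLp,
    FT2]
  refine integral_congr_ae (.of_forall fun q => ?_)
  simp only [schwartzOnPlane_apply, inner_dilateToPlane, smul_eq_mul]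
  congr 2
  have := Real.pi_pos.ne'
  push_cast
  field_simp

theorem measurable_enorm_schwartzFT2 (u : 𝓢(ℝ × ℝ, ℂ)) : Measurable fun p => ‖schwartzFT2 u p‖ₑ :=
  (schwartzFT2 u).continuous.measurable.enorm

/-- The pointwise product of two Schwartz functions. -/
def schwartzMul (u v : 𝓢(ℝ × ℝ, ℂ)) : 𝓢(ℝ × ℝ, ℂ) :=
  SchwartzMap.pairing (ContinuousLinearMap.mul ℂ ℂ) u v

theorem fourierInv_schwartzOnPlane_mul (u v : 𝓢(ℝ × ℝ, ℂ)) :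
    𝓕⁻ (schwartzOnPlane (schwartzMul u v)) =
      SchwartzMap.convolution (ContinuousLinearMap.mul ℂ ℂ)
        (𝓕⁻ (schwartzOnPlane u)) (𝓕⁻ (schwartzOnPlane v)) := by
  have pairing : schwartzOnPlane (schwartzMul u v) = SchwartzMap.pairing
      (ContinuousLinearMap.mul ℂ ℂ) (schwartzOnPlane u) (schwartzOnPlane v) := rfl
  simp only [pairing, SchwartzMap.convolution, LinearMap.coe_mk, AddHom.coe_mk,
    FourierInvPair.fourier_fourierInv_eq, ContinuousLinearMap.comp_apply,
    FourierTransform.fourierCLM_apply, FourierTransform.fourierInvCLM_apply]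

theorem schwartzFT2_mul (u v : 𝓢(ℝ × ℝ, ℂ)) (p : ℝ × ℝ) :
    (2 * Real.pi) ^ 2 * schwartzFT2 (schwartzMul u v) p =
      ∫ q, schwartzFT2 u q * schwartzFT2 v (p - q) := by
  have scale := Measure.integral_comp_smul volume (fun q : ℝ × ℝ =>
    (𝓕⁻ (schwartzOnPlane u)) (WithLp.toLp 2 q) *
      (𝓕⁻ (schwartzOnPlane v)) (dilateToPlane p - WithLp.toLp 2 q)) (2 * Real.pi)⁻¹
  have dim : Module.finrank ℝ (ℝ × ℝ) = 2 := by simp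
  rw [dim, inv_pow, inv_inv, abs_of_pos (by positivity), real_smul, ofReal_pow, ofReal_mul,
    ofReal_ofNat] at scale
  simp only [schwartzFT2_eq_fourierInv, map_sub, fourierInv_schwartzOnPlane_mul,
    SchwartzMap.convolution_apply, MeasureTheory.convolution, ← integral_toLp]
  exact scale.symm

theorem enorm_schwartzFT2_mul_le (u v : 𝓢(ℝ × ℝ, ℂ)) (p : ℝ × ℝ) :
    ‖schwartzFT2 (schwartzMul u v) p‖ₑ ≤ ∫⁻ q, ‖schwartzFT2 u q‖ₑ * ‖schwartzFT2 v (p - q)‖ₑ := by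
  have one_le : 1 ≤ ‖(2 * Real.pi : ℂ) ^ 2‖ₑ := by
    rw [← ofReal_norm, ENNReal.one_le_ofReal, norm_pow, norm_mul, Complex.norm_ofNat,
      Complex.norm_real, Real.norm_of_nonneg Real.pi_pos.le]
    exact one_le_pow₀ (by linarith [Real.two_le_pi])
  refine (le_mul_of_one_le_left' one_le).trans ?_
  rw [← enorm_mul, schwartzFT2_mul]
  simpa only [enorm_mul] using enorm_integral_le_lintegral_enorm
    (fun q => schwartzFT2 u q * schwartzFT2 v (p - q))

theorem norm_schwartzFT2_lineDeriv (u : 𝓢(ℝ × ℝ, ℂ)) (p : ℝ × ℝ) :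
    ‖schwartzFT2 (∂_{((1 : ℝ), (0 : ℝ))} u) p‖ = |p.1| * ‖schwartzFT2 u p‖ := by
  have transport : schwartzOnPlane (∂_{((1 : ℝ), (0 : ℝ))} u) =
      ∂_{toEuclideanPlane ((1 : ℝ), (0 : ℝ))} (schwartzOnPlane u) := by
    unfold schwartzOnPlane
    rw [SchwartzMap.lineDerivOp_compCLMOfContinuousLinearEquiv,
      ContinuousLinearEquiv.symm_apply_apply]
  have symbol : inner ℝ (dilateToPlane p) (toEuclideanPlane ((1 : ℝ), (0 : ℝ))) =
      (2 * Real.pi)⁻¹ * p.1 := by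
    rw [real_inner_comm, inner_dilateToPlane]
    simp [toEuclideanPlane]
  have := Real.pi_pos
  rw [schwartzFT2_eq_fourierInv, schwartzFT2_eq_fourierInv, transport,
    SchwartzMap.fourierInv_lineDerivOp_eq, smul_apply,
    SchwartzMap.smulLeftCLM_apply_apply (hasTemperateGrowth_inner _), norm_smul, norm_smul,
    ← mul_assoc, symbol, Real.norm_eq_abs, abs_mul, abs_of_pos (a := (2 * Real.pi)⁻¹)
      (by positivity), norm_neg, norm_mul, Complex.norm_I, mul_one, norm_mul, Complex.norm_real,
    Real.norm_eq_abs, abs_of_pos this, Complex.norm_ofNat]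
  congr 1
  field_simp

/-- Multiplication of a Schwartz function by `x`. -/
def schwartzFstMul (u : 𝓢(ℝ × ℝ, ℂ)) : 𝓢(ℝ × ℝ, ℂ) :=
  SchwartzMap.smulLeftCLM ℂ (fun p : ℝ × ℝ => p.1) u

theorem schwartzFstMul_apply (u : 𝓢(ℝ × ℝ, ℂ)) (p : ℝ × ℝ) :
    schwartzFstMul u p = (p.1 : ℂ) * u p := by
  have growth : (fun p : ℝ × ℝ => p.1).HasTemperateGrowth :=
    (ContinuousLinearMap.fst ℝ ℝ ℝ).hasTemperateGrowth
  rw [schwartzFstMul, SchwartzMap.smulLeftCLM_apply_apply growth, real_smul]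

theorem lineDeriv_schwartzFT2 (u : 𝓢(ℝ × ℝ, ℂ)) :
    ∂_{((1 : ℝ), (0 : ℝ))} (schwartzFT2 u) = Complex.I • schwartzFT2 (schwartzFstMul u) := by
  have multiplier : (2 * Real.pi * Complex.I) • SchwartzMap.smulLeftCLM ℂ
      (inner ℝ · (dilateToPlane ((1 : ℝ), (0 : ℝ)))) (schwartzOnPlane u) =
        Complex.I • schwartzOnPlane (schwartzFstMul u) := by
    ext y
    rw [smul_apply, smul_apply, schwartzOnPlane_apply, schwartzFstMul_apply,
      SchwartzMap.smulLeftCLM_apply_apply (hasTemperateGrowth_inner _), inner_dilateToPlane,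
      schwartzOnPlane_apply]
    have := Real.pi_pos.ne'
    simp only [smul_eq_mul, real_smul]
    push_cast
    field_simp
    ring
  unfold schwartzFT2
  rw [SchwartzMap.lineDerivOp_compCLMOfContinuousLinearEquiv,
    SchwartzMap.lineDerivOp_fourierInv_eq, multiplier, FourierTransform.fourierInv_smul]
  rfl

theorem hasDerivAt_schwartzFT2 (u : 𝓢(ℝ × ℝ, ℂ)) (x l : ℝ) :
    HasDerivAt (fun ξ => schwartzFT2 u (ξ, l))
      (Complex.I * schwartzFT2 (schwartzFstMul u) (x, l)) x := by
  have slice := ((schwartzFT2 u).differentiableAt (x := (x, l))).hasFDerivAt.comp_hasDerivAt x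
    ((hasDerivAt_id x).prodMk (hasDerivAt_const x l))
  rwa [← SchwartzMap.lineDerivOp_apply_eq_fderiv, lineDeriv_schwartzFT2] at slice

end SchwartzFourier

/-! ### The Sobolev inequality -/

section Sobolev

section InnerProductSpace
variable {E : Type*} [NormedAddCommGroup E] [InnerProductSpace ℝ E] {F F' : ℝ → E}

theorem enorm_inner_le_enorm_mul_enorm (v w : E) : ‖inner ℝ v w‖ₑ ≤ ‖v‖ₑ * ‖w‖ₑ := by
  rw [← ofReal_norm, ← ofReal_norm, ← ofReal_norm, ← ENNReal.ofReal_mul (norm_nonneg _)]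
  exact ENNReal.ofReal_le_ofReal (norm_inner_le_norm v w)

theorem enorm_sq_le_enorm_sq_add_lintegral (hF : ∀ y, HasDerivAt F (F' y) y) (hF' : Continuous F')
    (x y : ℝ) :
    ‖F x‖ₑ ^ 2 ≤ ‖F y‖ₑ ^ 2 + ∫⁻ t in Set.uIoc y x, 2 * (‖F t‖ₑ * ‖F' t‖ₑ) := by
  have hF_cont : Continuous F := continuous_iff_continuousAt.2 fun t => (hF t).continuousAt
  have ftc : ∫ t in y..x, 2 * inner ℝ (F t) (F' t) = ‖F x‖ ^ 2 - ‖F y‖ ^ 2 :=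
    intervalIntegral.integral_eq_sub_of_hasDerivAt (fun t _ => (hF t).norm_sq)
      (Continuous.intervalIntegrable (by fun_prop) y x)
  have enorm_le (t : ℝ) : ‖2 * inner ℝ (F t) (F' t)‖ₑ ≤ 2 * (‖F t‖ₑ * ‖F' t‖ₑ) := by
    rw [enorm_mul, Real.enorm_of_nonneg zero_le_two, ENNReal.ofReal_ofNat]
    exact mul_le_mul_right (enorm_inner_le_enorm_mul_enorm _ _) 2
  calc ‖F x‖ₑ ^ 2 = ‖‖F y‖ ^ 2 + ∫ t in y..x, 2 * inner ℝ (F t) (F' t)‖ₑ := by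
        rw [ftc, add_sub_cancel, enorm_pow, enorm_norm]
    _ ≤ ‖F y‖ₑ ^ 2 + ‖∫ t in y..x, 2 * inner ℝ (F t) (F' t)‖ₑ :=
        (enorm_add_le _ _).trans_eq (by rw [enorm_pow, enorm_norm])
    _ = ‖F y‖ₑ ^ 2 + ‖∫ t in Set.uIoc y x, 2 * inner ℝ (F t) (F' t)‖ₑ := by
        rw [← ofReal_norm (∫ t in y..x, _),
          intervalIntegral.norm_integral_eq_norm_integral_uIoc, ofReal_norm]
    _ ≤ _ := by
        gcongr
        exact (enorm_integral_le_lintegral_enorm _).trans (lintegral_mono enorm_le)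

/-- Integrates the fundamental theorem of calculus for `‖F‖²` between `x` and `y` over the unit
interval `|y| ≤ 1 / 2`. -/
theorem enorm_sq_le_lintegral (hF : ∀ y, HasDerivAt F (F' y) y) (hF' : Continuous F')
    {ρ x : ℝ} (hρ : 1 ≤ ρ) (hx : |x| ≤ ρ) :
    ‖F x‖ₑ ^ 2 ≤ ∫⁻ y, iverson (|y| ≤ ρ) * (‖F y‖ₑ ^ 2 + 2 * (‖F y‖ₑ * ‖F' y‖ₑ)) := by
  have hF_cont : Continuous F := continuous_iff_continuousAt.2 fun t => (hF t).continuousAt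
  have measurable_iverson_abs (r : ℝ) : Measurable fun y : ℝ => iverson (|y| ≤ r) :=
    measurable_iverson (measurableSet_le (by fun_prop) (by fun_prop))
  have := measurable_iverson_abs ρ
  have : Measurable fun y => ‖F y‖ₑ := hF_cont.enorm.measurable
  have : Measurable fun y => ‖F' y‖ₑ := hF'.enorm.measurable
  have unit_mass : ∫⁻ y : ℝ, iverson (|y| ≤ 1 / 2) = 1 := by
    rw [lintegral_iverson (measurableSet_le (by fun_prop) (by fun_prop))]
    simp only [abs_le, ← Set.mem_Icc, Set.ofPred_mem_eq, Real.volume_Icc]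
    norm_num
  set K := ∫⁻ y, iverson (|y| ≤ ρ) * (2 * (‖F y‖ₑ * ‖F' y‖ₑ)) with hK
  have pointwise (y : ℝ) (hy : |y| ≤ ρ) : ‖F x‖ₑ ^ 2 ≤ ‖F y‖ₑ ^ 2 + K := by
    refine (enorm_sq_le_enorm_sq_add_lintegral hF hF' x y).trans ?_
    gcongr
    have abs_le_of_mem {t : ℝ} (ht : t ∈ Set.uIoc y x) : |t| ≤ ρ := by
      rw [abs_le] at hx hy ⊢
      rcases Set.mem_uIoc.1 ht with h | h <;> constructor <;> linarith
    exact (setLIntegral_congr_fun measurableSet_uIoc fun t ht => by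
      simp only [iverson_true (abs_le_of_mem ht), one_mul]).trans_le
        (setLIntegral_le_lintegral _ _)
  calc ‖F x‖ₑ ^ 2 = ∫⁻ y : ℝ, iverson (|y| ≤ 1 / 2) * ‖F x‖ₑ ^ 2 := by
        rw [lintegral_mul_const _ (measurable_iverson_abs _), unit_mass, one_mul]
    _ ≤ ∫⁻ y : ℝ, (iverson (|y| ≤ ρ) * ‖F y‖ₑ ^ 2 + iverson (|y| ≤ 1 / 2) * K) := by
        refine lintegral_mono fun y => ?_
        dsimp only
        by_cases h : |y| ≤ 1 / 2
        · have hy : |y| ≤ ρ := by linarith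
          rw [iverson_true h, iverson_true hy, one_mul, one_mul, one_mul]
          exact pointwise y hy
        · rw [iverson_false h, zero_mul]
          exact zero_le
    _ = (∫⁻ y : ℝ, iverson (|y| ≤ ρ) * ‖F y‖ₑ ^ 2) + K := by
        rw [lintegral_add_left (by fun_prop), lintegral_mul_const _ (measurable_iverson_abs _),
          unit_mass, one_mul]
    _ = _ := by
        rw [hK, ← lintegral_add_left (by fun_prop)]
        simp only [mul_add]

end InnerProductSpace

theorem sobolevPair_schwartzFT2 (u : SchwartzMap (ℝ × ℝ) ℂ) :
    SobolevPair (fun p => ‖schwartzFT2 u p‖ₑ) (fun p => ‖schwartzFT2 (schwartzFstMul u) p‖ₑ) := by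
  intro l ρ x hρ hx
  have continuous_deriv :
      Continuous fun y : ℝ => Complex.I * schwartzFT2 (schwartzFstMul u) (y, l) :=
    continuous_const.mul ((schwartzFT2 (schwartzFstMul u)).continuous.comp (by fun_prop))
  have enorm_I : ‖Complex.I‖ₑ = 1 := by simp [← ofReal_norm]
  simpa only [enorm_mul, enorm_I, one_mul] using
    enorm_sq_le_lintegral (fun y => hasDerivAt_schwartzFT2 u y l) continuous_deriv hρ hx

end Sobolev

/-! ### The dyadic cutoffs -/

namespace DyadicCutoffs
variable {χ₀ χ : ℝ → ℝ}

theorem chiJ_mem_Icc (hχ : DyadicCutoffs χ₀ χ) (j : ℕ) (z : ℝ) :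
    chiJ χ₀ χ j z ∈ Set.Icc (0 : ℝ) 1 := by
  unfold chiJ
  split_ifs
  · exact hχ.mem0 z
  · exact hχ.mem1 _

theorem continuous_chiJ (hχ : DyadicCutoffs χ₀ χ) (j : ℕ) : Continuous (chiJ χ₀ χ j) := by
  unfold chiJ
  split_ifs
  · exact hχ.smooth0.continuous
  · exact hχ.smooth1.continuous.comp (by fun_prop)

theorem abs_le_and_two_rpow_le (hχ : DyadicCutoffs χ₀ χ) {j : ℕ} {z : ℝ}
    (h : chiJ χ₀ χ j z ≠ 0) : |z| ≤ 2 * 2 ^ (j : ℝ) ∧ 2 ^ (j : ℝ) ≤ 2 * (1 + |z|) := by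
  unfold chiJ at h
  split_ifs at h with hj
  · have abs_le : |z| ≤ 2 := not_lt.1 fun lt => h (hχ.supp0 z lt)
    rw [hj, Nat.cast_zero, Real.rpow_zero]
    exact ⟨by linarith, by linarith [abs_nonneg z]⟩
  · have scaled := hχ.supp1 _ h
    have pow_pos : (0 : ℝ) < 2 ^ (j : ℝ) := by positivity
    rw [abs_mul, abs_of_pos (by positivity), Real.rpow_neg zero_le_two, inv_mul_eq_div,
      lt_div_iff₀ pow_pos, div_lt_iff₀ pow_pos] at scaled
    exact ⟨scaled.2.le, by linarith [scaled.1]⟩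

theorem summable_chiJ (hχ : DyadicCutoffs χ₀ χ) (z : ℝ) : Summable fun j => chiJ χ₀ χ j z := by
  by_contra not_summable
  have := hχ.partition z
  rw [tsum_eq_zero_of_not_summable not_summable] at this
  exact zero_ne_one this

end DyadicCutoffs

/-- The square root of the cutoff `χ_j` in the modulation `λ - ω(ξ)`. -/
def sqrtCutoff (a : ℝ) (χ₀ χ : ℝ → ℝ) (j : ℕ) (p : ℝ × ℝ) : ℝ≥0∞ :=
  ENNReal.ofReal (Real.sqrt (chiJ χ₀ χ j (p.2 - disp a p.1)))

section SqrtCutoff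
variable {a : ℝ} {χ₀ χ : ℝ → ℝ}

theorem sqrtCutoff_sq (hχ : DyadicCutoffs χ₀ χ) (j : ℕ) (p : ℝ × ℝ) :
    sqrtCutoff a χ₀ χ j p ^ 2 = ENNReal.ofReal (chiJ χ₀ χ j (p.2 - disp a p.1)) := by
  rw [sqrtCutoff, ← ENNReal.ofReal_pow (Real.sqrt_nonneg _), Real.sq_sqrt (hχ.chiJ_mem_Icc _ _).1]

theorem chiJ_ne_zero_of_sqrtCutoff_ne_zero {j : ℕ} {p : ℝ × ℝ} (h : sqrtCutoff a χ₀ χ j p ≠ 0) :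
    chiJ χ₀ χ j (p.2 - disp a p.1) ≠ 0 := fun chi_eq_zero =>
  h (by rw [sqrtCutoff, chi_eq_zero, Real.sqrt_zero, ENNReal.ofReal_zero])

theorem modulationCutoff_sqrtCutoff (ha : 0 < a) (hχ : DyadicCutoffs χ₀ χ) :
    ModulationCutoff a (sqrtCutoff a χ₀ χ) where
  measurable j := by
    have := (hχ.continuous_chiJ j).measurable
    have := (continuous_disp ha).measurable
    unfold sqrtCutoff
    fun_prop
  le_iverson j p := by
    by_cases h : sqrtCutoff a χ₀ χ j p = 0
    · exact h.trans_le zero_le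
    · rw [iverson_true (hχ.abs_le_and_two_rpow_le (chiJ_ne_zero_of_sqrtCutoff_ne_zero h)).1]
      exact ENNReal.ofReal_le_one.2 (Real.sqrt_le_one.2 (hχ.chiJ_mem_Icc _ _).2)
  tsum_sq p := by
    simp only [sqrtCutoff_sq hχ]
    rw [← ENNReal.ofReal_tsum_of_nonneg (fun j => (hχ.chiJ_mem_Icc j _).1) (hχ.summable_chiJ _),
      hχ.partition, ENNReal.ofReal_one]

/-- Trading `2 ^ j` for the modulation turns the sum over the pieces into a geometric series. -/
theorem eXnorm_sqrtCutoff_le (ha : 0 < a) (hχ : DyadicCutoffs χ₀ χ) {f : ℝ × ℝ → ℝ≥0∞}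
    (hf : Measurable f) (c s : ℝ) :
    eXnorm (sqrtCutoff a χ₀ χ) c s f ≤ geomSum (1 - c) * eLpNorm (fun p : ℝ × ℝ =>
      ENNReal.ofReal (2 * (1 + |p.2 - disp a p.1|)) * (bracket s p.1 * f p)) 2 := by
  have := measurable_bracket s
  have := (continuous_disp ha).measurable
  have cutoff_le (j : ℕ) (p : ℝ × ℝ) : sqrtCutoff a χ₀ χ j p ≤
      dyadicWeight (-1) j * ENNReal.ofReal (2 * (1 + |p.2 - disp a p.1|)) := by
    by_cases h : sqrtCutoff a χ₀ χ j p = 0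
    · exact h.trans_le zero_le
    · refine ((modulationCutoff_sqrtCutoff ha hχ).le_one j p).trans ?_
      rw [dyadicWeight, ← ENNReal.ofReal_mul (by positivity), ENNReal.one_le_ofReal, mul_neg_one,
        Real.rpow_neg zero_le_two, inv_mul_eq_div, one_le_div (by positivity)]
      exact (hχ.abs_le_and_two_rpow_le (chiJ_ne_zero_of_sqrtCutoff_ne_zero h)).2
  rw [eXnorm, geomSum, ← ENNReal.tsum_mul_right]
  refine ENNReal.tsum_le_tsum fun j => ?_
  rw [neg_sub, sub_eq_add_neg, ← dyadicWeight_mul, mul_assoc]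
  refine mul_le_mul_right ?_ _
  rw [← eLpNorm_two_const_mul (by fun_prop)]
  refine eLpNorm_mono_enorm fun p => ?_
  simp only [enorm_eq_self, modulationPiece]
  rw [← mul_assoc (dyadicWeight _ _)]
  gcongr
  exact cutoff_le j p

theorem hasTemperateGrowth_one_add_sq_add_sq_pow (n : ℕ) :
    (fun p : ℝ × ℝ => (1 + p.1 ^ 2 + p.2 ^ 2) ^ n).HasTemperateGrowth := by
  have : (fun p : ℝ × ℝ => p.1).HasTemperateGrowth :=
    (ContinuousLinearMap.fst ℝ ℝ ℝ).hasTemperateGrowth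
  have : (fun p : ℝ × ℝ => p.2).HasTemperateGrowth :=
    (ContinuousLinearMap.snd ℝ ℝ ℝ).hasTemperateGrowth
  fun_prop

theorem modulation_mul_rpow_le (ha : 0 < a) (ha1 : a < 1) {s : ℝ} (hs : s ≤ 1) (x l : ℝ) :
    2 * (1 + |l - disp a x|) * (1 + |x|) ^ s ≤ 12 * (1 + x ^ 2 + l ^ 2) ^ 4 := by
  set X := 1 + x ^ 2 + l ^ 2
  have abs_x_le : |x| ≤ X := by nlinarith [sq_nonneg (|x| - 1), sq_abs x, sq_nonneg l]
  have abs_l_le : |l| ≤ X := by nlinarith [sq_nonneg (|l| - 1), sq_abs l, sq_nonneg x]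
  have one_le : 1 ≤ X := by nlinarith [sq_nonneg x, sq_nonneg l]
  have disp_le : |disp a x| ≤ X ^ 3 := by
    calc |disp a x| = |x| ^ (2 + a) := abs_disp ha x
      _ ≤ X ^ (2 + a) := by gcongr
      _ ≤ X ^ (3 : ℝ) := Real.rpow_le_rpow_of_exponent_le one_le (by linarith)
      _ = X ^ 3 := by norm_cast
  have modulation_le : 1 + |l - disp a x| ≤ 3 * X ^ 3 := by
    linarith [abs_sub l (disp a x), le_self_pow₀ one_le three_ne_zero]
  have rpow_le : (1 + |x|) ^ s ≤ 2 * X := by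
    calc (1 + |x|) ^ s ≤ (1 + |x|) ^ (1 : ℝ) :=
          Real.rpow_le_rpow_of_exponent_le (by linarith [abs_nonneg x]) hs
      _ ≤ 2 * X := by rw [Real.rpow_one]; linarith
  calc 2 * (1 + |l - disp a x|) * (1 + |x|) ^ s ≤ 2 * (3 * X ^ 3) * (2 * X) := by gcongr
    _ = 12 * X ^ 4 := by ring

theorem eLpNorm_modulation_mul_schwartz_lt_top (ha : 0 < a) (ha1 : a < 1) {s : ℝ} (hs : s ≤ 1)
    (f : SchwartzMap (ℝ × ℝ) ℂ) :
    eLpNorm (fun p : ℝ × ℝ =>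
      ENNReal.ofReal (2 * (1 + |p.2 - disp a p.1|)) * (bracket s p.1 * ‖f p‖ₑ)) 2 < ⊤ := by
  let F := SchwartzMap.smulLeftCLM ℂ (fun p : ℝ × ℝ => (1 + p.1 ^ 2 + p.2 ^ 2) ^ 4) f
  have finite : eLpNorm ((12 : ℝ) • F) 2 volume < ⊤ := ((12 : ℝ) • F).eLpNorm_lt_top 2 volume
  refine (eLpNorm_mono_enorm fun p => ?_).trans_lt finite
  rw [enorm_eq_self, smul_apply,
    SchwartzMap.smulLeftCLM_apply_apply (hasTemperateGrowth_one_add_sq_add_sq_pow 4), smul_smul,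
    enorm_smul, Real.enorm_of_nonneg (by positivity), bracket, ← mul_assoc,
    ← ENNReal.ofReal_mul (by positivity)]
  exact mul_le_mul_left (ENNReal.ofReal_le_ofReal (modulation_mul_rpow_le ha ha1 hs p.1 p.2)) _

theorem eXnorm_schwartz_lt_top (ha : 0 < a) (ha1 : a < 1) (hχ : DyadicCutoffs χ₀ χ) {c s : ℝ}
    (hc : c < 1) (hs : s ≤ 1) (f : SchwartzMap (ℝ × ℝ) ℂ) :
    eXnorm (sqrtCutoff a χ₀ χ) c s (fun p => ‖f p‖ₑ) < ⊤ :=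
  (eXnorm_sqrtCutoff_le ha hχ f.continuous.enorm.measurable c s).trans_lt
    (ENNReal.mul_lt_top (geomSum_lt_top (sub_pos.2 hc))
      (eLpNorm_modulation_mul_schwartz_lt_top ha ha1 hs f))

end SqrtCutoff

/-! ### Comparison of the norms -/

section NormComparison
open scoped LineDeriv SchwartzMap
variable {a b c s : ℝ} {χ₀ χ : ℝ → ℝ}

theorem bracket_sq (s ξ : ℝ) : bracket s ξ ^ 2 = ENNReal.ofReal ((1 + |ξ|) ^ (2 * s)) := by
  rw [bracket, ← ENNReal.ofReal_pow (by positivity), ← Real.rpow_mul_natCast (by positivity),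
    Nat.cast_ofNat, mul_comm]

theorem integral_chiJ_rpow_half_eq_toReal (ha : 0 < a) (hχ : DyadicCutoffs χ₀ χ)
    (u : 𝓢(ℝ × ℝ, ℂ)) (j : ℕ) :
    (∫ p : ℝ × ℝ, chiJ χ₀ χ j (p.2 - disp a p.1) * (1 + |p.1|) ^ (2 * s) *
      ‖FT2 u p.1 p.2‖ ^ 2) ^ (1 / 2 : ℝ) =
      (eLpNorm (modulationPiece (sqrtCutoff a χ₀ χ) s
        (fun p => ‖schwartzFT2 u p‖ₑ) j) 2).toReal := by
  have := (hχ.continuous_chiJ j).measurable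
  have := (continuous_disp ha).measurable
  have := (schwartzFT2 u).continuous.measurable
  have chiJ_nonneg (p : ℝ × ℝ) := (hχ.chiJ_mem_Icc j (p.2 - disp a p.1)).1
  have nonneg (p : ℝ × ℝ) : 0 ≤ chiJ χ₀ χ j (p.2 - disp a p.1) * (1 + |p.1|) ^ (2 * s) *
      ‖schwartzFT2 u p‖ ^ 2 := by
    have := chiJ_nonneg p
    positivity
  simp only [← schwartzFT2_apply]
  rw [eLpNorm_two_eq, ← ENNReal.toReal_rpow,
    integral_eq_lintegral_of_nonneg_ae (.of_forall nonneg) (by fun_prop)]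
  congr 2
  refine lintegral_congr fun p => ?_
  rw [modulationPiece, mul_pow, mul_pow, sqrtCutoff_sq hχ, bracket_sq, ← ofReal_norm,
    ← ENNReal.ofReal_pow (norm_nonneg _), ← ENNReal.ofReal_mul (by positivity),
    ← ENNReal.ofReal_mul (chiJ_nonneg p), mul_assoc]

theorem Xnorm_eq_toReal (ha : 0 < a) (ha1 : a < 1) (hχ : DyadicCutoffs χ₀ χ) (hc : c < 1)
    (hs : s ≤ 1) (u : 𝓢(ℝ × ℝ, ℂ)) :
    Xnorm a χ₀ χ c s u =
      (eXnorm (sqrtCutoff a χ₀ χ) c s (fun p => ‖schwartzFT2 u p‖ₑ)).toReal := by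
  have finite := (eXnorm_schwartz_lt_top ha ha1 hχ hc hs (schwartzFT2 u)).ne
  unfold eXnorm at finite ⊢
  rw [Xnorm, ENNReal.tsum_toReal_eq (ENNReal.ne_top_of_tsum_ne_top finite)]
  refine tsum_congr fun j => ?_
  rw [integral_chiJ_rpow_half_eq_toReal ha hχ, ENNReal.toReal_mul, dyadicWeight,
    ENNReal.toReal_ofReal (by positivity)]

theorem Xnorm_nonneg (hχ : DyadicCutoffs χ₀ χ) (f : ℝ × ℝ → ℂ) : 0 ≤ Xnorm a χ₀ χ c s f := by
  refine tsum_nonneg fun j => mul_nonneg (by positivity) (Real.rpow_nonneg ?_ _)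
  refine integral_nonneg fun p => mul_nonneg (mul_nonneg ?_ (by positivity)) (by positivity)
  exact (hχ.chiJ_mem_Icc _ _).1

theorem Ynorm_nonneg (hχ : DyadicCutoffs χ₀ χ) {s₀ s₁ : ℝ} (f : ℝ × ℝ → ℂ) :
    0 ≤ Ynorm a χ₀ χ c s₀ s₁ f :=
  add_nonneg (Xnorm_nonneg hχ _) (Xnorm_nonneg hχ _)

theorem toReal_eXnorm_schwartzFstMul_le_Ynorm (ha : 0 < a) (ha1 : a < 1)
    (hχ : DyadicCutoffs χ₀ χ) (hc : c < 1) (hs : s ≤ 1) {s₁ : ℝ} (u : 𝓢(ℝ × ℝ, ℂ)) :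
    (eXnorm (sqrtCutoff a χ₀ χ) c s (fun p => ‖schwartzFT2 (schwartzFstMul u) p‖ₑ)).toReal ≤
      Ynorm a χ₀ χ c s s₁ u := by
  rw [← Xnorm_eq_toReal ha ha1 hχ hc hs, Ynorm, ← funext (schwartzFstMul_apply u)]
  exact le_add_of_nonneg_right (Xnorm_nonneg hχ _)

/-- The factor of the estimate that measures the input of lower frequency: the `X^{1/2}_s` norm
plus the geometric mean of the `X^{1/2}_s` and `Y^{1/2}_{-s,s}` norms. -/
def mixedNorm (a : ℝ) (χ₀ χ : ℝ → ℝ) (s : ℝ) (f : ℝ × ℝ → ℂ) : ℝ :=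
  Xnorm a χ₀ χ (1 / 2) s f +
    Xnorm a χ₀ χ (1 / 2) s f ^ (1 / 2 : ℝ) * Ynorm a χ₀ χ (1 / 2) (-s) s f ^ (1 / 2 : ℝ)

theorem mixedNorm_nonneg (hχ : DyadicCutoffs χ₀ χ) (f : ℝ × ℝ → ℂ) :
    0 ≤ mixedNorm a χ₀ χ s f := by
  have := Xnorm_nonneg (a := a) (c := 1 / 2) (s := s) hχ f
  have := Ynorm_nonneg (a := a) (c := 1 / 2) (s₀ := -s) (s₁ := s) hχ f
  unfold mixedNorm
  positivity

theorem eMixedNorm_schwartzFT2_lt_top (ha : 0 < a) (ha1 : a < 1) (hχ : DyadicCutoffs χ₀ χ)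
    (hs : |s| ≤ 1) (u : 𝓢(ℝ × ℝ, ℂ)) :
    eMixedNorm (sqrtCutoff a χ₀ χ) s (fun p => ‖schwartzFT2 u p‖ₑ)
      (fun p => ‖schwartzFT2 (schwartzFstMul u) p‖ₑ) < ⊤ := by
  have finite {σ : ℝ} (hσ : σ ≤ 1) (f : 𝓢(ℝ × ℝ, ℂ)) :=
    eXnorm_schwartz_lt_top ha ha1 hχ one_half_lt_one hσ f
  have finite_s := finite (le_of_abs_le hs) (schwartzFT2 u)
  have finite_neg := finite (neg_le_of_neg_le (neg_le_of_abs_le hs))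
    (schwartzFT2 (schwartzFstMul u))
  exact ENNReal.add_lt_top.2 ⟨finite_s, ENNReal.mul_lt_top
    (ENNReal.rpow_lt_top_of_nonneg one_half_pos.le finite_s.ne)
    (ENNReal.rpow_lt_top_of_nonneg one_half_pos.le finite_neg.ne)⟩

theorem toReal_eMixedNorm_le (ha : 0 < a) (ha1 : a < 1) (hχ : DyadicCutoffs χ₀ χ)
    (hs : |s| ≤ 1) (u : 𝓢(ℝ × ℝ, ℂ)) :
    (eMixedNorm (sqrtCutoff a χ₀ χ) s (fun p => ‖schwartzFT2 u p‖ₑ)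
      (fun p => ‖schwartzFT2 (schwartzFstMul u) p‖ₑ)).toReal ≤ mixedNorm a χ₀ χ s u := by
  have finite := ENNReal.add_ne_top.1 (eMixedNorm_schwartzFT2_lt_top ha ha1 hχ hs u).ne
  have := Xnorm_nonneg (a := a) (c := 1 / 2) (s := s) hχ u
  rw [eMixedNorm, ENNReal.toReal_add finite.1 finite.2, ENNReal.toReal_mul,
    ← ENNReal.toReal_rpow, ← ENNReal.toReal_rpow,
    ← Xnorm_eq_toReal ha ha1 hχ one_half_lt_one (le_of_abs_le hs), mixedNorm]
  gcongr
  exact toReal_eXnorm_schwartzFstMul_le_Ynorm ha ha1 hχ one_half_lt_one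
    (neg_le_of_neg_le (neg_le_of_abs_le hs)) u

theorem toReal_mul_eMixedNorm_mul_eXnorm_le (ha : 0 < a) (ha1 : a < 1) (hχ : DyadicCutoffs χ₀ χ)
    (hs : |s| ≤ 1) (u : 𝓢(ℝ × ℝ, ℂ))
    {K : ℝ≥0∞} {C : ℝ} (hC : K.toReal ≤ C) (v : 𝓢(ℝ × ℝ, ℂ)) :
    (K * (eMixedNorm (sqrtCutoff a χ₀ χ) s (fun p => ‖schwartzFT2 u p‖ₑ)
        (fun p => ‖schwartzFT2 (schwartzFstMul u) p‖ₑ) *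
      eXnorm (sqrtCutoff a χ₀ χ) (1 / 2) s (fun p => ‖schwartzFT2 v p‖ₑ))).toReal ≤
      C * Xnorm a χ₀ χ (1 / 2) s v * mixedNorm a χ₀ χ s u := by
  rw [ENNReal.toReal_mul, ENNReal.toReal_mul,
    ← Xnorm_eq_toReal ha ha1 hχ one_half_lt_one (le_of_abs_le hs), mul_left_comm, mul_comm]
  have := ENNReal.toReal_nonneg.trans hC
  have := Xnorm_nonneg (a := a) (c := 1 / 2) (s := s) hχ v
  have := mixedNorm_nonneg (a := a) (s := s) hχ u
  gcongr
  exact toReal_eMixedNorm_le ha ha1 hχ hs u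

theorem deriv_mul_eq_lineDeriv (u v : 𝓢(ℝ × ℝ, ℂ)) :
    (fun p : ℝ × ℝ => deriv (fun x => u (x, p.2) * v (x, p.2)) p.1) =
      ∂_{((1 : ℝ), (0 : ℝ))} (schwartzMul u v) := by
  funext p
  rw [SchwartzMap.lineDerivOp_apply_eq_fderiv]
  exact ((schwartzMul u v).differentiableAt.hasFDerivAt.comp_hasDerivAt (f := fun x => (x, p.2))
    p.1 ((hasDerivAt_id p.1).prodMk (hasDerivAt_const p.1 p.2))).deriv

theorem enorm_schwartzFT2_lineDeriv_mul_le (u v : 𝓢(ℝ × ℝ, ℂ)) (p : ℝ × ℝ) :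
    ‖schwartzFT2 (∂_{((1 : ℝ), (0 : ℝ))} (schwartzMul u v)) p‖ₑ ≤
      derivProduct (fun _ _ => True) (fun p => ‖schwartzFT2 u p‖ₑ)
        (fun p => ‖schwartzFT2 v p‖ₑ) p := by
  rw [← ofReal_norm, norm_schwartzFT2_lineDeriv, ENNReal.ofReal_mul (abs_nonneg _), ofReal_norm]
  simp only [derivProduct, bilinOp, iverson_true trivial, one_mul]
  gcongr
  exact enorm_schwartzFT2_mul_le u v p

theorem Xnorm_deriv_mul_le (ha : 0 < a) (ha1 : a < 1) (hχ : DyadicCutoffs χ₀ χ)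
    (hb : smoothingExponent a / 2 < b) (hb' : (2 - a) / (2 + a) / 2 < b) {C : ℝ}
    (hC : (bilinConst a b).toReal ≤ C) (u v : 𝓢(ℝ × ℝ, ℂ)) :
    Xnorm a χ₀ χ (-b) ((1 + a) / 2)
        (fun p : ℝ × ℝ => deriv (fun x => u (x, p.2) * v (x, p.2)) p.1) ≤
      C * Xnorm a χ₀ χ (1 / 2) ((1 + a) / 2) u * mixedNorm a χ₀ χ ((1 + a) / 2) v +
        C * Xnorm a χ₀ χ (1 / 2) ((1 + a) / 2) v * mixedNorm a χ₀ χ ((1 + a) / 2) u := by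
  have hs : (1 + a) / 2 ≤ 1 := by linarith
  have abs_hs : |(1 + a) / 2| ≤ 1 := by rwa [abs_of_pos (by positivity)]
  have neg_b_lt : -b < 1 := by linarith [half_pos (smoothingExponent_pos ha ha1)]
  have bound := (eXnorm_mono (enorm_schwartzFT2_lineDeriv_mul_le u v) (-b)).trans
    (eXnorm_derivProduct_le (b := b) ha ha1 (modulationCutoff_sqrtCutoff ha hχ)
      (measurable_enorm_schwartzFT2 u) (measurable_enorm_schwartzFT2 _)
      (measurable_enorm_schwartzFT2 v) (measurable_enorm_schwartzFT2 _)
      (sobolevPair_schwartzFT2 u) (sobolevPair_schwartzFT2 v))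
  have finite (u v : 𝓢(ℝ × ℝ, ℂ)) := (ENNReal.mul_lt_top (bilinConst_lt_top ha hb hb')
    (ENNReal.mul_lt_top (eMixedNorm_schwartzFT2_lt_top ha ha1 hχ abs_hs u)
      (eXnorm_schwartz_lt_top ha ha1 hχ one_half_lt_one hs (schwartzFT2 v)))).ne
  rw [deriv_mul_eq_lineDeriv, Xnorm_eq_toReal ha ha1 hχ neg_b_lt hs]
  refine (ENNReal.toReal_mono (ENNReal.add_ne_top.2 ⟨finite u v, finite v u⟩) bound).trans ?_
  rw [ENNReal.toReal_add (finite u v) (finite v u), add_comm]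
  exact add_le_add (toReal_mul_eMixedNorm_mul_eXnorm_le ha ha1 hχ abs_hs v hC u)
    (toReal_mul_eMixedNorm_mul_eXnorm_le ha ha1 hχ abs_hs u hC v)

end NormComparison

theorem statement8 (a : ℝ) (ha : a ∈ Set.Ioo (0 : ℝ) 1)
    (χ₀ χ : ℝ → ℝ) (hχ : DyadicCutoffs χ₀ χ) :
    ∃ b ∈ Set.Ioo (0 : ℝ) (1 / 2), ∃ C > 0,
      ∀ u v : SchwartzMap (ℝ × ℝ) ℂ,
        Xnorm a χ₀ χ (-b) (1 / 2 + a / 2)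
            (fun p : ℝ × ℝ => deriv (fun x => u (x, p.2) * v (x, p.2)) p.1) ≤
          C * Xnorm a χ₀ χ (1 / 2) (1 / 2 + a / 2) (fun p => u p) *
              (Xnorm a χ₀ χ (1 / 2) (1 / 2 + a / 2) (fun p => v p) +
                Xnorm a χ₀ χ (1 / 2) (1 / 2 + a / 2) (fun p => v p) ^ ((1 : ℝ) / 2) *
                  Ynorm a χ₀ χ (1 / 2) (-(1 / 2 + a / 2)) (1 / 2 + a / 2)
                    (fun p => v p) ^ ((1 : ℝ) / 2)) +
            C * Xnorm a χ₀ χ (1 / 2) (1 / 2 + a / 2) (fun p => v p) *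
              (Xnorm a χ₀ χ (1 / 2) (1 / 2 + a / 2) (fun p => u p) +
                Xnorm a χ₀ χ (1 / 2) (1 / 2 + a / 2) (fun p => u p) ^ ((1 : ℝ) / 2) *
                  Ynorm a χ₀ χ (1 / 2) (-(1 / 2 + a / 2)) (1 / 2 + a / 2)
                    (fun p => u p) ^ ((1 : ℝ) / 2)) := by
  obtain ⟨ha0, ha1⟩ := ha
  have pos : 0 < 2 + a := by linarith
  have hb : smoothingExponent a / 2 < 1 / (2 + a) := by
    rw [smoothingExponent, div_div, div_lt_div_iff₀ (by positivity) pos]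
    nlinarith
  have hb' : (2 - a) / (2 + a) / 2 < 1 / (2 + a) := by
    rw [div_div, div_lt_div_iff₀ (by positivity) pos]
    nlinarith
  refine ⟨1 / (2 + a), ⟨by positivity, one_div_lt_one_div_of_lt two_pos (by linarith)⟩,
    (bilinConst a (1 / (2 + a))).toReal + 1, by positivity, fun u v => ?_⟩
  have estimate := Xnorm_deriv_mul_le ha0 ha1 hχ hb hb' (lt_add_one _).le u v
  rwa [add_div] at estimate
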